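/- arXiv:2304.03056 — 2 statements merged into one kernel-verified Lean document; each statement's English description precedes it below -/
import Mathlib

section
/- Two-sided Gaussian-type bound for a Dirichlet weighted sum: Let m ≥ 1, b > 0, and let f : {0,…,m} → [0,b] satisfy f(0) = 0 and f(m) = b. Let α = (α_0,…,α_m) ∈ ℝ_{>0}^{m+1} and set ᾱ = Σ_{i=0}^m α_i. Define p̄⁺, p̄⁻ ∈ Δ_m by p̄⁺(ℓ) = α_ℓ/(ᾱ−1) for ℓ < m, p̄⁺(m) = (α_m − 1)/(ᾱ−1), and p̄⁻(ℓ) = α_ℓ/(ᾱ−1) for ℓ > 0, p̄⁻(0) = (α_0 − 1)/(ᾱ−1). Fix ε ∈ (0,1) and assume min(α_0, α_m) ≥ c₀·ε^{−2} + 1. Then for every μ ∈ (0, b), for w ∼ Dir(α) and ζ ∼ N(0,1): (1 − ε)·P( ζ ≥ √(ᾱ−1)·A(p̄⁺, μ, f) ) ≤ P( wf ≥ μ ) ≤ (1 + ε)·P( ζ ≥ √(ᾱ−1)·A(p̄⁻, μ, f) ). -/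
open MeasureTheory ProbabilityTheory Real Set
open scoped ENNReal

noncomputable section

/-- The absolute constant `c₀ = (2/π)(8 + 49√6/9)²`. -/
def c0 : ℝ := (2 / Real.pi) * (8 + 49 * Real.sqrt 6 / 9) ^ 2

/-- Unnormalized density of `Dir(α)` in the first `m` coordinates. -/
def dirichletDensity (m : ℕ) (α : Fin (m + 1) → ℝ) : (Fin m → ℝ) → ℝ :=
  Set.indicator {x | (∀ i, 0 ≤ x i) ∧ ∑ i, x i ≤ 1}
    (fun x => (∏ i : Fin m, x i ^ (α i.castSucc - 1)) * (1 - ∑ i, x i) ^ (α (Fin.last m) - 1))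

def dirichletBase (m : ℕ) (α : Fin (m + 1) → ℝ) : Measure (Fin m → ℝ) :=
  volume.withDensity fun x => ENNReal.ofReal (dirichletDensity m α x)

/-- The Dirichlet distribution `Dir(α)`, as the law of the vector
`(x₀, …, x_{m-1}, 1 - ∑ x_i)` on the simplex `Δ_m ⊆ ℝ^{m+1}`. -/
def dirichlet (m : ℕ) (α : Fin (m + 1) → ℝ) : Measure (Fin (m + 1) → ℝ) :=
  Measure.map (fun x : Fin m → ℝ => Fin.snoc x (1 - ∑ i, x i))
    ((dirichletBase m α Set.univ)⁻¹ • dirichletBase m α)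

/-- Kullback–Leibler divergence between finitely supported `p, q` (for `p ≪ q`). -/
def klReal {m : ℕ} (p q : Fin (m + 1) → ℝ) : ℝ :=
  ∑ i, if p i = 0 then 0 else p i * Real.log (p i / q i)

/-- `Kinf(p, μ, f) = inf { KL(p,q) : q ∈ Δ_m, qf ≥ μ }`. -/
def Kinf {m : ℕ} (p : Fin (m + 1) → ℝ) (μ : ℝ) (f : Fin (m + 1) → ℝ) : ℝ :=
  sInf {x | ∃ q ∈ stdSimplex ℝ (Fin (m + 1)),
    (∀ i, q i = 0 → p i = 0) ∧ μ ≤ ∑ i, f i * q i ∧ x = klReal p q}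

/-- `Kinf*(p, μ, f) = inf { KL(p,q) : q ∈ Δ_m, qf = μ }`. -/
def Kinfstar {m : ℕ} (p : Fin (m + 1) → ℝ) (μ : ℝ) (f : Fin (m + 1) → ℝ) : ℝ :=
  sInf {x | ∃ q ∈ stdSimplex ℝ (Fin (m + 1)),
    (∀ i, q i = 0 → p i = 0) ∧ (∑ i, f i * q i) = μ ∧ x = klReal p q}

/-- `A(p, μ, f) = sgn(μ - pf) √(2 Kinf*(p, μ, f))`. -/
def Afun {m : ℕ} (p : Fin (m + 1) → ℝ) (μ : ℝ) (f : Fin (m + 1) → ℝ) : ℝ :=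
  Real.sign (μ - ∑ ℓ, f ℓ * p ℓ) * Real.sqrt (2 * Kinfstar p μ f)



lemma gamma_integral_eq {a : ℝ} (ha : 0 < a) (g : ℝ → ℝ) :
    ∫ x, g x ∂(gammaMeasure a 1) = ∫ x in Ioi (0:ℝ), (1 / Gamma a * x ^ (a-1) * exp (-x)) * g x := by
  rw [gammaMeasure, integral_withDensity_eq_integral_toReal_smul
    (by unfold gammaPDF; fun_prop) (by simp [gammaPDF])]
  rw [← integral_indicator measurableSet_Ioi]
  apply integral_congr_ae
  have : ∀ᵐ x : ℝ, x ≠ 0 := by simp [ae_iff]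
  filter_upwards [this] with x hx
  rw [gammaPDF, ENNReal.toReal_ofReal (gammaPDFReal_nonneg ha one_pos x), gammaPDFReal]
  rcases lt_or_gt_of_ne hx with h | h
  · simp [not_le.mpr h, h.le]
  · simp [h.le, h]

lemma gamma_integrable_iff {a : ℝ} (ha : 0 < a) (g : ℝ → ℝ) :
    Integrable g (gammaMeasure a 1) ↔
      IntegrableOn (fun x => (1 / Gamma a * x ^ (a-1) * exp (-x)) * g x) (Ioi (0:ℝ)) := by
  rw [gammaMeasure, integrable_withDensity_iff_integrable_smul₀'
    (by unfold gammaPDF; fun_prop) (by simp [gammaPDF])]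
  rw [← integrable_indicator_iff measurableSet_Ioi]
  apply integrable_congr
  have : ∀ᵐ x : ℝ, x ≠ 0 := by simp [ae_iff]
  filter_upwards [this] with x hx
  rw [gammaPDF, ENNReal.toReal_ofReal (gammaPDFReal_nonneg ha one_pos x), gammaPDFReal]
  rcases lt_or_gt_of_ne hx with h | h
  · simp [not_le.mpr h, h.le]
  · simp [h.le, h]

lemma gamma_exp_integrable {a : ℝ} (ha : 0 < a) {t : ℝ} (ht : t < 1) :
    Integrable (fun x => exp (t * x)) (gammaMeasure a 1) := by
  rw [gamma_integrable_iff ha]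
  have h := integrableOn_rpow_mul_exp_neg_mul_rpow (s := a - 1) (p := 1) (b := 1 - t)
    (by linarith) one_pos (by linarith)
  refine IntegrableOn.congr_fun (h.const_mul (1 / Gamma a)) (fun x hx => ?_) measurableSet_Ioi
  simp only [rpow_one]
  rw [mul_assoc, mul_assoc, ← exp_add]
  ring_nf

lemma gamma_mgf {a : ℝ} (ha : 0 < a) {t : ℝ} (ht : t < 1) :
    ∫ x, exp (t * x) ∂(gammaMeasure a 1) = (1 - t) ^ (-a) := by
  rw [gamma_integral_eq ha]
  have h := integral_rpow_mul_exp_neg_mul_Ioi ha (r := 1 - t) (by linarith)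
  have h2 : ∫ x in Ioi (0:ℝ), (1 / Gamma a * x ^ (a-1) * exp (-x)) * exp (t * x)
      = 1 / Gamma a * ∫ x in Ioi (0:ℝ), x ^ (a-1) * exp (-((1-t) * x)) := by
    rw [← integral_const_mul]
    refine setIntegral_congr_fun measurableSet_Ioi fun x hx => ?_
    rw [mul_assoc, mul_assoc, ← exp_add]
    ring_nf
  rw [h2, h, one_div (1 - t), inv_rpow (by linarith), rpow_neg (by linarith)]
  have := (Gamma_pos_of_pos ha).ne'
  field_simp

lemma gamma_cmgf {a : ℝ} (ha : 0 < a) {z : ℂ} (hz : z.re < 1) :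
    ∫ x, Complex.exp (z * x) ∂(gammaMeasure a 1) = (1 - z) ^ (-(a:ℂ)) := by
  have hsub : Iio (1:ℝ) ⊆ interior (integrableExpSet id (gammaMeasure a 1)) := by
    apply interior_maximal _ isOpen_Iio
    intro t ht
    exact gamma_exp_integrable ha ht
  have hA : AnalyticOnNhd ℂ (complexMGF id (gammaMeasure a 1)) {z | z.re < 1} :=
    analyticOnNhd_complexMGF.mono fun z hz => hsub hz
  have hB : AnalyticOnNhd ℂ (fun z : ℂ => (1 - z) ^ (-(a:ℂ))) {z | z.re < 1} := by
    apply DifferentiableOn.analyticOnNhd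
    · intro z hz
      have : 1 - z ∈ Complex.slitPlane := by
        left; simp at hz ⊢; linarith
      exact (DifferentiableAt.cpow (by fun_prop) (by fun_prop) this).differentiableWithinAt
    · exact isOpen_lt Complex.continuous_re continuous_const
  have hpre : IsPreconnected {z : ℂ | z.re < 1} := (convex_halfSpace_re_lt 1).isPreconnected
  have heq := hA.eqOn_of_preconnected_of_frequently_eq hB hpre (z₀ := 0) (by simp) ?_
  · have := heq hz
    simpa [complexMGF] using this
  · have h_real : ∃ᶠ (x : ℝ) in nhdsWithin 0 {0}ᶜ, complexMGF id (gammaMeasure a 1) x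
        = (1 - (x:ℂ)) ^ (-(a:ℂ)) := by
      apply Filter.Eventually.frequently
      have : ∀ᶠ x : ℝ in nhdsWithin 0 {0}ᶜ, x < 1 := nhdsWithin_le_nhds (Iio_mem_nhds one_pos)
      filter_upwards [this] with x hx
      rw [complexMGF_ofReal, mgf]
      simp only [id]
      rw [gamma_mgf ha hx, Complex.ofReal_cpow (by linarith)]
      push_cast; rfl
    rw [Filter.frequently_iff_seq_forall] at h_real ⊢
    obtain ⟨xs, hx_tendsto, hx_eq⟩ := h_real
    refine ⟨fun n ↦ xs n, ?_, fun n ↦ ?_⟩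
    · rw [tendsto_nhdsWithin_iff] at hx_tendsto ⊢
      refine ⟨?_, ?_⟩
      · have := (Complex.continuous_ofReal.tendsto 0).comp hx_tendsto.1
        simpa [Function.comp_def] using this
      · filter_upwards [hx_tendsto.2] with n hn
        simpa using hn
    · simpa using hx_eq n


/-- product of Gamma laws -/
def gamP {ι : Type*} [Fintype ι] (α : ι → ℝ) : Measure (ι → ℝ) :=
  Measure.pi (fun j => gammaMeasure (α j) 1)

lemma gamP_prob {ι : Type*} [Fintype ι] {α : ι → ℝ} (hα : ∀ j, 0 < α j) :
    IsProbabilityMeasure (gamP α) := by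
  have : ∀ j, IsProbabilityMeasure (gammaMeasure (α j) 1) :=
    fun j => isProbabilityMeasure_gammaMeasure (hα j) one_pos
  unfold gamP; infer_instance

/-- Gaussian kernel of width `η` -/
def kern (η x : ℝ) : ℝ := (√(2 * π) * η)⁻¹ * exp (-(x / η) ^ 2 / 2)

lemma kern_fourier {η : ℝ} (hη : 0 < η) (l x : ℝ) :
    (kern η x : ℂ) = 1 / (2 * π) * ∫ s : ℝ, (Complex.exp (-(η ^ 2 / 2) * s ^ 2
      + Complex.I * l * η ^ 2 * s + l ^ 2 * η ^ 2 / 2) * Complex.exp ((l + Complex.I * s) * x)) := by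
  have h := integral_cexp_quadratic (b := (-(η ^ 2 / 2) : ℝ)) (by rw [Complex.ofReal_re]; have := pow_pos hη 2; linarith)
    (Complex.I * (l * η ^ 2 + x)) (l ^ 2 * η ^ 2 / 2 + l * x)
  have e : ∀ s : ℝ, (Complex.exp (-(η ^ 2 / 2) * s ^ 2
      + Complex.I * l * η ^ 2 * s + l ^ 2 * η ^ 2 / 2) * Complex.exp ((l + Complex.I * s) * x)) =
      Complex.exp (((-(η ^ 2 / 2) : ℝ) : ℂ) * s ^ 2 + Complex.I * (l * η ^ 2 + x) * s + 
        (l ^ 2 * η ^ 2 / 2 + l * x)) := by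
    intro s
    rw [← Complex.exp_add]; push_cast; ring_nf
  simp_rw [e]
  rw [h]
  have h1 : ((l ^ 2 * η ^ 2 / 2 + l * x : ℂ) - (Complex.I * (l * η ^ 2 + x)) ^ 2 /
      (4 * ((-(η ^ 2 / 2) : ℝ) : ℂ))) = ((-(x / η) ^ 2 / 2 : ℝ) : ℂ) := by
    have : (η : ℂ) ≠ 0 := by exact_mod_cast hη.ne'
    rw [mul_pow, Complex.I_sq]
    push_cast
    field_simp
    ring
  have h2 : ((π : ℂ) / -((-(η ^ 2 / 2) : ℝ) : ℂ)) ^ (1 / 2 : ℂ) = ((√(2 * π) / η : ℝ) : ℂ) := by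
    have : ((π : ℂ) / -((-(η ^ 2 / 2) : ℝ) : ℂ)) = ((2 * π / η ^ 2 : ℝ) : ℂ) := by
      have : (η : ℂ) ≠ 0 := by exact_mod_cast hη.ne'
      push_cast
      field_simp
    rw [this, show (1 / 2 : ℂ) = ((1 / 2 : ℝ) : ℂ) by push_cast; rfl,
      ← Complex.ofReal_cpow (by positivity), ← sqrt_eq_rpow, sqrt_div (by positivity),
      sqrt_sq hη.le]
  rw [h1, h2, kern, ← Complex.ofReal_exp]
  have h3 : (√(2 * π) * η)⁻¹ = 1 / (2 * π) * (√(2 * π) / η) := by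
    have := sq_sqrt (show 0 ≤ 2 * π by positivity)
    have h0 : 0 < √(2 * π) := by positivity
    field_simp
    linarith
  rw [h3]
  push_cast
  ring

lemma E_kern {ι : Type*} [Fintype ι] {α : ι → ℝ} (hα : ∀ j, 0 < α j) (c : ι → ℝ) {l : ℝ}
    (hl : ∀ j, l * c j < 1) {η : ℝ} (hη : 0 < η) :
    ((∫ x, kern η (∑ j, c j * x j) ∂(gamP α) : ℝ) : ℂ) = 1 / (2 * π) *
      ∫ s : ℝ, Complex.exp (-(η ^ 2 / 2) * s ^ 2
      + Complex.I * l * η ^ 2 * s + l ^ 2 * η ^ 2 / 2) *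
        ∏ j, (1 - (l + Complex.I * s) * c j) ^ (-(α j : ℂ)) := by
  have hP := gamP_prob hα
  have hp : ∀ j, IsProbabilityMeasure (gammaMeasure (α j) 1) :=
    fun j => isProbabilityMeasure_gammaMeasure (hα j) one_pos
  rw [← integral_complex_ofReal]
  simp_rw [kern_fourier hη l]
  rw [integral_const_mul, integral_integral_swap]
  · congr 1
    apply integral_congr_ae
    filter_upwards with s
    rw [integral_const_mul]
    congr 1
    have : ∀ x : ι → ℝ, Complex.exp ((l + Complex.I * s) * ((∑ j, c j * x j : ℝ) : ℂ)) =
        ∏ j, Complex.exp ((l + Complex.I * s) * c j * x j) := by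
      intro x
      rw [← Complex.exp_sum]
      push_cast
      rw [Finset.mul_sum]
      congr 1
      apply Finset.sum_congr rfl
      intros; ring
    simp_rw [this]
    rw [gamP, integral_fintype_prod_eq_prod (fun j (y : ℝ) => Complex.exp ((l + Complex.I * s) * c j * y))]
    apply Finset.prod_congr rfl
    intro j _
    rw [gamma_cmgf (hα j)]
    simpa using hl j
  · have h1 : Integrable (fun s : ℝ => exp (-(η ^ 2 / 2) * s ^ 2) * exp (l ^ 2 * η ^ 2 / 2)) :=
      (integrable_exp_neg_mul_sq (by positivity)).mul_const _
    have h2 : Integrable (fun x : ι → ℝ => ∏ j, exp (l * c j * x j)) (gamP α) :=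
      Integrable.fintype_prod (f := fun j y => exp (l * c j * y))
        (fun j => gamma_exp_integrable (hα j) (hl j))
    have h3 := h2.mul_prod h1
    refine h3.mono' ?_ ?_
    · apply Continuous.aestronglyMeasurable
      simp only [Function.uncurry_def]
      fun_prop
    · filter_upwards with z
      rw [Function.uncurry_apply_pair, norm_mul, Complex.norm_exp, Complex.norm_exp, ← exp_sum, mul_comm,
        ← exp_add (-(η ^ 2 / 2) * z.2 ^ 2)]
      apply le_of_eq
      congr 2
      · simp [Finset.mul_sum, mul_assoc]
      · simp [← Complex.ofReal_pow]


/-- modulus of the product of Gamma characteristic functions -/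
def rho {ι : Type*} [Fintype ι] (α a : ι → ℝ) (s : ℝ) : ℝ :=
  exp (-(1 / 2) * ∑ j, α j * log (1 + (s * a j) ^ 2))

/-- phase of the product of Gamma characteristic functions -/
def theta {ι : Type*} [Fintype ι] (α a : ι → ℝ) (s : ℝ) : ℝ := ∑ j, α j * arctan (s * a j)

lemma rho_continuous {ι : Type*} [Fintype ι] (α a : ι → ℝ) : Continuous (rho α a) := by
  unfold rho
  have : ∀ j s, 1 + (s * a j) ^ 2 ≠ 0 := fun j s => by positivity
  apply Continuous.rexp
  apply Continuous.mul continuous_const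
  apply continuous_finsetSum
  intro j _
  exact continuous_const.mul (Continuous.log (by fun_prop) (this j))

lemma theta_continuous {ι : Type*} [Fintype ι] (α a : ι → ℝ) : Continuous (theta α a) := by
  unfold theta
  apply continuous_finsetSum
  intro j _
  exact continuous_const.mul (Real.continuous_arctan.comp (by fun_prop))

lemma rho_pos {ι : Type*} [Fintype ι] (α a : ι → ℝ) (s : ℝ) : 0 < rho α a s := exp_pos _

lemma clog_one_sub (y : ℝ) : Complex.log (1 - Complex.I * y) =
    ((1 / 2 * log (1 + y ^ 2) : ℝ) : ℂ) - Complex.I * arctan y := by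
  have hc := Real.cos_arctan y
  have hs := Real.sin_arctan y
  have hsq : 0 < √(1 + y ^ 2) := by positivity
  have hsq2 : 1 / 2 * log (1 + y ^ 2) = log (√(1 + y ^ 2)) := by
    rw [log_sqrt (by positivity)]; ring
  have key : (1 - Complex.I * y : ℂ) = Complex.exp (((1 / 2 * log (1 + y ^ 2) : ℝ) : ℂ) - Complex.I * arctan y) := by
    rw [Complex.exp_sub, ← Complex.ofReal_exp, hsq2, exp_log hsq, mul_comm Complex.I (arctan y : ℂ), Complex.exp_mul_I,
      ← Complex.ofReal_cos, ← Complex.ofReal_sin, hc, hs]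
    have h1 : (√(1 + y ^ 2) : ℂ) ≠ 0 := by exact_mod_cast hsq.ne'
    have h2 : (√(1 + y ^ 2) : ℂ) * √(1 + y ^ 2) = 1 + y ^ 2 := by
      have := mul_self_sqrt (show 0 ≤ 1 + y ^ 2 by positivity)
      exact_mod_cast this
    have h3 : (1 + (y:ℂ) * Complex.I) ≠ 0 := by
      intro h
      have := congrArg Complex.re h
      simp at this
    push_cast
    rw [eq_div_iff (by field_simp; exact div_ne_zero h3 h1)]
    field_simp
    rw [sq, h2]
    ring_nf
    rw [Complex.I_sq]
    ring
  conv_lhs => rw [key]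
  rw [Complex.log_exp]
  · simp [-Complex.ofReal_arctan]
    have := arctan_lt_pi_div_two y
    linarith [pi_pos]
  · simp [-Complex.ofReal_arctan]
    have := neg_pi_div_two_lt_arctan y
    linarith [pi_pos]

lemma char_factor {ι : Type*} [Fintype ι] (α c : ι → ℝ) {l : ℝ}
    (hl : ∀ j, l * c j < 1) (s : ℝ) :
    ∏ j, (1 - (l + Complex.I * s) * c j) ^ (-(α j : ℂ)) =
      ((∏ j, (1 - l * c j) ^ (-α j) : ℝ) : ℂ) * (rho α (fun j => c j / (1 - l * c j)) s *
        Complex.exp (Complex.I * theta α (fun j => c j / (1 - l * c j)) s)) := by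
  have h1 : ∀ j, (1 - (l + Complex.I * s) * c j) ^ (-(α j : ℂ)) =
      (((1 - l * c j) ^ (-α j) : ℝ) : ℂ) * Complex.exp (
        (-(1/2) * (α j * log (1 + (s * (c j / (1 - l * c j))) ^ 2)) : ℝ) +
        Complex.I * (α j * arctan (s * (c j / (1 - l * c j))) : ℝ)) := by
    intro j
    have hr : 0 < 1 - l * c j := by linarith [hl j]
    set r := 1 - l * c j with hrdef
    set y := s * (c j / r) with hy
    have e : (1 - (l + Complex.I * s) * c j : ℂ) = (r : ℂ) * (1 - Complex.I * y) := by
      have : (r : ℂ) ≠ 0 := by exact_mod_cast hr.ne'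
      rw [hy]; push_cast; field_simp; rw [hrdef]; push_cast; ring
    have hne : (1 - Complex.I * y : ℂ) ≠ 0 := by
      intro h
      have := congrArg Complex.re h
      simp at this
    have hr0 : (r : ℂ) ≠ 0 := by exact_mod_cast hr.ne'
    rw [e, Complex.cpow_def_of_ne_zero (mul_ne_zero hr0 hne), Complex.log_ofReal_mul hr hne,
      clog_one_sub, Complex.ofReal_cpow hr.le, Complex.cpow_def_of_ne_zero hr0, ← Complex.ofReal_log hr.le,
      ← Complex.exp_add]
    push_cast
    congr 1
    ring
  simp_rw [h1]
  rw [Finset.prod_mul_distrib, ← Complex.exp_sum, Finset.sum_add_distrib, Complex.exp_add]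
  rw [Complex.ofReal_prod, rho, theta, ← Finset.mul_sum, ← Complex.ofReal_sum, ← Complex.ofReal_sum,
    ← Complex.ofReal_exp, ← Finset.mul_sum]

lemma char_re {ι : Type*} [Fintype ι] (α a : ι → ℝ) (h : Integrable (rho α a)) :
    (∫ s : ℝ, (rho α a s : ℂ) * Complex.exp (Complex.I * theta α a s)).re =
      ∫ s, rho α a s * cos (theta α a s) := by
  have hi : Integrable (fun s : ℝ => (rho α a s : ℂ) * Complex.exp (Complex.I * theta α a s)) := by
    refine h.mono ?_ ?_
    · apply Continuous.aestronglyMeasurable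
      have := rho_continuous α a
      have := theta_continuous α a
      fun_prop
    · filter_upwards with s
      simp [Complex.norm_exp]
  have := integral_re hi
  simp only [RCLike.re_to_complex] at this
  rw [← this]
  congr 1; ext s
  rw [Complex.re_ofReal_mul, mul_comm Complex.I, Complex.exp_ofReal_mul_I_re]

lemma kern_limit {ι : Type*} [Fintype ι] {α : ι → ℝ} (hα : ∀ j, 0 < α j) (c : ι → ℝ) {l : ℝ}
    (hl : ∀ j, l * c j < 1) (hi : Integrable (rho α (fun j => c j / (1 - l * c j)))) :
    Filter.Tendsto (fun η => ∫ x, kern η (∑ j, c j * x j) ∂(gamP α)) (nhdsWithin 0 (Ioi 0))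
      (nhds (1 / (2 * π) * ((∏ j, (1 - l * c j) ^ (-α j)) *
        ∫ s, rho α (fun j => c j / (1 - l * c j)) s *
          cos (theta α (fun j => c j / (1 - l * c j)) s)))) := by
  set a := fun j => c j / (1 - l * c j) with ha
  have hrc := rho_continuous α a
  have htc := theta_continuous α a
  have hC : Filter.Tendsto (fun η : ℝ => ∫ s : ℝ, Complex.exp (-(η ^ 2 / 2) * s ^ 2
      + Complex.I * l * η ^ 2 * s + l ^ 2 * η ^ 2 / 2) *
        ∏ j, (1 - (l + Complex.I * s) * c j) ^ (-(α j : ℂ))) (nhdsWithin 0 (Ioi 0))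
      (nhds (∫ s : ℝ, ∏ j, (1 - (l + Complex.I * s) * c j) ^ (-(α j : ℂ)))) := by
    simp_rw [char_factor α c hl, ← ha]
    have hprod : 0 ≤ ∏ j, (1 - l * c j) ^ (-α j) :=
      Finset.prod_nonneg fun j _ => rpow_nonneg (by linarith [hl j]) _
    apply tendsto_integral_filter_of_dominated_convergence
      (fun s => exp (l ^ 2 / 2) * ((∏ j, (1 - l * c j) ^ (-α j)) * rho α a s))
    · filter_upwards with η
      apply Continuous.aestronglyMeasurable
      fun_prop
    · have : ∀ᶠ η : ℝ in nhdsWithin 0 (Ioi 0), η < 1 := nhdsWithin_le_nhds (Iio_mem_nhds one_pos)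
      filter_upwards [this, self_mem_nhdsWithin] with η h1 h0
      filter_upwards with s
      have h0' : 0 < η := h0
      rw [norm_mul, norm_mul, norm_mul, Complex.norm_exp, Complex.norm_exp]
      have e1 : (-((η:ℂ) ^ 2 / 2) * s ^ 2
        + Complex.I * l * η ^ 2 * s + l ^ 2 * η ^ 2 / 2).re = -(η^2/2) * s^2 + l^2 * η^2/2 := by
        simp [← Complex.ofReal_pow]
      rw [e1]
      simp only [Complex.norm_real, norm_eq_abs, abs_of_nonneg hprod, abs_of_pos (rho_pos α a s)]
      simp
      apply mul_le_mul_of_nonneg_right _ (mul_nonneg hprod (rho_pos α a s).le)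
      apply exp_le_exp.mpr
      have : η ^ 2 ≤ 1 := by nlinarith
      nlinarith [mul_nonneg (sq_nonneg l) (sub_nonneg.mpr this), mul_nonneg (sq_nonneg η) (sq_nonneg s)]
    · exact (hi.const_mul _).const_mul _
    · filter_upwards with s
      have : Continuous (fun η : ℝ => Complex.exp (-(η ^ 2 / 2) * s ^ 2
        + Complex.I * l * η ^ 2 * s + l ^ 2 * η ^ 2 / 2) * (((∏ j, (1 - l * c j) ^ (-α j) : ℝ) : ℂ) *
        (rho α a s * Complex.exp (Complex.I * theta α a s)))) := by fun_prop
      have h2 := (this.tendsto 0).mono_left (nhdsWithin_le_nhds (s := Ioi 0))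
      simpa using h2
  have hD := (Complex.continuous_re.tendsto _).comp (hC.const_mul (1 / (2 * π : ℂ)))
  have e2 : (1 / (2 * π : ℂ) * ∫ s : ℝ, ∏ j, (1 - (l + Complex.I * s) * c j) ^ (-(α j : ℂ))).re =
      1 / (2 * π) * ((∏ j, (1 - l * c j) ^ (-α j)) *
        ∫ s, rho α a s * cos (theta α a s)) := by
    simp_rw [char_factor α c hl]
    rw [integral_const_mul, ← char_re α a hi, ← Complex.re_ofReal_mul, ← Complex.re_ofReal_mul]
    push_cast
    rfl
  rw [e2] at hD
  refine hD.congr' ?_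
  filter_upwards [self_mem_nhdsWithin] with η hη
  simp only [Function.comp]
  rw [← E_kern hα c hl hη, Complex.ofReal_re]

lemma kern_bound {ι : Type*} [Fintype ι] {α : ι → ℝ} (hα : ∀ j, 0 < α j) (c : ι → ℝ) 
    (hi : Integrable (rho α c)) {η : ℝ} (hη : 0 < η) :
    ∫ x, kern η (∑ j, c j * x j) ∂(gamP α) ≤ 1 / (2 * π) * ∫ s, rho α c s := by
  have h := E_kern hα c (l := 0) (by simp) hη
  have h2 := congrArg norm h
  have hf := char_factor α c (l := 0) (by simp)
  rw [Complex.norm_real] at h2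
  refine (le_abs_self _).trans ?_
  rw [← norm_eq_abs, h2, norm_mul]
  have e : ‖(1 / (2 * π) : ℂ)‖ = 1 / (2 * π) := by
    simp [abs_of_pos pi_pos]
  rw [e]
  apply mul_le_mul_of_nonneg_left _ (by positivity)
  refine norm_integral_le_of_norm_le hi ?_
  filter_upwards with s
  rw [hf s]
  simp only [zero_mul, sub_zero, one_rpow, Finset.prod_const_one, div_one]
  rw [norm_mul, norm_mul, norm_mul, Complex.norm_exp, Complex.norm_exp]
  simp [← Complex.ofReal_pow, abs_of_pos (rho_pos α c s)]
  exact mul_le_of_le_one_left (rho_pos _ _ _).le (exp_le_one_iff.mpr (by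
    have := mul_nonneg (sq_nonneg η) (sq_nonneg s); linarith))


/-- Student-type majorant -/
def stud (N s : ℝ) : ℝ := exp (-(N / 2) * log (1 + s ^ 2 / N))

lemma stud_continuous {N : ℝ} (hN : 0 < N) : Continuous (stud N) := by
  unfold stud
  have : ∀ s : ℝ, 1 + s ^ 2 / N ≠ 0 := fun s => by positivity
  exact (continuous_const.mul (Continuous.log (by fun_prop) this)).rexp

lemma stud_interval {N : ℝ} (hN : 3 < N) (R : ℝ) (hR : 0 ≤ R) :
    ∫ s in (-R)..R, stud N s ≤ √(π / ((N - 3) / (2 * N))) := by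
  have hN0 : 0 < N := by linarith
  set c := (N - 3) / (2 * N) with hc
  have hcpos : 0 < c := by rw [hc]; apply div_pos <;> linarith
  set L : ℝ → ℝ := fun s => log (1 + s ^ 2 / N) with hL
  set v : ℝ → ℝ := fun s => s * exp (-(1 / 2) * L s) with hv
  set F : ℝ → ℝ := fun y => ∫ w in (0 : ℝ)..y, exp (-c * w ^ 2) with hF
  have hgc : Continuous (fun w : ℝ => exp (-c * w ^ 2)) := by fun_prop
  have hFd : ∀ y, HasDerivAt F (exp (-c * y ^ 2)) y := fun y =>
    intervalIntegral.integral_hasDerivAt_right (hgc.intervalIntegrable _ _)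
      hgc.stronglyMeasurable.stronglyMeasurableAtFilter hgc.continuousAt
  have hLd : ∀ s, HasDerivAt L ((2 * s / N) / (1 + s ^ 2 / N)) s := by
    intro s
    have h1 : HasDerivAt (fun s : ℝ => 1 + s ^ 2 / N) (2 * s / N) s := by
      have := ((hasDerivAt_pow 2 s).div_const N).const_add 1
      simpa using this
    exact h1.log (by positivity)
  have hvd : ∀ s, HasDerivAt v (exp (-(3 / 2) * L s)) s := by
    intro s
    have h1 := (hasDerivAt_id s).mul (((hLd s).const_mul (-(1 / 2))).exp)
    convert! h1 using 1
    have hp : 0 < 1 + s ^ 2 / N := by positivity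
    have e1 : exp (-(3 / 2) * L s) = exp (-(1 / 2) * L s) * (1 + s ^ 2 / N)⁻¹ := by
      rw [show -(3 / 2) * L s = -(1 / 2) * L s + -L s by ring, exp_add, exp_neg (L s), hL]
      simp only
      rw [exp_log hp]
    rw [e1]
    simp only [id]
    have : 1 + s ^ 2 / N = (N + s ^ 2) / N := by field_simp
    rw [this]
    have : 0 < N + s ^ 2 := by positivity
    field_simp
    ring
  have hGd : ∀ s, HasDerivAt (F ∘ v) (exp (-c * v s ^ 2) * exp (-(3 / 2) * L s)) s :=
    fun s => (hFd (v s)).comp s (hvd s)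
  have hle : ∀ s, stud N s ≤ exp (-c * v s ^ 2) * exp (-(3 / 2) * L s) := by
    intro s
    rw [← exp_add, stud]
    apply exp_le_exp.mpr
    have hp : 0 < 1 + s ^ 2 / N := by positivity
    have e1 : v s ^ 2 = s ^ 2 / (1 + s ^ 2 / N) := by
      rw [hv]; simp only
      rw [mul_pow, ← exp_nat_mul, show ((2:ℕ):ℝ) * (-(1 / 2) * L s) = - L s by push_cast; ring, exp_neg, hL]
      simp only
      rw [exp_log hp]; rfl
    have h2 : c * v s ^ 2 = (N - 3) / 2 * (1 - (1 + s ^ 2 / N)⁻¹) := by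
      rw [e1, hc]
      have : 1 + s ^ 2 / N = (N + s ^ 2) / N := by field_simp
      rw [this]
      have : 0 < N + s ^ 2 := by positivity
      field_simp
      ring
    have h3 := one_sub_inv_le_log_of_pos hp
    have h4 : L s = log (1 + s ^ 2 / N) := rfl
    have h5 := mul_le_mul_of_nonneg_left h3 (show 0 ≤ (N - 3) / 2 by linarith)
    rw [h4]
    nlinarith
  have hcomp := intervalIntegral.integral_le_sub_of_hasDeriv_right_of_le (a := -R) (b := R) (by linarith)
    (g := F ∘ v) (fun s _ => (hGd s).continuousAt.continuousWithinAt)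
    (fun s _ => (hGd s).hasDerivWithinAt) (φ := stud N)
    ((stud_continuous hN0).integrableOn_Icc) (fun s _ => hle s)
  refine hcomp.trans ?_
  simp only [Function.comp, hF]
  rw [intervalIntegral.integral_interval_sub_left (hgc.intervalIntegrable _ _) (hgc.intervalIntegrable _ _),
    ← integral_gaussian]
  have hvR : v (-R) ≤ v R := by
    have : 0 ≤ exp (-(1 / 2) * L R) := (exp_pos _).le
    have e : v (-R) = - v R := by simp [hv, hL]
    rw [e]
    have : 0 ≤ v R := mul_nonneg hR this
    linarith
  rw [intervalIntegral.integral_of_le hvR]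
  exact setIntegral_le_integral (integrable_exp_neg_mul_sq hcpos) (by filter_upwards with x; positivity)

lemma stud_integrable {N : ℝ} (hN : 3 < N) : Integrable (stud N) := by
  refine integrable_of_intervalIntegral_norm_bounded (l := Filter.atTop) (√(π / ((N - 3) / (2 * N))))
    (a := fun R : ℝ => -R) (b := fun R : ℝ => R) (fun R => ?_) Filter.tendsto_neg_atTop_atBot
    Filter.tendsto_id ?_
  · exact ((stud_continuous (by linarith)).integrableOn_Icc).mono_set Ioc_subset_Icc_self
  · filter_upwards [Filter.eventually_ge_atTop (0:ℝ)] with R hR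
    have := stud_interval hN R hR
    simpa [stud] using this

lemma stud_integral {N : ℝ} (hN : 200 ≤ N) : ∫ s, stud N s ≤ √(2 * π) * (1 + 2 / N) := by
  have h1 : ∫ s, stud N s ≤ √(π / ((N - 3) / (2 * N))) := by
    have ht := intervalIntegral_tendsto_integral (stud_integrable (N := N) (by linarith))
      Filter.tendsto_neg_atTop_atBot (Filter.tendsto_id (α := ℝ))
    refine le_of_tendsto ht ?_
    filter_upwards [Filter.eventually_ge_atTop (0:ℝ)] with R hR
    exact stud_interval (by linarith) R hR
  refine h1.trans ?_
  have hN0 : 0 < N := by linarith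
  have hN3 : 0 < N - 3 := by linarith
  rw [show π / ((N - 3) / (2 * N)) = (2 * π) * (N / (N - 3)) by field_simp, sqrt_mul (by positivity)]
  apply mul_le_mul_of_nonneg_left _ (sqrt_nonneg _)
  apply sqrt_le_iff.mpr ⟨by positivity, _⟩
  rw [div_le_iff₀ hN3]
  have : (1 + 2 / N) ^ 2 * (N - 3) = N + 1 - 8 / N - 12 / N ^ 2 := by field_simp; ring
  rw [this]
  have h8 : 8 / N ≤ 8 / 200 := by gcongr
  have h12 : 12 / N ^ 2 ≤ 12 / 200 ^ 2 := by gcongr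
  linarith

lemma arctan_bound_pos {x : ℝ} (hx : 0 ≤ x) : 0 ≤ x - arctan x ∧ x - arctan x ≤ x ^ 3 := by
  have h1 : MonotoneOn (fun x : ℝ => x - arctan x) (Ici 0) := by
    apply monotoneOn_of_deriv_nonneg (convex_Ici 0) (by fun_prop)
      (differentiable_id.sub Real.differentiable_arctan).differentiableOn
    intro y hy
    have : HasDerivAt (fun x : ℝ => x - arctan x) (1 - 1 / (1 + y ^ 2)) y :=
      (hasDerivAt_id y).sub (hasDerivAt_arctan y)
    rw [show deriv (id - arctan) y = _ from this.deriv]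
    have : 1 / (1 + y ^ 2) ≤ 1 := by
      rw [div_le_one (by positivity)]; nlinarith [sq_nonneg y]
    linarith
  have h2 : MonotoneOn (fun x : ℝ => x ^ 3 - (x - arctan x)) (Ici 0) := by
    apply monotoneOn_of_deriv_nonneg (convex_Ici 0) (by fun_prop)
      ((differentiable_pow 3).sub (differentiable_id.sub Real.differentiable_arctan)).differentiableOn
    intro y hy
    have : HasDerivAt (fun x : ℝ => x ^ 3 - (x - arctan x)) (3 * y ^ 2 - (1 - 1 / (1 + y ^ 2))) y := by
      have := (hasDerivAt_pow 3 y).sub ((hasDerivAt_id y).sub (hasDerivAt_arctan y))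
      convert! this using 1
    rw [show deriv ((fun x : ℝ => x ^ 3) - (id - arctan)) y = _ from this.deriv]
    have : 1 - 1 / (1 + y ^ 2) = y ^ 2 / (1 + y ^ 2) := by field_simp; ring
    rw [this]
    have : y ^ 2 / (1 + y ^ 2) ≤ y ^ 2 := div_le_self (by positivity) (by nlinarith [sq_nonneg y])
    nlinarith [sq_nonneg y]
  have a1 := h1 (mem_Ici.mpr le_rfl) (mem_Ici.mpr hx) hx
  have a2 := h2 (mem_Ici.mpr le_rfl) (mem_Ici.mpr hx) hx
  simp at a1 a2
  constructor <;> linarith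

lemma arctan_bound (x : ℝ) : |arctan x - x| ≤ |x| ^ 3 ∧ |arctan x| ≤ |x| := by
  rcases le_total 0 x with h | h
  · have := arctan_bound_pos h
    have h0 : 0 ≤ arctan x := by rw [← arctan_zero]; exact arctan_strictMono.monotone h
    rw [abs_of_nonneg h, abs_of_nonpos (by linarith), abs_of_nonneg h0]
    constructor <;> linarith
  · have := arctan_bound_pos (neg_nonneg.mpr h)
    rw [arctan_neg] at this
    have h0 : arctan x ≤ 0 := by rw [← arctan_zero]; exact arctan_strictMono.monotone h
    rw [abs_of_nonpos h, abs_of_nonneg (by linarith), abs_of_nonpos h0]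
    constructor <;> linarith


section laplace
variable {ι : Type*} [Fintype ι] [DecidableEq ι]

set_option linter.unusedSectionVars false

lemma rho_le_stud {α β a : ι → ℝ} {N : ℝ} (hN : 0 < N) (hβ : ∀ j, 0 ≤ β j)
    (hαβ : ∀ j, β j ≤ α j) (h2 : ∑ j, β j * a j ^ 2 = 1) (ha : ∀ j, N * a j ^ 2 ≤ 1) (s : ℝ) :
    rho α a s ≤ stud N s := by
  unfold rho stud
  apply exp_le_exp.mpr
  have key : ∀ j, N * a j ^ 2 * log (1 + s ^ 2 / N) ≤ log (1 + (s * a j) ^ 2) := by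
    intro j
    have hx : 0 ≤ s ^ 2 / N := by positivity
    have h := rpow_one_add_le_one_add_mul_self (s := s ^ 2 / N) (by linarith)
      (p := N * a j ^ 2) (by positivity) (ha j)
    rw [← log_rpow (by positivity)]
    apply log_le_log (by positivity)
    refine h.trans (le_of_eq ?_)
    field_simp
  have hs : N * log (1 + s ^ 2 / N) ≤ ∑ j, α j * log (1 + (s * a j) ^ 2) := by
    calc N * log (1 + s ^ 2 / N) = ∑ j, β j * (N * a j ^ 2 * log (1 + s ^ 2 / N)) := by
          rw [← mul_one (N * log (1 + s ^ 2 / N)), ← h2, Finset.mul_sum]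
          apply Finset.sum_congr rfl; intros; ring
      _ ≤ ∑ j, α j * log (1 + (s * a j) ^ 2) := by
          apply Finset.sum_le_sum
          intro j _
          have h0 : 0 ≤ log (1 + (s * a j) ^ 2) := log_nonneg (by nlinarith [sq_nonneg (s * a j)])
          exact (mul_le_mul_of_nonneg_left (key j) (hβ j)).trans
            (mul_le_mul_of_nonneg_right (hαβ j) h0)
  linarith

lemma rho_ge_gauss {α β a : ι → ℝ} {N : ℝ} (hN : 0 < N) (hβ : ∀ j, 0 ≤ β j) (k : ι)
    (hα : ∀ j, α j = β j + if j = k then 1 else 0)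
    (h2 : ∑ j, β j * a j ^ 2 = 1) (ha : ∀ j, N * a j ^ 2 ≤ 1) (s : ℝ) :
    exp (-(s ^ 2 / 2)) * (1 - s ^ 2 / (2 * N)) ≤ rho α a s := by
  have h1 : ∑ j, α j * log (1 + (s * a j) ^ 2) ≤ s ^ 2 + s ^ 2 / N := by
    calc ∑ j, α j * log (1 + (s * a j) ^ 2) ≤ ∑ j, α j * (s * a j) ^ 2 := by
          apply Finset.sum_le_sum
          intro j _
          have h0 : 0 ≤ α j := by rw [hα]; have := hβ j; split_ifs <;> linarith
          apply mul_le_mul_of_nonneg_left _ h0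
          have := log_le_sub_one_of_pos (show 0 < 1 + (s * a j) ^ 2 by positivity)
          linarith
      _ = s ^ 2 * (∑ j, β j * a j ^ 2) + s ^ 2 * a k ^ 2 := by
          simp_rw [hα, add_mul, Finset.sum_add_distrib]
          congr 1
          · rw [Finset.mul_sum]; apply Finset.sum_congr rfl; intros; ring
          · simp [Finset.sum_ite_eq', mul_pow]
      _ ≤ s ^ 2 + s ^ 2 / N := by
          rw [h2, mul_one]
          have : a k ^ 2 ≤ 1 / N := by rw [le_div_iff₀ hN]; linarith [ha k]
          have := mul_le_mul_of_nonneg_left this (sq_nonneg s)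
          have e : s ^ 2 * (1 / N) = s ^ 2 / N := by ring
          linarith
  calc exp (-(s ^ 2 / 2)) * (1 - s ^ 2 / (2 * N))
      ≤ exp (-(s ^ 2 / 2)) * exp (-(s ^ 2 / (2 * N))) := by
        apply mul_le_mul_of_nonneg_left _ (exp_pos _).le
        have := add_one_le_exp (-(s ^ 2 / (2 * N)))
        linarith
    _ = exp (-(1 / 2) * (s ^ 2 + s ^ 2 / N)) := by
        rw [← exp_add]; congr 1; field_simp; ring
    _ ≤ rho α a s := by
        unfold rho
        apply exp_le_exp.mpr
        linarith

lemma theta_sq {α β a : ι → ℝ} {N : ℝ} (hN : 0 < N) (hβ : ∀ j, 0 ≤ β j) (k : ι)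
    (hα : ∀ j, α j = β j + if j = k then 1 else 0) (h1 : ∑ j, β j * a j = 0)
    (h2 : ∑ j, β j * a j ^ 2 = 1) (ha : ∀ j, N * a j ^ 2 ≤ 1) (s : ℝ) :
    theta α a s ^ 2 ≤ 2 / N * (s ^ 6 + s ^ 2) := by
  set d := √(1 / N) with hd
  have hd0 : 0 ≤ d := sqrt_nonneg _
  have hd2 : d ^ 2 = 1 / N := sq_sqrt (by positivity)
  have had : ∀ j, |a j| ≤ d := by
    intro j
    rw [hd]
    apply abs_le_sqrt
    rw [le_div_iff₀ hN]; linarith [ha j]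
  have e : theta α a s = ∑ j, β j * (arctan (s * a j) - s * a j) + arctan (s * a k) := by
    unfold theta
    simp_rw [hα, add_mul, Finset.sum_add_distrib, mul_sub, Finset.sum_sub_distrib]
    have : ∑ j, β j * (s * a j) = 0 := by
      rw [← mul_zero s, ← h1, Finset.mul_sum]; apply Finset.sum_congr rfl; intros; ring
    rw [this]
    simp [Finset.sum_ite_eq']
  have hb1 : |∑ j, β j * (arctan (s * a j) - s * a j)| ≤ d * |s| ^ 3 := by
    calc _ ≤ ∑ j, |β j * (arctan (s * a j) - s * a j)| := Finset.abs_sum_le_sum_abs _ _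
      _ ≤ ∑ j, (d * |s| ^ 3) * (β j * a j ^ 2) := by
          apply Finset.sum_le_sum
          intro j _
          rw [abs_mul, abs_of_nonneg (hβ j)]
          have h := (arctan_bound (s * a j)).1
          rw [abs_mul, mul_pow] at h
          have h3 : |a j| ^ 3 ≤ d * a j ^ 2 := by
            rw [pow_succ', sq_abs]
            exact mul_le_mul_of_nonneg_right (had j) (sq_nonneg _)
          calc β j * |arctan (s * a j) - s * a j| ≤ β j * (|s| ^ 3 * (d * a j ^ 2)) := by
                apply mul_le_mul_of_nonneg_left _ (hβ j)
                exact h.trans (mul_le_mul_of_nonneg_left h3 (by positivity))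
            _ = _ := by ring
      _ = d * |s| ^ 3 := by rw [← Finset.mul_sum, h2, mul_one]
  have hb2 : |arctan (s * a k)| ≤ d * |s| := by
    have h := (arctan_bound (s * a k)).2
    rw [abs_mul] at h
    have := mul_le_mul_of_nonneg_left (had k) (abs_nonneg s)
    linarith
  have hb : |theta α a s| ≤ d * (|s| ^ 3 + |s|) := by
    rw [e]
    have := abs_add_le (∑ j, β j * (arctan (s * a j) - s * a j)) (arctan (s * a k))
    linarith
  have h3 : theta α a s ^ 2 ≤ (d * (|s| ^ 3 + |s|)) ^ 2 := by
    rw [← sq_abs (theta α a s)]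
    exact pow_le_pow_left₀ (abs_nonneg _) hb 2
  refine h3.trans ?_
  rw [mul_pow, hd2]
  have : (|s| ^ 3 + |s|) ^ 2 ≤ 2 * (s ^ 6 + s ^ 2) := by
    have e6 : s ^ 6 = (|s| ^ 3) ^ 2 := by rw [← pow_mul, Even.pow_abs (by decide)]
    rw [e6, ← sq_abs s]
    nlinarith [sq_nonneg (|s| ^ 3 - |s|)]
  have := mul_le_mul_of_nonneg_left this (show 0 ≤ 1 / N by positivity)
  calc _ ≤ _ := this
    _ = _ := by ring

lemma poly_gauss (s : ℝ) : (s ^ 6 + 3 / 2 * s ^ 2) * exp (-(s ^ 2 / 2)) ≤ 94 * exp (-(1 / 4) * s ^ 2) := by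
  have e : exp (-(s ^ 2 / 2)) = exp (-(1/4) * s ^ 2) * exp (-(s ^ 2 / 4)) := by
    rw [← exp_add]; ring_nf
  rw [e]
  have hx0 : 0 ≤ s ^ 2 := sq_nonneg s
  set x := s ^ 2 with hx
  have e1 := exp_one_gt_d9
  have hA : x ^ 3 * exp (-(x / 4)) ≤ 91 := by
    have h1 : x / 12 ≤ exp (x / 12 - 1) := by have := add_one_le_exp (x / 12 - 1); linarith
    have h2 : (x / 12) ^ 3 ≤ exp (x / 12 - 1) ^ 3 := pow_le_pow_left₀ (by positivity) h1 3
    have h3 : exp (x / 12 - 1) ^ 3 * exp (-(x / 4)) = exp (-3) := by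
      rw [← exp_nat_mul, ← exp_add]; congr 1; push_cast; ring
    have h4 : exp (-3) ≤ 1 / 19 := by
      rw [exp_neg, ← one_div]
      apply one_div_le_one_div_of_le (by norm_num)
      rw [show (3:ℝ) = ((3:ℕ):ℝ) * 1 by norm_num, exp_nat_mul]
      have : (2.7:ℝ) ^ 3 ≤ exp 1 ^ 3 := pow_le_pow_left₀ (by norm_num) (by linarith) 3
      norm_num at this ⊢; linarith
    have := mul_le_mul_of_nonneg_right h2 (exp_pos (-(x / 4))).le
    rw [h3] at this
    nlinarith
  have hB : x * exp (-(x / 4)) ≤ 1.5 := by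
    have h1 : x / 4 ≤ exp (x / 4 - 1) := by have := add_one_le_exp (x / 4 - 1); linarith
    have h3 : exp (x / 4 - 1) * exp (-(x / 4)) = exp (-1) := by
      rw [← exp_add]; congr 1; ring
    have h4 : exp (-1) ≤ 1 / 2.7 := by
      rw [exp_neg, ← one_div]
      apply one_div_le_one_div_of_le (by norm_num) (by linarith)
    have := mul_le_mul_of_nonneg_right h1 (exp_pos (-(x / 4))).le
    rw [h3] at this
    norm_num at h4 ⊢
    linarith
  have h6 : s ^ 6 = x ^ 3 := by rw [hx]; ring
  rw [h6]
  have : (x ^ 3 + 3 / 2 * x) * exp (-(x / 4)) ≤ 94 := by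
    norm_num at hB; linarith
  have := mul_le_mul_of_nonneg_left this (exp_pos (-(1/4) * x)).le
  linarith

lemma laplace_unit {α β a : ι → ℝ} {N ε : ℝ} (hε : 0 < ε) (hε1 : ε < 1) (hN : 200 ≤ ε * N)
    (hβ : ∀ j, 0 ≤ β j) (k : ι)
    (hα : ∀ j, α j = β j + if j = k then 1 else 0) (h1 : ∑ j, β j * a j = 0)
    (h2 : ∑ j, β j * a j ^ 2 = 1) (ha : ∀ j, N * a j ^ 2 ≤ 1) :
    Integrable (rho α a) ∧ (1 - ε) * √(2 * π) ≤ ∫ s, rho α a s * cos (theta α a s) ∧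
      ∫ s, rho α a s * cos (theta α a s) ≤ (1 + ε) * √(2 * π) := by
  have hN0 : 0 < N := by
    by_contra h
    push Not at h
    nlinarith
  have hN200 : 200 ≤ N := by nlinarith
  have hαβ : ∀ j, β j ≤ α j := by intro j; rw [hα]; split_ifs <;> linarith
  have hle := rho_le_stud hN0 hβ hαβ h2 ha
  have hge := rho_ge_gauss hN0 hβ k hα h2 ha
  have hth := theta_sq hN0 hβ k hα h1 h2 ha
  have hst := stud_integrable (N := N) (by linarith)
  have hI : Integrable (rho α a) := by
    refine hst.mono' (rho_continuous α a).aestronglyMeasurable ?_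
    filter_upwards with s
    rw [norm_eq_abs, abs_of_pos (rho_pos _ _ _)]
    exact hle s
  have hcc : Continuous (fun s => cos (theta α a s)) := continuous_cos.comp (theta_continuous α a)
  have hIc : Integrable (fun s => rho α a s * cos (theta α a s)) := by
    refine hI.mono' ((rho_continuous α a).mul hcc).aestronglyMeasurable ?_
    filter_upwards with s
    rw [norm_eq_abs, abs_mul, abs_of_pos (rho_pos _ _ _)]
    exact mul_le_of_le_one_right (rho_pos _ _ _).le (abs_cos_le_one _)
  have hS := stud_integral hN200
  have hs2 : 0 < √(2 * π) := sqrt_pos.mpr (by positivity)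
  have hNε : 1 / N ≤ ε / 200 := by
    rw [div_le_div_iff₀ hN0 (by norm_num)]; linarith
  refine ⟨hI, ?_, ?_⟩
  · have hg1 : Integrable (fun s : ℝ => exp (-(1/2) * s ^ 2)) := integrable_exp_neg_mul_sq (by norm_num)
    have hg2 : Integrable (fun s : ℝ => exp (-(1/4) * s ^ 2)) := integrable_exp_neg_mul_sq (by norm_num)
    have hlow : ∀ s, 2 * exp (-(1/2) * s ^ 2) - stud N s - 94 / N * exp (-(1/4) * s ^ 2) ≤
        rho α a s * cos (theta α a s) := by
      intro s
      rw [show -(1/2) * s ^ 2 = -(s ^ 2 / 2) by ring]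
      have a1 := hle s
      have a2 := hge s
      have a3 := hth s
      have a4 := one_sub_sq_div_two_le_cos (x := theta α a s)
      have a5 := cos_le_one (theta α a s)
      have a6 := neg_one_le_cos (theta α a s)
      have a7 := poly_gauss s
      set g := exp (-(s ^ 2 / 2)) with hg
      have hg0 : 0 < g := exp_pos _
      have hgs : g ≤ stud N s := by
        rw [hg, stud]
        apply exp_le_exp.mpr
        have := log_le_sub_one_of_pos (show 0 < 1 + s ^ 2 / N by positivity)
        have := mul_le_mul_of_nonneg_left this (show 0 ≤ N / 2 by positivity)
        have e : N / 2 * (1 + s ^ 2 / N - 1) = s ^ 2 / 2 := by field_simp; ring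
        linarith
      have b1 : |rho α a s - g| ≤ (stud N s - g) + g * (s ^ 2 / (2 * N)) := by
        have : 0 ≤ g * (s ^ 2 / (2 * N)) := by positivity
        rw [abs_le]; constructor <;> nlinarith
      have b2 : -|rho α a s - g| ≤ (rho α a s - g) * cos (theta α a s) := by
        have : |(rho α a s - g) * cos (theta α a s)| ≤ |rho α a s - g| := by
          rw [abs_mul]; exact mul_le_of_le_one_right (abs_nonneg _) (abs_cos_le_one _)
        linarith [neg_abs_le ((rho α a s - g) * cos (theta α a s))]
      have b3 : g * (1 - 1 / N * (s ^ 6 + s ^ 2)) ≤ g * cos (theta α a s) := by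
        apply mul_le_mul_of_nonneg_left _ hg0.le
        have : 2 / N * (s ^ 6 + s ^ 2) = 2 * (1 / N * (s ^ 6 + s ^ 2)) := by ring
        linarith
      have b4 := mul_le_mul_of_nonneg_left a7 (show 0 ≤ 1 / N by positivity)
      have e1 : 94 / N * exp (-(1/4) * s ^ 2) = 1 / N * (94 * exp (-(1/4) * s ^ 2)) := by ring
      have e2 : 1 / N * ((s ^ 6 + 3 / 2 * s ^ 2) * g) =
        g * (1 / N * (s ^ 6 + s ^ 2)) + g * (s ^ 2 / (2 * N)) := by field_simp; ring
      rw [e1]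
      nlinarith
    have h_itg := integral_mono (((hg1.const_mul 2).sub hst).sub (hg2.const_mul (94 / N))) hIc hlow
    rw [integral_sub' ((hg1.const_mul 2).sub hst) (hg2.const_mul (94 / N)),
      integral_sub' (hg1.const_mul 2) hst, integral_const_mul, integral_const_mul,
      integral_gaussian, integral_gaussian] at h_itg
    refine le_trans ?_ h_itg
    rw [show π / (1/2) = 2 * π by ring, show π / (1/4) = 2 * (2 * π) by ring,
      sqrt_mul (by norm_num : (0:ℝ) ≤ 2) (2 * π)]
    have h14 : √2 ≤ 1.5 := by rw [sqrt_le_iff]; norm_num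
    have : 94 / N * (√2 * √(2 * π)) ≤ 94 / N * (1.5 * √(2 * π)) := by gcongr
    have e : 94 / N * (1.5 * √(2 * π)) = 1 / N * (141 * √(2 * π)) := by ring
    have e2 : √(2 * π) * (1 + 2 / N) = √(2 * π) + 1 / N * (2 * √(2 * π)) := by ring
    nlinarith
  · have : ∫ s, rho α a s * cos (theta α a s) ≤ ∫ s, stud N s := by
      apply integral_mono hIc hst
      intro s
      have := mul_le_of_le_one_right (rho_pos α a s).le (cos_le_one (theta α a s))
      exact this.trans (hle s)
    have e2 : √(2 * π) * (1 + 2 / N) = √(2 * π) + 1 / N * (2 * √(2 * π)) := by ring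
    nlinarith

lemma laplace {α β a : ι → ℝ} {N ε B : ℝ} (hε : 0 < ε) (hε1 : ε < 1) (hN : 200 ≤ ε * N)
    (hβ : ∀ j, 0 ≤ β j) (k : ι)
    (hα : ∀ j, α j = β j + if j = k then 1 else 0) (h1 : ∑ j, β j * a j = 0)
    (hB : 0 < B) (h2 : ∑ j, β j * a j ^ 2 = B) (ha : ∀ j, N * a j ^ 2 ≤ B) :
    Integrable (rho α a) ∧ (1 - ε) * √(2 * π / B) ≤ ∫ s, rho α a s * cos (theta α a s) ∧
      ∫ s, rho α a s * cos (theta α a s) ≤ (1 + ε) * √(2 * π / B) := by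
  set t := √B with ht
  have ht0 : 0 < t := sqrt_pos.mpr hB
  have ht2 : t ^ 2 = B := sq_sqrt hB.le
  set a' : ι → ℝ := fun j => a j / t with ha'
  have er : ∀ s, rho α a s = rho α a' (s * t) := by
    intro s; unfold rho
    congr 2; apply Finset.sum_congr rfl; intro j _
    rw [ha']; simp only; rw [show s * t * (a j / t) = s * a j by field_simp]
  have et : ∀ s, theta α a s = theta α a' (s * t) := by
    intro s; unfold theta
    apply Finset.sum_congr rfl; intro j _
    rw [ha']; simp only; rw [show s * t * (a j / t) = s * a j by field_simp]
  have h := laplace_unit (α := α) (a := a') hε hε1 hN hβ k hα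
    (by simp only [ha', mul_div_assoc']; rw [← Finset.sum_div, h1, zero_div])
    (by simp only [ha', div_pow, mul_div_assoc']; rw [← Finset.sum_div, h2, ht2, div_self hB.ne'])
    (by intro j; simp only [ha', div_pow, mul_div_assoc']; rw [ht2, div_le_one hB]; exact ha j)
  have e1 : ∫ s, rho α a s * cos (theta α a s) = t⁻¹ * ∫ s, rho α a' s * cos (theta α a' s) := by
    simp_rw [er, et]
    have := Measure.integral_comp_mul_right (fun s => rho α a' s * cos (theta α a' s)) t
    rw [this, abs_of_pos (inv_pos.mpr ht0), smul_eq_mul]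
  have e2 : √(2 * π / B) = t⁻¹ * √(2 * π) := by
    rw [sqrt_div (by positivity)]; rw [← ht]; ring
  refine ⟨?_, ?_, ?_⟩
  · have : rho α a = fun s => rho α a' (s * t) := funext er
    rw [this]
    exact h.1.comp_mul_right' ht0.ne'
  · rw [e1, e2]
    have := mul_le_mul_of_nonneg_left h.2.1 (inv_pos.mpr ht0).le
    linarith
  · rw [e1, e2]
    have := mul_le_mul_of_nonneg_left h.2.2 (inv_pos.mpr ht0).le
    linarith

end laplace


lemma log_quad_lower {c t : ℝ} (hc : 0 < c) (ht : -1 < t) (h : 1 + t ≤ c ^ 2) (h1 : 1 ≤ c ^ 2) :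
    t ^ 2 / (2 * c ^ 2) ≤ t - log (1 + t) := by
  have hd : ∀ y, -1 < y → HasDerivAt (fun y : ℝ => y - log (1 + y) - y ^ 2 / (2 * c ^ 2))
      (y * (c ^ 2 - 1 - y) / ((1 + y) * c ^ 2)) y := by
    intro y hy
    have h1y : (1 + y) ≠ 0 := by linarith
    have := ((hasDerivAt_id y).sub (((hasDerivAt_id y).const_add 1).log h1y)).sub
      ((hasDerivAt_pow 2 y).div_const (2 * c ^ 2))
    convert! this using 1
    simp only [id]
    field_simp
    push_cast
    ring
  rcases le_total 0 t with h0 | h0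
  · have hm : MonotoneOn (fun y : ℝ => y - log (1 + y) - y ^ 2 / (2 * c ^ 2)) (Icc 0 t) := by
      apply monotoneOn_of_deriv_nonneg (convex_Icc 0 t)
        (fun y hy => (hd y (by linarith [hy.1])).continuousAt.continuousWithinAt)
      · intro y hy
        rw [interior_Icc] at hy
        exact (hd y (by linarith [hy.1])).differentiableAt.differentiableWithinAt
      · intro y hy
        rw [interior_Icc] at hy
        rw [(hd y (by linarith [hy.1])).deriv]
        have := hy.1; have := hy.2
        apply div_nonneg (mul_nonneg (by linarith) (by linarith)) 
        apply mul_nonneg (by linarith) (by positivity)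
    have := hm (left_mem_Icc.mpr h0) (right_mem_Icc.mpr h0) h0
    simp at this
    linarith
  · have hm : AntitoneOn (fun y : ℝ => y - log (1 + y) - y ^ 2 / (2 * c ^ 2)) (Icc t 0) := by
      apply antitoneOn_of_deriv_nonpos (convex_Icc t 0)
        (fun y hy => (hd y (by linarith [hy.1])).continuousAt.continuousWithinAt)
      · intro y hy
        rw [interior_Icc] at hy
        exact (hd y (by linarith [hy.1])).differentiableAt.differentiableWithinAt
      · intro y hy
        rw [interior_Icc] at hy
        rw [(hd y (by linarith [hy.1])).deriv]
        have := hy.1; have := hy.2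
        apply div_nonpos_of_nonpos_of_nonneg (mul_nonpos_of_nonpos_of_nonneg (by linarith) (by linarith)) 
        apply mul_nonneg (by linarith) (by positivity)
    have := hm (left_mem_Icc.mpr h0) (right_mem_Icc.mpr h0) h0
    simp at this
    linarith

lemma log_quad_upper {c t : ℝ} (hc : 0 < c) (ht : -1 < t) (h : c ^ 2 ≤ 1 + t) (h1 : c ^ 2 ≤ 1) :
    t - log (1 + t) ≤ t ^ 2 / (2 * c ^ 2) := by
  have hd : ∀ y, -1 < y → HasDerivAt (fun y : ℝ => y - log (1 + y) - y ^ 2 / (2 * c ^ 2))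
      (y * (c ^ 2 - 1 - y) / ((1 + y) * c ^ 2)) y := by
    intro y hy
    have h1y : (1 + y) ≠ 0 := by linarith
    have := ((hasDerivAt_id y).sub (((hasDerivAt_id y).const_add 1).log h1y)).sub
      ((hasDerivAt_pow 2 y).div_const (2 * c ^ 2))
    convert! this using 1
    simp only [id]
    field_simp
    push_cast
    ring
  rcases le_total 0 t with h0 | h0
  · have hm : AntitoneOn (fun y : ℝ => y - log (1 + y) - y ^ 2 / (2 * c ^ 2)) (Icc 0 t) := by
      apply antitoneOn_of_deriv_nonpos (convex_Icc 0 t)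
        (fun y hy => (hd y (by linarith [hy.1])).continuousAt.continuousWithinAt)
      · intro y hy
        rw [interior_Icc] at hy
        exact (hd y (by linarith [hy.1])).differentiableAt.differentiableWithinAt
      · intro y hy
        rw [interior_Icc] at hy
        rw [(hd y (by linarith [hy.1])).deriv]
        have := hy.1; have := hy.2
        apply div_nonpos_of_nonpos_of_nonneg (mul_nonpos_of_nonneg_of_nonpos (by linarith) (by linarith)) 
        apply mul_nonneg (by linarith) (by positivity)
    have := hm (left_mem_Icc.mpr h0) (right_mem_Icc.mpr h0) h0
    simp at this
    linarith
  · have hm : MonotoneOn (fun y : ℝ => y - log (1 + y) - y ^ 2 / (2 * c ^ 2)) (Icc t 0) := by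
      apply monotoneOn_of_deriv_nonneg (convex_Icc t 0)
        (fun y hy => (hd y (by linarith [hy.1])).continuousAt.continuousWithinAt)
      · intro y hy
        rw [interior_Icc] at hy
        exact (hd y (by linarith [hy.1])).differentiableAt.differentiableWithinAt
      · intro y hy
        rw [interior_Icc] at hy
        rw [(hd y (by linarith [hy.1])).deriv]
        have := hy.1; have := hy.2
        apply div_nonneg (mul_nonneg_of_nonpos_of_nonpos (by linarith) (by linarith)) 
        apply mul_nonneg (by linarith) (by positivity)
    have := hm (left_mem_Icc.mpr h0) (right_mem_Icc.mpr h0) h0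
    simp at this
    linarith

lemma hasDerivWithinAt_squeeze {L K U : ℝ → ℝ} {d x : ℝ} {S : Set ℝ}
    (hL : HasDerivWithinAt L d S x) (hU : HasDerivWithinAt U d S x)
    (hLx : L x = K x) (hUx : U x = K x)
    (hle : ∀ᶠ y in nhdsWithin x S, L y ≤ K y ∧ K y ≤ U y) : HasDerivWithinAt K d S x := by
  rw [hasDerivWithinAt_iff_isLittleO] at hL hU ⊢
  have h := hL.norm_left.add hU.norm_left
  refine Asymptotics.IsBigO.trans_isLittleO (Asymptotics.IsBigO.of_bound 1 ?_) h
  filter_upwards [hle] with y hy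
  rw [one_mul, hLx, hUx]
  simp only [smul_eq_mul, norm_eq_abs]
  rw [abs_of_nonneg (add_nonneg (abs_nonneg (L y - K x - (y - x) * d)) (abs_nonneg (U y - K x - (y - x) * d))), abs_le]
  constructor
  · have h1 := neg_abs_le (L y - K x - (y - x) * d)
    have h2 := abs_nonneg (U y - K x - (y - x) * d)
    linarith [hy.1]
  · have h1 := le_abs_self (U y - K x - (y - x) * d)
    have h2 := abs_nonneg (L y - K x - (y - x) * d)
    linarith [hy.2]

/-- dual certificate -/
def IsDual {ι : Type*} [Fintype ι] (p f : ι → ℝ) (u l : ℝ) : Prop :=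
  0 ≤ l ∧ (∀ j, l * (f j - u) < 1) ∧ ∑ j, p j * ((f j - u) / (1 - l * (f j - u))) = 0

/-- dual objective -/
def Lf {ι : Type*} [Fintype ι] (p f : ι → ℝ) (l u : ℝ) : ℝ := ∑ j, p j * log (1 - l * (f j - u))

/-- standing assumptions -/
structure Setup {ι : Type*} [Fintype ι] (p f : ι → ℝ) (b : ℝ) (i0 i1 : ι) : Prop where
  p_nonneg : ∀ j, 0 ≤ p j
  p_sum : ∑ j, p j = 1
  hb : 0 < b
  f_mem : ∀ j, f j ∈ Icc (0:ℝ) b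
  f0 : f i0 = 0
  f1 : f i1 = b
  p0 : 0 < p i0
  p1 : 0 < p i1

section dual
variable {ι : Type*} [Fintype ι] [DecidableEq ι] {p f : ι → ℝ} {b : ℝ} {i0 i1 : ι}

set_option linter.unusedSectionVars false

lemma Setup.pf_nonneg (S : Setup p f b i0 i1) : 0 ≤ ∑ j, f j * p j :=
  Finset.sum_nonneg fun j _ => mul_nonneg (S.f_mem j).1 (S.p_nonneg j)

lemma Setup.sum_sub (S : Setup p f b i0 i1) (u : ℝ) : ∑ j, p j * (f j - u) = ∑ j, f j * p j - u := by
  simp_rw [mul_sub]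
  rw [Finset.sum_sub_distrib, ← Finset.sum_mul, S.p_sum, one_mul]
  congr 1; apply Finset.sum_congr rfl; intros; ring

lemma Setup.exists_dual (S : Setup p f b i0 i1) {u : ℝ} (hu : ∑ j, f j * p j ≤ u) (hub : u < b) :
    ∃ l, IsDual p f u l := by
  have hu0 : 0 ≤ u := S.pf_nonneg.trans hu
  have hbu : 0 < b - u := by linarith
  have hp1 := S.p1
  set D := p i1 * (b - u) + u with hD
  have hD0 : 0 < D := by have := mul_pos hp1 hbu; linarith
  set δ := p i1 * (b - u) / D with hδ
  have hδ0 : 0 < δ := div_pos (mul_pos hp1 hbu) hD0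
  have hδ1 : δ ≤ 1 := by rw [hδ, div_le_one hD0]; linarith
  set l1 := (1 - δ) / (b - u) with hl1
  have hl10 : 0 ≤ l1 := div_nonneg (by linarith) hbu.le
  have hl1b : l1 * (b - u) = 1 - δ := by rw [hl1]; field_simp
  have hpos : ∀ l ∈ Icc 0 l1, ∀ j, l * (f j - u) < 1 := by
    intro l hl j
    have h1 : l * (f j - u) ≤ l * (b - u) :=
      mul_le_mul_of_nonneg_left (by linarith [(S.f_mem j).2]) hl.1
    have h2 : l * (b - u) ≤ l1 * (b - u) := mul_le_mul_of_nonneg_right hl.2 hbu.le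
    linarith
  set G : ℝ → ℝ := fun l => ∑ j, p j * ((f j - u) / (1 - l * (f j - u))) with hG
  have hGc : ContinuousOn G (Icc 0 l1) := by
    apply continuousOn_finsetSum
    intro j _
    apply ContinuousOn.mul continuousOn_const
    apply ContinuousOn.div continuousOn_const (by fun_prop)
    intro l hl
    have := hpos l hl j
    linarith
  have hG0 : G 0 ≤ 0 := by
    simp only [hG, zero_mul, sub_zero, div_one]
    rw [S.sum_sub]; linarith
  have hG1 : 0 ≤ G l1 := by
    have : ∑ j, (-(p j * u) + if j = i1 then u else 0) = 0 := by
      rw [Finset.sum_add_distrib, Finset.sum_neg_distrib, ← Finset.sum_mul, S.p_sum]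
      simp
    rw [← this]
    apply Finset.sum_le_sum
    intro j _
    have hr : 0 < 1 - l1 * (f j - u) := by linarith [hpos l1 ⟨hl10, le_rfl⟩ j]
    by_cases hj : j = i1
    · rw [if_pos hj, hj, S.f1, hl1b]
      have : p i1 * ((b - u) / (1 - (1 - δ))) = D := by
        rw [show 1 - (1 - δ) = δ by ring, hδ]; field_simp
      rw [this, hD]
      have := mul_nonneg hp1.le hu0
      have := mul_nonneg hp1.le hbu.le
      linarith
    · rw [if_neg hj, add_zero]
      have : -u ≤ (f j - u) / (1 - l1 * (f j - u)) := by
        rw [le_div_iff₀ hr]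
        have hfj := (S.f_mem j).1
        rcases le_total (f j) u with h | h
        · have : 0 ≤ u * (l1 * (u - f j)) := mul_nonneg hu0 (mul_nonneg hl10 (by linarith))
          nlinarith
        · have : 0 ≤ u * (1 - l1 * (f j - u)) := mul_nonneg hu0 hr.le
          nlinarith
      have := mul_le_mul_of_nonneg_left this (S.p_nonneg j)
      linarith
  obtain ⟨l, hl, hGl⟩ := intermediate_value_Icc hl10 hGc ⟨hG0, hG1⟩
  exact ⟨l, hl.1, hpos l hl, hGl⟩

lemma Setup.dual_pos (S : Setup p f b i0 i1) {u l : ℝ} (hu : ∑ j, f j * p j < u)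
    (h : IsDual p f u l) : 0 < l := by
  rcases h.1.lt_or_eq with h0 | h0
  · exact h0
  · exfalso
    have := h.2.2
    rw [← h0] at this
    simp only [zero_mul, sub_zero, div_one] at this
    rw [S.sum_sub] at this
    linarith

lemma Setup.dual_sum (S : Setup p f b i0 i1) {u l : ℝ} (h : IsDual p f u l) :
    ∑ j, p j / (1 - l * (f j - u)) = 1 := by
  have e : ∀ j, p j / (1 - l * (f j - u)) = p j + l * (p j * ((f j - u) / (1 - l * (f j - u)))) := by
    intro j
    have := h.2.1 j
    have : 1 - l * (f j - u) ≠ 0 := by linarith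
    field_simp
    ring
  simp_rw [e]
  rw [Finset.sum_add_distrib, ← Finset.mul_sum, h.2.2, S.p_sum]; ring

lemma Lf_hasDeriv (S : Setup p f b i0 i1) {u l : ℝ} (h : IsDual p f u l) :
    HasDerivAt (Lf p f l) l u := by
  have hd : ∀ j ∈ Finset.univ, HasDerivAt (fun v => p j * log (1 - l * (f j - v)))
      (l * (p j / (1 - l * (f j - u)))) u := by
    intro j _
    have h1 : HasDerivAt (fun v : ℝ => 1 - l * (f j - v)) l u := by
      have := (((hasDerivAt_id u).const_sub (f j)).const_mul l).const_sub 1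
      convert! this using 1
      simp
    have := h.2.1 j
    convert! (h1.log (by linarith)).const_mul (p j) using 1
    ring
  have := HasDerivAt.fun_sum hd
  rw [← Finset.mul_sum, S.dual_sum h, mul_one] at this
  exact this

/-- the two key inequalities comparing the rate with the variance -/
lemma Setup.key (S : Setup p f b i0 i1) {u l : ℝ} (hu0 : 0 ≤ u) (hub : u ≤ b) (h : IsDual p f u l) :
    l ^ 2 * (∑ j, p j * ((f j - u) / (1 - l * (f j - u))) ^ 2) * (1 - l * (b - u)) ^ 2
      ≤ 2 * Lf p f l u ∧
    2 * Lf p f l u ≤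
      l ^ 2 * (∑ j, p j * ((f j - u) / (1 - l * (f j - u))) ^ 2) * (1 + l * u) ^ 2 := by
  set r : ι → ℝ := fun j => 1 - l * (f j - u) with hr
  set t : ι → ℝ := fun j => l * ((f j - u) / r j) with ht
  have hr0 : ∀ j, 0 < r j := fun j => by have := h.2.1 j; simp only [hr]; linarith
  have h1t : ∀ j, 1 + t j = (r j)⁻¹ := by
    intro j
    have := (hr0 j).ne'
    have e : l * (f j - u) = 1 - r j := by simp only [hr]; ring
    simp only [ht]
    rw [mul_div_assoc', e]
    field_simp; ring
  have hL : 2 * Lf p f l u = ∑ j, p j * (2 * (t j - log (1 + t j))) := by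
    have : ∑ j, p j * t j = 0 := by
      have e : ∀ j, p j * t j = l * (p j * ((f j - u) / (1 - l * (f j - u)))) := by
        intro j; simp only [ht, hr]; ring
      simp_rw [e]; rw [← Finset.mul_sum, h.2.2, mul_zero]
    have e : ∀ j, p j * (2 * (t j - log (1 + t j))) = 2 * (p j * t j) + 2 * (p j * log (r j)) := by
      intro j; rw [h1t, log_inv]; ring
    simp_rw [e]
    rw [Finset.sum_add_distrib, ← Finset.mul_sum, ← Finset.mul_sum, this, Lf]; ring
  have hsum : ∀ c : ℝ, l ^ 2 * (∑ j, p j * ((f j - u) / (1 - l * (f j - u))) ^ 2) * c ^ 2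
      = ∑ j, p j * (t j ^ 2 * c ^ 2) := by
    intro c
    rw [Finset.mul_sum, Finset.sum_mul]
    apply Finset.sum_congr rfl; intro j _
    simp only [ht, hr]; ring
  have hr1 : r i1 = 1 - l * (b - u) := by simp only [hr, S.f1]
  have hr0' : r i0 = 1 + l * u := by simp only [hr, S.f0]; ring
  have hl := h.1
  have hr1le : r i1 ≤ 1 := by rw [hr1]; have := mul_nonneg hl (sub_nonneg.mpr hub); linarith
  have hr0ge : 1 ≤ r i0 := by rw [hr0']; have := mul_nonneg hl hu0; linarith
  have hrj1 : ∀ j, r i1 ≤ r j := by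
    intro j; simp only [hr, S.f1]
    have := mul_le_mul_of_nonneg_left (S.f_mem j).2 hl
    linarith
  have hrj0 : ∀ j, r j ≤ r i0 := by
    intro j; simp only [hr, S.f0]
    have := mul_le_mul_of_nonneg_left (S.f_mem j).1 hl
    linarith
  rw [← hr1, ← hr0', hsum, hsum, hL]
  have ht1 : ∀ j, -1 < t j := by
    intro j
    have := h1t j; have := inv_pos.mpr (hr0 j); linarith
  constructor
  · apply Finset.sum_le_sum
    intro j _
    apply mul_le_mul_of_nonneg_left _ (S.p_nonneg j)
    have hc : 1 ≤ (r i1)⁻¹ := (one_le_inv₀ (hr0 i1)).mpr hr1le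
    have := log_quad_lower (c := (r i1)⁻¹) (inv_pos.mpr (hr0 i1)) (ht1 j) (by
      rw [h1t]
      have : (r j)⁻¹ ≤ (r i1)⁻¹ := inv_anti₀ (hr0 i1) (hrj1 j)
      nlinarith) (by nlinarith)
    have e : t j ^ 2 / (2 * (r i1)⁻¹ ^ 2) = t j ^ 2 * r i1 ^ 2 / 2 := by
      have := (hr0 i1).ne'
      field_simp
    rw [e] at this
    linarith
  · apply Finset.sum_le_sum
    intro j _
    apply mul_le_mul_of_nonneg_left _ (S.p_nonneg j)
    have hc0 : 0 < (r i0)⁻¹ := inv_pos.mpr (hr0 i0)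
    have hc : (r i0)⁻¹ ≤ 1 := inv_le_one_of_one_le₀ hr0ge
    have := log_quad_upper (c := (r i0)⁻¹) (inv_pos.mpr (hr0 i0)) (ht1 j) (by
      rw [h1t]
      have : (r i0)⁻¹ ≤ (r j)⁻¹ := inv_anti₀ (hr0 j) (hrj0 j)
      nlinarith) (by nlinarith)
    have e : t j ^ 2 / (2 * (r i0)⁻¹ ^ 2) = t j ^ 2 * r i0 ^ 2 / 2 := by
      have := (hr0 i0).ne'
      field_simp
    rw [e] at this
    linarith

end dual

section kinf
variable {m : ℕ} {p f : Fin (m + 1) → ℝ} {b : ℝ} {i0 i1 : Fin (m + 1)}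

lemma weak_dual (S : Setup p f b i0 i1) {u l : ℝ} (hl : ∀ j, l * (f j - u) < 1)
    {q : Fin (m + 1) → ℝ} (hq : q ∈ stdSimplex ℝ (Fin (m + 1))) (hqp : ∀ i, q i = 0 → p i = 0)
    (hqf : ∑ i, f i * q i = u) : Lf p f l u ≤ klReal p q := by
  have h0 : ∑ j, (p j - q j * (1 - l * (f j - u))) = 0 := by
    have e : ∀ j, p j - q j * (1 - l * (f j - u)) = p j - q j + l * (f j * q j) - l * u * q j := by
      intro j; ring
    simp_rw [e]
    rw [Finset.sum_sub_distrib, Finset.sum_add_distrib, Finset.sum_sub_distrib, ← Finset.mul_sum,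
      ← Finset.mul_sum, hqf, S.p_sum, hq.2]; ring
  have : ∑ j, (p j - q j * (1 - l * (f j - u))) ≤ klReal p q - Lf p f l u := by
    unfold klReal Lf
    rw [← Finset.sum_sub_distrib]
    apply Finset.sum_le_sum
    intro j _
    have hr : 0 < 1 - l * (f j - u) := by linarith [hl j]
    have hq0 := hq.1 j
    by_cases hp : p j = 0
    · simp only [hp, if_true, zero_mul, zero_sub, sub_zero]
      have := mul_nonneg hq0 hr.le
      linarith
    · rw [if_neg hp]
      have hp0 : 0 < p j := lt_of_le_of_ne (S.p_nonneg j) (Ne.symm hp)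
      have hq1 : 0 < q j := lt_of_le_of_ne hq0 (fun h => hp (hqp j h.symm))
      have h1 := log_le_sub_one_of_pos (show 0 < q j * (1 - l * (f j - u)) / p j by positivity)
      rw [log_div (by positivity) hp, log_mul hq1.ne' hr.ne'] at h1
      rw [log_div hp hq1.ne']
      have h2 := mul_le_mul_of_nonneg_left h1 hp0.le
      have e : p j * (q j * (1 - l * (f j - u)) / p j - 1) = q j * (1 - l * (f j - u)) - p j := by
        field_simp
      rw [e] at h2
      linarith
  linarith

lemma kinf_le (S : Setup p f b i0 i1) {u : ℝ}
    {q : Fin (m + 1) → ℝ} (hq : q ∈ stdSimplex ℝ (Fin (m + 1))) (hqp : ∀ i, q i = 0 → p i = 0)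
    (hqf : ∑ i, f i * q i = u) : Kinfstar p u f ≤ klReal p q := by
  apply csInf_le
  · refine ⟨Lf p f 0 u, ?_⟩
    rintro x ⟨q, h1, h2, h3, rfl⟩
    exact weak_dual S (fun j => by simp) h1 h2 h3
  · exact ⟨q, hq, hqp, hqf, rfl⟩

lemma dual_q (S : Setup p f b i0 i1) {u l : ℝ} (h : IsDual p f u l) :
    (fun j => p j / (1 - l * (f j - u))) ∈ stdSimplex ℝ (Fin (m + 1)) ∧
    (∀ i, p i / (1 - l * (f i - u)) = 0 → p i = 0) ∧
    ∑ i, f i * (p i / (1 - l * (f i - u))) = u ∧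
    klReal p (fun j => p j / (1 - l * (f j - u))) = Lf p f l u := by
  have hr0 : ∀ j, 0 < 1 - l * (f j - u) := fun j => by have := h.2.1 j; linarith
  refine ⟨⟨fun j => div_nonneg (S.p_nonneg j) (hr0 j).le, S.dual_sum h⟩, ?_, ?_, ?_⟩
  · intro i hi
    rcases div_eq_zero_iff.mp hi with h | h
    · exact h
    · exact absurd h (hr0 i).ne'
  · have e : ∀ j, f j * (p j / (1 - l * (f j - u))) =
        p j * ((f j - u) / (1 - l * (f j - u))) + u * (p j / (1 - l * (f j - u))) := by
      intro j; ring
    simp_rw [e]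
    rw [Finset.sum_add_distrib, h.2.2, ← Finset.mul_sum, S.dual_sum h]; ring
  · unfold klReal Lf
    apply Finset.sum_congr rfl
    intro j _
    by_cases hp : p j = 0
    · simp [hp]
    · rw [if_neg hp]
      congr 2
      have := (hr0 j).ne'
      field_simp

lemma le_kinf (S : Setup p f b i0 i1) {u l : ℝ} (hu : ∑ j, f j * p j ≤ u) (hub : u < b)
    (hl : ∀ j, l * (f j - u) < 1) : Lf p f l u ≤ Kinfstar p u f := by
  obtain ⟨l', h'⟩ := S.exists_dual hu hub
  have hq := dual_q S h'
  apply le_csInf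
  · exact ⟨_, _, hq.1, hq.2.1, hq.2.2.1, rfl⟩
  · rintro x ⟨q, h1, h2, h3, rfl⟩
    exact weak_dual S hl h1 h2 h3

lemma kinf_eq (S : Setup p f b i0 i1) {u l : ℝ} (hu : ∑ j, f j * p j ≤ u) (hub : u < b)
    (h : IsDual p f u l) : Kinfstar p u f = Lf p f l u := by
  have hq := dual_q S h
  apply le_antisymm
  · rw [← hq.2.2.2]
    exact kinf_le S hq.1 hq.2.1 hq.2.2.1
  · exact le_kinf S hu hub h.2.1

lemma kinf_hasDeriv (S : Setup p f b i0 i1) {u l : ℝ} (hu : ∑ j, f j * p j ≤ u) (hub : u < b)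
    (h : IsDual p f u l) :
    HasDerivWithinAt (fun v => Kinfstar p v f) l (Ici (∑ j, f j * p j)) u := by
  have hr0 : ∀ j, 0 < 1 - l * (f j - u) := fun j => by have := h.2.1 j; linarith
  have hb := S.hb
  have h01 : i0 ≠ i1 := by
    intro h; have := S.f0; rw [h, S.f1] at this; linarith
  set q : Fin (m + 1) → ℝ := fun j => p j / (1 - l * (f j - u)) with hq
  have hqs := dual_q S h
  set d : Fin (m + 1) → ℝ := fun j => (if j = i1 then 1 / b else 0) - (if j = i0 then 1 / b else 0) with hd
  set Q : ℝ → Fin (m + 1) → ℝ := fun v j => q j + (v - u) * d j with hQ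
  have hq0 : ∀ j, 0 < p j → 0 < q j := fun j hj => div_pos hj (hr0 j)
  have hd0 : ∀ j, p j = 0 → d j = 0 := by
    intro j hj
    have a1 : j ≠ i1 := by rintro rfl; linarith [S.p1]
    have a0 : j ≠ i0 := by rintro rfl; linarith [S.p0]
    simp [hd, a1, a0]
  have hdsum : ∑ j, d j = 0 := by
    simp only [hd]; rw [Finset.sum_sub_distrib]; simp
  have hdf : ∑ j, f j * d j = 1 := by
    simp only [hd, mul_sub]; rw [Finset.sum_sub_distrib]
    simp [S.f0, S.f1]; field_simp
  have hUd : HasDerivAt (fun v => klReal p (Q v)) l u := by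
    unfold klReal
    have hj : ∀ j ∈ Finset.univ, HasDerivAt (fun v => if p j = 0 then 0 else p j * log (p j / Q v j))
        (-(1 - l * (f j - u)) * d j) u := by
      intro j _
      by_cases hp : p j = 0
      · simp only [hp, if_true, hd0 j hp, mul_zero]
        exact hasDerivAt_const _ _
      · simp only [hp, if_false]
        have hp0 : 0 < p j := lt_of_le_of_ne (S.p_nonneg j) (Ne.symm hp)
        have h1 : HasDerivAt (fun v => Q v j) (d j) u := by
          have := (((hasDerivAt_id u).sub_const u).mul_const (d j)).const_add (q j)
          convert! this using 1
          ring
        have hQu : Q u j = q j := by simp [hQ]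
        have h2 : HasDerivAt (fun v => p j * (log (p j) - log (Q v j)))
          (p j * (-(d j / Q u j))) u := by
          have := ((h1.log (by rw [hQu]; exact (hq0 j hp0).ne')).const_sub (log (p j))).const_mul (p j)
          exact this
        have h3 : p j * (-(d j / Q u j)) = -(1 - l * (f j - u)) * d j := by
          rw [hQu]; simp only [hq]
          have := (hr0 j).ne'
          field_simp
        rw [← h3]
        refine h2.congr_of_eventuallyEq ?_
        have hc : ∀ᶠ v in nhds u, 0 < Q v j :=
          h1.continuousAt.eventually_const_lt (by simp only [hQu]; exact hq0 j hp0)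
        filter_upwards [hc] with v hv
        rw [log_div hp hv.ne']
    have := HasDerivAt.fun_sum hj
    convert! this using 1
    have e : ∀ j, -(1 - l * (f j - u)) * d j = l * (f j * d j) - (1 + l * u) * d j := by intro j; ring
    simp_rw [e]
    rw [Finset.sum_sub_distrib, ← Finset.mul_sum, ← Finset.mul_sum, hdf, hdsum]; ring
  refine hasDerivWithinAt_squeeze (Lf_hasDeriv S h).hasDerivWithinAt hUd.hasDerivWithinAt
    (kinf_eq S hu hub h).symm ?_ ?_
  · rw [kinf_eq S hu hub h, ← hqs.2.2.2]
    congr 1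
    ext j; simp [hQ, hq]
  · have hub' : ∀ᶠ v in nhdsWithin u (Ici (∑ j, f j * p j)), v < b :=
      nhdsWithin_le_nhds (Iio_mem_nhds hub)
    have hlv : ∀ᶠ v in nhdsWithin u (Ici (∑ j, f j * p j)), ∀ j, l * (f j - v) < 1 := by
      apply nhdsWithin_le_nhds
      refine Filter.eventually_all.mpr ?_
      intro j
      have : ContinuousAt (fun v => l * (f j - v)) u := by fun_prop
      exact this.eventually_lt_const (h.2.1 j)
    have hQv : ∀ᶠ v in nhdsWithin u (Ici (∑ j, f j * p j)), ∀ j, 0 < p j → 0 < Q v j := by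
      apply nhdsWithin_le_nhds
      refine Filter.eventually_all.mpr ?_
      intro j
      by_cases hj : 0 < p j
      · have : ContinuousAt (fun v => Q v j) u := by simp only [hQ]; fun_prop
        filter_upwards [this.eventually_const_lt (u := 0) (by simp only [hQ]; simpa using hq0 j hj)] with v hv _
        exact hv
      · filter_upwards with v h; exact absurd h hj
    filter_upwards [hub', hlv, hQv, self_mem_nhdsWithin] with v h1 h2 h3 h4
    refine ⟨le_kinf S h4 h1 h2, kinf_le S ⟨?_, ?_⟩ ?_ ?_⟩
    · intro j
      rcases (S.p_nonneg j).lt_or_eq with hp | hp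
      · exact (h3 j hp).le
      · simp [hQ, hq, hd0 j hp.symm, ← hp]
    · simp only [hQ]
      rw [Finset.sum_add_distrib, ← Finset.mul_sum, hdsum, S.dual_sum h]; ring
    · intro j hj
      by_contra hp
      have := h3 j (lt_of_le_of_ne (S.p_nonneg j) (Ne.symm hp))
      linarith
    · simp only [hQ, mul_add]
      have e : ∀ j, f j * ((v - u) * d j) = (v - u) * (f j * d j) := by intro j; ring
      simp_rw [e]
      rw [Finset.sum_add_distrib, ← Finset.mul_sum, hdf, hqs.2.2.1]; ring

lemma kinf_mean (S : Setup p f b i0 i1) (hub : ∑ j, f j * p j < b) :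
    Kinfstar p (∑ j, f j * p j) f = 0 := by
  have h : IsDual p f (∑ j, f j * p j) 0 := by
    refine ⟨le_rfl, by simp, ?_⟩
    simp only [zero_mul, sub_zero, div_one]
    rw [S.sum_sub]; ring
  rw [kinf_eq S le_rfl hub h]
  simp [Lf]

lemma pf_lt (S : Setup p f b i0 i1) : ∑ j, f j * p j < b := by
  have h1 : ∑ j, f j * p j < ∑ j, b * p j := by
    apply Finset.sum_lt_sum
    · intro j _; exact mul_le_mul_of_nonneg_right (S.f_mem j).2 (S.p_nonneg j)
    · refine ⟨i0, Finset.mem_univ _, ?_⟩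
      rw [S.f0]
      exact mul_lt_mul_of_pos_right S.hb S.p0
  rwa [← Finset.mul_sum, S.p_sum, mul_one] at h1

lemma kinf_tendsto (S : Setup p f b i0 i1) :
    Filter.Tendsto (fun u => Kinfstar p u f) (nhdsWithin b (Iio b)) Filter.atTop := by
  have hev : ∀ᶠ u in nhdsWithin b (Iio b), -log 2 + p i0 * log (1 / (2 * (b - u)) * u) ≤ Kinfstar p u f := by
    have h1 : ∀ᶠ u in nhdsWithin b (Iio b), ∑ j, f j * p j < u :=
      nhdsWithin_le_nhds (Ioi_mem_nhds (pf_lt S))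
    filter_upwards [h1, self_mem_nhdsWithin] with u hu hub
    have hub : u < b := hub
    have hbu : 0 < b - u := by linarith
    have hu0 : 0 < u := lt_of_le_of_lt S.pf_nonneg hu
    have hlb : ∀ j, 1 / (2 * (b - u)) * (f j - u) ≤ 1 / 2 := by
      intro j
      have : 1 / (2 * (b - u)) * (f j - u) ≤ 1 / (2 * (b - u)) * (b - u) := by
        apply mul_le_mul_of_nonneg_left _ (by positivity)
        linarith [(S.f_mem j).2]
      have e : 1 / (2 * (b - u)) * (b - u) = 1 / 2 := by field_simp
      linarith
    refine le_trans ?_ (le_kinf S (l := 1 / (2 * (b - u))) hu.le hub (fun j => by linarith [hlb j]))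
    unfold Lf
    have e : -log 2 + p i0 * log (1 / (2 * (b - u)) * u) =
      ∑ j, (p j * (-log 2) + if j = i0 then p i0 * log (1 / (2 * (b - u)) * u) else 0) := by
      rw [Finset.sum_add_distrib, ← Finset.sum_mul, S.p_sum]; simp
    rw [e]
    apply Finset.sum_le_sum
    intro j _
    have hl2 : -log 2 = log (1/2) := by rw [one_div, log_inv]
    have hlog2 : 0 < log 2 := log_pos (by norm_num)
    have hpj := S.p_nonneg j
    split_ifs with hj
    · subst hj
      rw [S.f0]
      have : log (1 / (2 * (b - u)) * u) ≤ log (1 - 1 / (2 * (b - u)) * (0 - u)) := by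
        apply log_le_log (by positivity)
        linarith
      nlinarith [mul_le_mul_of_nonneg_left this hpj, mul_nonneg hpj hlog2.le]
    · rw [add_zero, hl2]
      apply mul_le_mul_of_nonneg_left _ hpj
      apply log_le_log (by norm_num)
      linarith [hlb j]
  refine Filter.tendsto_atTop_mono' _ hev ?_
  apply Filter.tendsto_atTop_add_const_left
  apply Filter.Tendsto.const_mul_atTop S.p0
  apply tendsto_log_atTop.comp
  have h1 : Filter.Tendsto (fun u : ℝ => u) (nhdsWithin b (Iio b)) (nhds b) := nhdsWithin_le_nhds
  apply Filter.Tendsto.atTop_mul_pos S.hb _ h1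
  simp_rw [one_div]
  apply Filter.Tendsto.inv_tendsto_nhdsGT_zero
  rw [tendsto_nhdsWithin_iff]
  constructor
  · have : Filter.Tendsto (fun u : ℝ => 2 * (b - u)) (nhds b) (nhds (2 * (b - b))) :=
      (Continuous.tendsto (by fun_prop) b)
    rw [sub_self, mul_zero] at this
    exact this.mono_left nhdsWithin_le_nhds
  · filter_upwards [self_mem_nhdsWithin] with u hu
    have : u < b := hu
    simp; linarith

end kinf


/-- Gaussian upper tail -/
def Gt (x : ℝ) : ℝ := (gaussianReal 0 1).real (Ici x)

instance gauss_noAtoms : NullSingletonClass (gaussianReal 0 1) :=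
  nullSingletonClass_gaussianReal one_ne_zero

lemma Gt_eq_cdf (x : ℝ) : Gt x = 1 - cdf (gaussianReal 0 1) x := by
  rw [cdf_eq_real, Gt, measureReal_congr Ioi_ae_eq_Ici.symm, ← compl_Iic,
    probReal_compl_eq_one_sub measurableSet_Iic]

lemma Gt_nonneg (x : ℝ) : 0 ≤ Gt x := measureReal_nonneg
lemma Gt_le_one (x : ℝ) : Gt x ≤ 1 := measureReal_le_one

lemma Gt_anti : Antitone Gt := fun x y h => by
  rw [Gt_eq_cdf, Gt_eq_cdf]
  have := monotone_cdf (gaussianReal 0 1) h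
  linarith

lemma Gt_top : Filter.Tendsto Gt Filter.atTop (nhds 0) := by
  have := (tendsto_cdf_atTop (gaussianReal 0 1)).const_sub 1
  rw [sub_self] at this
  exact this.congr fun x => (Gt_eq_cdf x).symm

lemma Gt_bot : Filter.Tendsto Gt Filter.atBot (nhds 1) := by
  have := (tendsto_cdf_atBot (gaussianReal 0 1)).const_sub 1
  rw [sub_zero] at this
  exact this.congr fun x => (Gt_eq_cdf x).symm

lemma Gt_neg (x : ℝ) : Gt (-x) = 1 - Gt x := by
  have h : (gaussianReal 0 1).map (fun x => -x) = gaussianReal 0 1 := by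
    rw [gaussianReal_map_neg]; simp
  rw [Gt_eq_cdf x, sub_sub_cancel, Gt, cdf_eq_real]
  conv_lhs => rw [← h]
  rw [map_measureReal_apply measurable_neg measurableSet_Ici]
  congr 1
  ext y; simp

lemma Gt_zero : Gt 0 = 1 / 2 := by
  have := Gt_neg 0
  rw [neg_zero] at this
  linarith

lemma Gt_hasDeriv (x : ℝ) : HasDerivAt Gt (-((√(2 * π))⁻¹ * exp (-x ^ 2 / 2))) x := by
  have hc : Continuous (fun y : ℝ => (√(2 * π))⁻¹ * exp (-y ^ 2 / 2)) := by fun_prop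
  have e : ∀ y, gaussianPDFReal 0 1 y = (√(2 * π))⁻¹ * exp (-y ^ 2 / 2) := by
    intro y; simp [gaussianPDFReal]
  have hi : Integrable (fun y : ℝ => (√(2 * π))⁻¹ * exp (-y ^ 2 / 2)) :=
    (integrable_gaussianPDFReal 0 1).congr (Filter.Eventually.of_forall e)
  have h1 : ∀ y, Gt y = 1 - ∫ t in Iic y, (√(2 * π))⁻¹ * exp (-t ^ 2 / 2) := by
    intro y
    rw [Gt_eq_cdf, cdf_eq_real, measureReal_def, gaussianReal_apply_eq_integral _ one_ne_zero,
      ENNReal.toReal_ofReal]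
    · simp_rw [e]
    · exact integral_nonneg fun t => gaussianPDFReal_nonneg 0 1 t
  have h2 : Gt = fun y => Gt 0 - ∫ t in (0:ℝ)..y, (√(2 * π))⁻¹ * exp (-t ^ 2 / 2) := by
    ext y
    rw [h1 y, h1 0, ← intervalIntegral.integral_Iic_sub_Iic hi.integrableOn hi.integrableOn]
    ring
  rw [h2]
  exact (intervalIntegral.integral_hasDerivAt_right (hc.intervalIntegrable _ _)
      hc.stronglyMeasurable.stronglyMeasurableAtFilter hc.continuousAt).const_sub _

lemma Gt_continuous : Continuous Gt :=
  continuous_iff_continuousAt.mpr fun x => (Gt_hasDeriv x).continuousAt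

/-- smoothing identity for the kernel -/
lemma kern_int {η s Y : ℝ} (hη : 0 < η) (hs : 0 < s) (μ b : ℝ) :
    ∫ u in μ..b, kern η (Y - u * s) = s⁻¹ * (Gt ((Y - b * s) / η) - Gt ((Y - μ * s) / η)) := by
  have hd : ∀ u ∈ uIcc μ b, HasDerivAt (fun u => s⁻¹ * Gt ((Y - u * s) / η)) (kern η (Y - u * s)) u := by
    intro u _
    have h1 : HasDerivAt (fun u => (Y - u * s) / η) (-s / η) u := by
      have := (((hasDerivAt_id u).mul_const s).const_sub Y).div_const η
      convert! this using 1
      ring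
    have := ((Gt_hasDeriv ((Y - u * s) / η)).comp u h1).const_mul s⁻¹
    convert! this using 1
    unfold kern
    field_simp
  rw [intervalIntegral.integral_eq_sub_of_hasDerivAt hd]
  · ring
  · apply Continuous.intervalIntegrable
    unfold kern; fun_prop


lemma gamP_density {ι : Type*} [Fintype ι] {α : ι → ℝ} (hα : ∀ j, 0 < α j) :
    gamP α = volume.withDensity (fun x => ∏ j, gammaPDF (α j) 1 (x j)) := by
  have hprob : ∀ j, IsProbabilityMeasure (gammaMeasure (α j) 1) :=
    fun j => isProbabilityMeasure_gammaMeasure (hα j) one_pos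
  have hm : ∀ j, Measurable (gammaPDF (α j) 1) := fun j => by unfold gammaPDF; fun_prop
  have h_itg : ∀ j, Integrable (gammaPDFReal (α j) 1) := by
    intro j
    refine ⟨(measurable_gammaPDFReal (α j) 1).aestronglyMeasurable, ?_⟩
    rw [hasFiniteIntegral_iff_ofReal (Filter.Eventually.of_forall
      fun x => gammaPDFReal_nonneg (hα j) one_pos x)]
    have := lintegral_gammaPDF_eq_one (hα j) one_pos
    unfold gammaPDF at this
    rw [this]; exact ENNReal.one_lt_top
  unfold gamP
  apply Measure.pi_eq
  intro s hs
  rw [withDensity_apply _ (MeasurableSet.univ_pi hs), volume_pi, Measure.restrict_pi_pi]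
  have e1 : ∀ x : ι → ℝ, ∏ j, gammaPDF (α j) 1 (x j) = ENNReal.ofReal (∏ j, gammaPDFReal (α j) 1 (x j)) := by
    intro x
    rw [ENNReal.ofReal_prod_of_nonneg fun j _ => gammaPDFReal_nonneg (hα j) one_pos _]
    rfl
  simp_rw [e1]
  rw [← ofReal_integral_eq_lintegral_ofReal, integral_fintype_prod_eq_prod,
    ENNReal.ofReal_prod_of_nonneg]
  · apply Finset.prod_congr rfl
    intro j _
    rw [gammaMeasure, withDensity_apply _ (hs j), ofReal_integral_eq_lintegral_ofReal
      (h_itg j).integrableOn (Filter.Eventually.of_forall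
      fun x => gammaPDFReal_nonneg (hα j) one_pos x)]
    rfl
  · intro j _
    exact integral_nonneg fun x => gammaPDFReal_nonneg (hα j) one_pos x
  · exact Integrable.fintype_prod (fun j => (h_itg j).integrableOn)
  · exact Filter.Eventually.of_forall fun x =>
      Finset.prod_nonneg fun j _ => gammaPDFReal_nonneg (hα j) one_pos _

lemma gamP_pos {ι : Type*} [Fintype ι] {α : ι → ℝ} (hα : ∀ j, 0 < α j) :
    ∀ᵐ x ∂gamP α, ∀ j, 0 < x j := by
  have hprob : ∀ j, IsProbabilityMeasure (gammaMeasure (α j) 1) :=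
    fun j => isProbabilityMeasure_gammaMeasure (hα j) one_pos
  rw [ae_all_iff]
  intro j
  have h1 : ∀ᵐ y ∂gammaMeasure (α j) 1, 0 < y := by
    have : gammaMeasure (α j) 1 (Iic 0) = 0 := by
      rw [gammaMeasure, withDensity_apply _ measurableSet_Iic]
      rw [setLIntegral_congr Iio_ae_eq_Iic.symm]
      exact lintegral_gammaPDF_of_nonpos le_rfl
    rw [ae_iff]
    convert this using 2
    ext y; simp
  exact (measurePreserving_eval (fun j => gammaMeasure (α j) 1) j).quasiMeasurePreserving.ae h1

lemma gamP_hyper {ι : Type*} [Fintype ι] {α : ι → ℝ} (hα : ∀ j, 0 < α j) {c : ι → ℝ} {i : ι}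
    (hc : c i ≠ 0) : ∀ᵐ x ∂gamP α, ∑ j, c j * x j ≠ 0 := by
  classical
  rw [gamP_density hα]
  refine (withDensity_absolutelyContinuous _ _).ae_le ?_
  change ∀ᵐ x : ι → ℝ, ∑ j, c j * x j ≠ 0
  let φ : (ι → ℝ) →ₗ[ℝ] ℝ := Fintype.linearCombination ℝ c
  have hφ : ∀ x, φ x = ∑ j, c j * x j := by
    intro x; simp only [φ, Fintype.linearCombination_apply, smul_eq_mul]
    apply Finset.sum_congr rfl; intros; ring
  have := Measure.addHaar_submodule volume (LinearMap.ker φ) (by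
    intro h
    have h2 : Pi.single i 1 ∈ LinearMap.ker φ := by rw [h]; trivial
    rw [LinearMap.mem_ker, hφ] at h2
    simp [Pi.single_apply] at h2
    exact hc h2)
  rw [ae_iff]
  convert this using 2
  ext x
  simp [hφ]

section dir
variable {m : ℕ} {α : Fin (m + 1) → ℝ}

lemma pdf_scale (hα : ∀ j, 0 < α j) {s : ℝ} (hs : 0 < s) (w : Fin m → ℝ) :
    ∏ j, gammaPDFReal (α j) 1 ((Fin.snoc (s • w) (s - ∑ i, s * w i) : Fin (m + 1) → ℝ) j) =
      (∏ j, Gamma (α j))⁻¹ * (s ^ (∑ j, α j - (m + 1)) * exp (-s)) * dirichletDensity m α w := by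
  have e : s - ∑ i, s * w i = s * (1 - ∑ i, w i) := by rw [← Finset.mul_sum]; ring
  rw [e, Fin.prod_univ_castSucc]
  simp only [Fin.snoc_castSucc, Fin.snoc_last]
  unfold dirichletDensity
  by_cases hw : (∀ i, 0 ≤ w i) ∧ ∑ i, w i ≤ 1
  · rw [indicator_of_mem (by exact hw)]
    have hpdf : ∀ a y : ℝ, 0 ≤ y → gammaPDFReal a 1 (s * y) =
        (Gamma a)⁻¹ * (s ^ (a - 1) * exp (-(s * y))) * y ^ (a - 1) := by
      intro a y hy
      rw [gammaPDFReal, if_pos (mul_nonneg hs.le hy), mul_rpow hs.le hy, one_rpow, one_mul, one_div]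
      ring
    have h1 : ∀ i : Fin m, gammaPDFReal (α i.castSucc) 1 ((s • w) i) =
        (Gamma (α i.castSucc))⁻¹ * (s ^ (α i.castSucc - 1) * exp (-(s * w i))) * w i ^ (α i.castSucc - 1) := by
      intro i; exact hpdf _ _ (hw.1 i)
    simp_rw [h1]
    rw [hpdf _ _ (by linarith [hw.2])]
    simp_rw [Finset.prod_mul_distrib]
    rw [Fin.prod_univ_castSucc (fun j => Gamma (α j)), mul_inv, ← Finset.prod_inv_distrib]
    have e2 : s ^ (∑ j, α j - (m + 1)) = (∏ i : Fin m, s ^ (α i.castSucc - 1)) * s ^ (α (Fin.last m) - 1) := by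
      rw [← rpow_sum_of_pos hs, ← rpow_add hs]
      congr 1
      rw [Fin.sum_univ_castSucc, Finset.sum_sub_distrib]
      simp; ring
    have e3 : exp (-s) = (∏ i : Fin m, exp (-(s * w i))) * exp (-(s * (1 - ∑ i, w i))) := by
      rw [← exp_sum, ← exp_add]
      congr 1
      rw [Finset.sum_neg_distrib, ← Finset.mul_sum]; ring
    rw [e2, e3]
    ring
  · rw [indicator_of_notMem (by exact hw), mul_zero]
    rw [not_and_or] at hw
    rcases hw with h | h
    · push Not at h
      obtain ⟨i, hi⟩ := h
      have : gammaPDFReal (α i.castSucc) 1 ((s • w) i) = 0 := by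
        rw [gammaPDFReal, if_neg]
        simp only [Pi.smul_apply, smul_eq_mul, not_le]
        exact mul_neg_of_pos_of_neg hs hi
      rw [Finset.prod_eq_zero (Finset.mem_univ i) this, zero_mul]
    · have : gammaPDFReal (α (Fin.last m)) 1 (s * (1 - ∑ i, w i)) = 0 := by
        rw [gammaPDFReal, if_neg]
        simp only [not_le]
        exact mul_neg_of_pos_of_neg hs (by push Not at h; linarith)
      rw [this, mul_zero]

lemma pdf_neg {s : ℝ} (hs : s < 0) (v : Fin m → ℝ) :
    ∏ j, gammaPDFReal (α j) 1 ((Fin.snoc v (s - ∑ i, v i) : Fin (m + 1) → ℝ) j) = 0 := by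
  by_cases h : ∀ i, 0 ≤ v i
  · apply Finset.prod_eq_zero (Finset.mem_univ (Fin.last m))
    rw [Fin.snoc_last, gammaPDFReal, if_neg]
    have := Finset.sum_nonneg fun i (_ : i ∈ Finset.univ) => h i
    linarith
  · push Not at h
    obtain ⟨i, hi⟩ := h
    apply Finset.prod_eq_zero (Finset.mem_univ i.castSucc)
    rw [Fin.snoc_castSucc, gammaPDFReal, if_neg (by linarith)]

lemma lintegral_scale {s : ℝ} (hs : 0 < s) {g : (Fin m → ℝ) → ℝ≥0∞} (hg : Measurable g) :
    ∫⁻ v, g v = ENNReal.ofReal (s ^ m) * ∫⁻ w, g (s • w) := by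
  have h := Measure.map_addHaar_smul (volume : Measure (Fin m → ℝ)) hs.ne'
  have h2 : ∫⁻ w, g (s • w) = ∫⁻ v, g v ∂(Measure.map (s • ·) (volume : Measure (Fin m → ℝ))) := by
    rw [lintegral_map hg (by fun_prop)]
  rw [h2, h, lintegral_smul_measure, Module.finrank_fin_fun, smul_eq_mul, ← mul_assoc,
    ← ENNReal.ofReal_mul (by positivity), abs_of_pos (by positivity),
    mul_inv_cancel₀ (by positivity), ENNReal.ofReal_one, one_mul]

lemma snoc_meas : Measurable (fun z : ℝ × (Fin m → ℝ) => (Fin.snoc z.2 z.1 : Fin (m + 1) → ℝ)) := by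
  rw [measurable_pi_iff]
  intro j
  refine Fin.lastCases ?_ (fun i => ?_) j
  · simp only [Fin.snoc_last]; fun_prop
  · simp only [Fin.snoc_castSucc]; fun_prop

lemma lintegral_snoc {G : (Fin (m + 1) → ℝ) → ℝ≥0∞} (hG : Measurable G) :
    ∫⁻ x, G x = ∫⁻ s : ℝ, ∫⁻ v : Fin m → ℝ, G (Fin.snoc v (s - ∑ i, v i)) := by
  have h := (volume_preserving_piFinSuccAbove (fun _ : Fin (m + 1) => ℝ) (Fin.last m)).symm
  rw [← h.lintegral_comp_emb (MeasurableEquiv.measurableEmbedding _)]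
  have e : ∀ z : ℝ × (Fin m → ℝ), (MeasurableEquiv.piFinSuccAbove (fun _ : Fin (m + 1) => ℝ) (Fin.last m)).symm z
      = (Fin.snoc z.2 z.1 : Fin (m + 1) → ℝ) := by
    intro z
    rw [MeasurableEquiv.piFinSuccAbove_symm_apply]
    simp [Fin.insertNthEquiv, Fin.insertNth_last']
  have h1 : ∫⁻ z : ℝ × (Fin m → ℝ), G ((MeasurableEquiv.piFinSuccAbove (fun _ : Fin (m + 1) => ℝ) (Fin.last m)).symm z)
     = ∫⁻ z : ℝ × (Fin m → ℝ), G (Fin.snoc z.2 z.1) := by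
    apply lintegral_congr; intro z; rw [e]
  refine Eq.trans h1 ?_
  have hm : Measurable (fun z : ℝ × (Fin m → ℝ) => G (Fin.snoc z.2 z.1)) := hG.comp snoc_meas
  rw [Measure.volume_eq_prod, lintegral_prod_symm' _ hm]
  have h2 : ∀ v : Fin m → ℝ, ∫⁻ y : ℝ, G (Fin.snoc v y) = ∫⁻ s : ℝ, G (Fin.snoc v (s - ∑ i, v i)) := by
    intro v
    exact (lintegral_sub_right_eq_self (fun y : ℝ => G (Fin.snoc v y)) (∑ i, v i)).symm
  simp only
  simp_rw [h2]
  rw [lintegral_lintegral_swap]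
  have : Measurable (fun z : (Fin m → ℝ) × ℝ => G (Fin.snoc z.1 (z.2 - ∑ i, z.1 i))) := by
    exact hm.comp (f := fun z : (Fin m → ℝ) × ℝ => (z.2 - ∑ i, z.1 i, z.1)) (by fun_prop)
  exact this.aemeasurable

lemma gamP_factor (hα : ∀ j, 0 < α j) {F : (Fin m → ℝ) → ℝ≥0∞} (hF : Measurable F)
    {k : ℝ → ℝ≥0∞} (hk : Measurable k) :
    ∫⁻ x, F (fun i => (∑ j, x j)⁻¹ * x i.castSucc) * k (∑ j, x j) ∂gamP α =
      ENNReal.ofReal ((∏ j, Gamma (α j))⁻¹) *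
      (∫⁻ s in Ioi (0:ℝ), ENNReal.ofReal (s ^ (∑ j, α j - 1) * exp (-s)) * k s) *
      ∫⁻ w, F w ∂dirichletBase m α := by
  have hpm : Measurable (fun x : Fin (m + 1) → ℝ => ∏ j, gammaPDF (α j) 1 (x j)) := by
    unfold gammaPDF; fun_prop
  have hGm : Measurable (fun x : Fin (m + 1) → ℝ => F (fun i => (∑ j, x j)⁻¹ * x i.castSucc) * k (∑ j, x j)) := by
    apply Measurable.mul
    · exact hF.comp (by fun_prop)
    · exact hk.comp (by fun_prop)
  have hdm : Measurable (dirichletDensity m α) := by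
    unfold dirichletDensity
    apply Measurable.indicator (by fun_prop)
    have : {x : Fin m → ℝ | (∀ i, 0 ≤ x i) ∧ ∑ i, x i ≤ 1} =
        (⋂ i, {x : Fin m → ℝ | 0 ≤ x i}) ∩ {x : Fin m → ℝ | ∑ i, x i ≤ 1} := by ext; simp
    rw [this]
    apply MeasurableSet.inter
    · exact MeasurableSet.iInter (fun i => measurableSet_le measurable_const (measurable_pi_apply i))
    · exact measurableSet_le (f := fun x : Fin m → ℝ => ∑ i, x i) (by fun_prop) measurable_const
  rw [gamP_density hα, lintegral_withDensity_eq_lintegral_mul _ hpm hGm]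
  rw [lintegral_snoc (hpm.mul hGm)]
  have hsum : ∀ (v : Fin m → ℝ) (s : ℝ), ∑ j, (Fin.snoc v (s - ∑ i, v i) : Fin (m + 1) → ℝ) j = s := by
    intro v s
    rw [Fin.sum_univ_castSucc]; simp
  have hprod : ∀ x : Fin (m + 1) → ℝ, ∏ j, gammaPDF (α j) 1 (x j) =
      ENNReal.ofReal (∏ j, gammaPDFReal (α j) 1 (x j)) := by
    intro x
    rw [ENNReal.ofReal_prod_of_nonneg fun j _ => gammaPDFReal_nonneg (hα j) one_pos _]
    rfl
  have hinner : ∀ᵐ s : ℝ, ∫⁻ v : Fin m → ℝ, ((fun x : Fin (m + 1) → ℝ => ∏ j, gammaPDF (α j) 1 (x j)) *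
      (fun x : Fin (m + 1) → ℝ => F (fun i => (∑ j, x j)⁻¹ * x i.castSucc) * k (∑ j, x j)))
        (Fin.snoc v (s - ∑ i, v i)) =
      (Ioi (0:ℝ)).indicator (fun s => ENNReal.ofReal ((∏ j, Gamma (α j))⁻¹) *
        (ENNReal.ofReal (s ^ (∑ j, α j - 1) * exp (-s)) * k s) * ∫⁻ w, F w ∂dirichletBase m α) s := by
    have : ∀ᵐ x : ℝ, x ≠ 0 := by simp [ae_iff]
    filter_upwards [this] with s hs0
    simp only [Pi.mul_apply, hsum, hprod, Fin.snoc_castSucc]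
    rcases lt_or_gt_of_ne hs0 with hs | hs
    · rw [indicator_of_notMem (by simp; linarith)]
      simp_rw [pdf_neg hs]
      simp
    · rw [indicator_of_mem (by exact hs)]
      have hmm : Measurable (fun v : Fin m → ℝ => (Fin.snoc v (s - ∑ i, v i) : Fin (m + 1) → ℝ)) :=
        snoc_meas.comp (f := fun v : Fin m → ℝ => (s - ∑ i, v i, v)) (by fun_prop)
      rw [lintegral_scale hs]
      swap
      · apply Measurable.mul
        · have := hpm.comp hmm
          simpa only [Function.comp_def, hprod] using this
        · exact (hF.comp (by fun_prop)).mul_const _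
      have e1 : ∀ w : Fin m → ℝ, (fun i => s⁻¹ * (s • w) i) = w := by
        intro w; ext i; simp; field_simp
      have e2 : ∀ w : Fin m → ℝ, ∑ i, (s • w) i = ∑ i, s * w i := fun w => rfl
      simp_rw [e1, e2, pdf_scale hα hs]
      unfold dirichletBase
      rw [lintegral_withDensity_eq_lintegral_mul _ (by fun_prop) hF]
      have hG0 : 0 ≤ (∏ j, Gamma (α j))⁻¹ := inv_nonneg.mpr (Finset.prod_nonneg fun j _ => (Gamma_pos_of_pos (hα j)).le)
      have e3 : ∀ w, ENNReal.ofReal ((∏ j, Gamma (α j))⁻¹ * (s ^ (∑ j, α j - (m + 1)) * exp (-s)) * dirichletDensity m α w) * (F w * k s)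
        = (ENNReal.ofReal ((∏ j, Gamma (α j))⁻¹) * ENNReal.ofReal (s ^ (∑ j, α j - (m + 1)) * exp (-s)) * k s) *
          (((fun x => ENNReal.ofReal (dirichletDensity m α x)) * F) w) := by
        intro w
        rw [ENNReal.ofReal_mul (by positivity), ENNReal.ofReal_mul hG0, Pi.mul_apply]
        ring
      simp_rw [e3]
      rw [lintegral_const_mul _ (by exact Measurable.mul (by fun_prop) hF)]
      have e4 : ENNReal.ofReal (s ^ (∑ j, α j - 1) * exp (-s)) =
          ENNReal.ofReal (s ^ m) * ENNReal.ofReal (s ^ (∑ j, α j - (m + 1)) * exp (-s)) := by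
        rw [← ENNReal.ofReal_mul (by positivity), ← rpow_natCast, ← mul_assoc, ← rpow_add hs]
        congr 3; ring
      rw [e4]
      ring
  rw [lintegral_congr_ae hinner, lintegral_indicator measurableSet_Ioi, lintegral_mul_const, lintegral_const_mul]
  · fun_prop
  · fun_prop

lemma gamma_lint {a : ℝ} (ha : 0 < a) :
    ∫⁻ s in Ioi (0:ℝ), ENNReal.ofReal (s ^ (a - 1) * exp (-s)) = ENNReal.ofReal (Gamma a) := by
  have h := integral_rpow_mul_exp_neg_mul_Ioi ha (r := 1) one_pos
  have hi := GammaIntegral_convergent ha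
  rw [← ofReal_integral_eq_lintegral_ofReal]
  · rw [Gamma_eq_integral ha]; simp_rw [mul_comm]
  · exact hi.congr_fun (fun x _ => by ring) measurableSet_Ioi
  · filter_upwards [ae_restrict_mem measurableSet_Ioi] with x hx
    have : (0:ℝ) < x := hx
    simp only [Pi.zero_apply]; positivity

lemma dir_lint (hα : ∀ j, 0 < α j) (hn : 1 < ∑ j, α j) {F : (Fin m → ℝ) → ℝ≥0∞} (hF : Measurable F) :
    (dirichletBase m α univ)⁻¹ * ∫⁻ w, F w ∂dirichletBase m α =
      ENNReal.ofReal (∑ j, α j - 1) * ∫⁻ x, F (fun i => (∑ j, x j)⁻¹ * x i.castSucc) *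
        ENNReal.ofReal ((∑ j, x j)⁻¹) ∂gamP α := by
  have := gamP_prob hα
  set n := ∑ j, α j - 1 with hndef
  have hn0 : 0 < n := by linarith
  have hsum : ∑ j, α j = n + 1 := by rw [hndef]; ring
  have hG0 : 0 < (∏ j, Gamma (α j))⁻¹ := inv_pos.mpr (Finset.prod_pos fun j _ => Gamma_pos_of_pos (hα j))
  have h1 := gamP_factor hα (F := fun _ => 1) measurable_const (k := fun _ => 1) measurable_const
  have h2 := gamP_factor hα hF (k := fun s => ENNReal.ofReal s⁻¹) (by fun_prop)
  simp only [mul_one, lintegral_const, measure_univ, one_mul] at h1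
  rw [gamma_lint (by linarith), hsum, Gamma_add_one hn0.ne'] at h1
  have e : ∫⁻ s in Ioi (0:ℝ), ENNReal.ofReal (s ^ (∑ j, α j - 1) * exp (-s)) * ENNReal.ofReal s⁻¹
      = ENNReal.ofReal (Gamma n) := by
    rw [← gamma_lint hn0]
    apply setLIntegral_congr_fun measurableSet_Ioi
    intro s hs
    have hs : (0:ℝ) < s := hs
    simp only
    rw [← ENNReal.ofReal_mul (by positivity), ← hndef]
    congr 1
    rw [show s ^ (n - 1) = s ^ n * s⁻¹ by rw [rpow_sub_one hs.ne' n, div_eq_mul_inv]]; ring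
  rw [e] at h2
  rw [h2, ← mul_assoc, ← mul_assoc]
  congr 1
  have hinv : (dirichletBase m α univ)⁻¹ = ENNReal.ofReal ((∏ j, Gamma (α j))⁻¹) * ENNReal.ofReal (n * Gamma n) := by
    refine (ENNReal.eq_inv_of_mul_eq_one_left ?_).symm
    exact h1.symm
  rw [hinv, ENNReal.ofReal_mul hn0.le]
  ring

/-- tail functional -/
def Qf {ι : Type*} [Fintype ι] (α f : ι → ℝ) (μ : ℝ) : ℝ :=
  (∑ j, α j - 1) * ∫ x, (if μ * ∑ j, x j ≤ ∑ j, f j * x j then (∑ j, x j)⁻¹ else 0) ∂gamP α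

lemma inv_sum_integrable (hα : ∀ j, 0 < α j) (hn : 1 < ∑ j, α j) :
    Integrable (fun x : Fin (m + 1) → ℝ => (∑ j, x j)⁻¹) (gamP α) ∧
      (∑ j, α j - 1) * ∫ x, (∑ j, x j)⁻¹ ∂gamP α = 1 := by
  have := gamP_prob hα
  have h1 := gamP_factor hα (F := fun _ => 1) measurable_const (k := fun _ => 1) measurable_const
  simp only [mul_one, lintegral_const, measure_univ, one_mul] at h1
  have hb0 : dirichletBase m α univ ≠ 0 := by intro h; rw [h] at h1; simp at h1
  have hbt : dirichletBase m α univ ≠ ∞ := by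
    intro h
    rw [h, gamma_lint (by linarith)] at h1
    have hG0 : 0 < (∏ j, Gamma (α j))⁻¹ := inv_pos.mpr (Finset.prod_pos fun j _ => Gamma_pos_of_pos (hα j))
    have hG1 : 0 < Gamma (∑ j, α j) := Gamma_pos_of_pos (by linarith)
    rw [ENNReal.mul_top] at h1
    · simp at h1
    · simp only [ne_eq, mul_eq_zero, ENNReal.ofReal_eq_zero, not_or, not_le]; exact ⟨hG0, hG1⟩
  have h := dir_lint hα hn (F := fun _ => 1) measurable_const
  simp only [lintegral_const, one_mul] at h
  rw [ENNReal.inv_mul_cancel hb0 hbt] at h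
  have hn0 : 0 < ∑ j, α j - 1 := by linarith
  have hfin : ∫⁻ x, ENNReal.ofReal ((∑ j, x j)⁻¹) ∂gamP α ≠ ∞ := by
    intro ht
    rw [ht, ENNReal.mul_top (by simpa using hn)] at h
    simp at h
  have hpos : 0 ≤ᵐ[gamP α] fun x : Fin (m + 1) → ℝ => (∑ j, x j)⁻¹ := by
    filter_upwards [gamP_pos hα] with x hx
    exact inv_nonneg.mpr (Finset.sum_nonneg fun j _ => (hx j).le)
  have hi : Integrable (fun x : Fin (m + 1) → ℝ => (∑ j, x j)⁻¹) (gamP α) := by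
    refine ⟨Measurable.aestronglyMeasurable (by fun_prop), ?_⟩
    rw [hasFiniteIntegral_iff_ofReal hpos]
    exact lt_top_iff_ne_top.mpr hfin
  refine ⟨hi, ?_⟩
  rw [← ofReal_integral_eq_lintegral_ofReal hi hpos, ← ENNReal.ofReal_mul hn0.le] at h
  have := congrArg ENNReal.toReal h
  rw [ENNReal.toReal_one, ENNReal.toReal_ofReal (mul_nonneg hn0.le (integral_nonneg_of_ae hpos))] at this
  exact this.symm

lemma dirichlet_eq (hα : ∀ j, 0 < α j) (hn : 1 < ∑ j, α j) (f : Fin (m + 1) → ℝ) (μ : ℝ) :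
    dirichlet m α {w | μ ≤ ∑ ℓ, f ℓ * w ℓ} = ENNReal.ofReal (Qf α f μ) := by
  have hn0 : 0 < ∑ j, α j - 1 := by linarith
  have hT : Measurable (fun x : Fin m → ℝ => (Fin.snoc x (1 - ∑ i, x i) : Fin (m + 1) → ℝ)) :=
    snoc_meas.comp (f := fun v : Fin m → ℝ => (1 - ∑ i, v i, v)) (by fun_prop)
  have hA : MeasurableSet {w : Fin (m + 1) → ℝ | μ ≤ ∑ ℓ, f ℓ * w ℓ} :=
    measurableSet_le (by fun_prop) (by fun_prop)
  unfold dirichlet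
  rw [Measure.map_apply hT hA, Measure.smul_apply, smul_eq_mul, ← lintegral_indicator_one (hT hA),
    dir_lint hα hn (measurable_one.indicator (hT hA))]
  obtain ⟨hi, -⟩ := inv_sum_integrable hα hn
  have hB : MeasurableSet {x : Fin (m + 1) → ℝ | μ * ∑ j, x j ≤ ∑ j, f j * x j} :=
    measurableSet_le (by fun_prop) (by fun_prop)
  rw [Qf, ENNReal.ofReal_mul hn0.le]
  congr 1
  rw [ofReal_integral_eq_lintegral_ofReal]
  · apply lintegral_congr_ae
    filter_upwards [gamP_pos hα] with x hx
    have hs : 0 < ∑ j, x j := Finset.sum_pos (fun j _ => hx j) ⟨0, Finset.mem_univ _⟩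
    have hiff : (fun i : Fin m => (∑ j, x j)⁻¹ * x i.castSucc) ∈ (fun x : Fin m → ℝ => (Fin.snoc x (1 - ∑ i, x i) : Fin (m + 1) → ℝ)) ⁻¹' {w | μ ≤ ∑ ℓ, f ℓ * w ℓ} ↔ μ * ∑ j, x j ≤ ∑ j, f j * x j := by
      have e : (Fin.snoc (fun i : Fin m => (∑ j, x j)⁻¹ * x i.castSucc) (1 - ∑ i : Fin m, (∑ j, x j)⁻¹ * x i.castSucc) : Fin (m + 1) → ℝ)
          = fun j => (∑ j, x j)⁻¹ * x j := by
        ext j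
        refine Fin.lastCases ?_ (fun i => ?_) j
        · rw [Fin.snoc_last, ← Finset.mul_sum]
          have h := Fin.sum_univ_castSucc x
          have h' : ∑ i : Fin m, x i.castSucc = ∑ j, x j - x (Fin.last m) := by linarith
          rw [h']; field_simp; ring
        · rw [Fin.snoc_castSucc]
      simp only [mem_preimage, mem_setOf_eq]
      rw [e]
      have e2 : ∑ j, f j * ((∑ j, x j)⁻¹ * x j) = (∑ j, f j * x j) / ∑ j, x j := by
        rw [Finset.sum_div]; apply Finset.sum_congr rfl; intros; ring
      rw [e2, le_div_iff₀ hs]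
    by_cases hc : μ * ∑ j, x j ≤ ∑ j, f j * x j
    · rw [indicator_of_mem (hiff.mpr hc), if_pos hc]; simp
    · rw [indicator_of_notMem (fun h => hc (hiff.mp h)), if_neg hc]; simp
  · have := hi.indicator hB
    refine this.congr (Filter.Eventually.of_forall fun x => ?_)
    simp [indicator]
  · filter_upwards [gamP_pos hα] with x hx
    have hs : 0 < ∑ j, x j := Finset.sum_pos (fun j _ => hx j) ⟨0, Finset.mem_univ _⟩
    simp only [Pi.zero_apply]
    split_ifs
    · exact inv_nonneg.mpr hs.le
    · exact le_rfl

end dir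


section density
variable {m : ℕ} {α f : Fin (m + 1) → ℝ} {b : ℝ} {i0 i1 : Fin (m + 1)}

lemma rho_bound (hα : ∀ j, 0 < α j) (hb : 0 < b) (f0 : f i0 = 0) (f1 : f i1 = b)
    (h0 : 2 ≤ α i0) (h1 : 2 ≤ α i1) {u : ℝ} (s : ℝ) :
    rho α (fun j => f j - u) s ≤ (1 + (s * (b / 2)) ^ 2)⁻¹ := by
  have key : ∀ i, 2 ≤ α i → b / 2 ≤ |f i - u| →
      rho α (fun j => f j - u) s ≤ (1 + (s * (b / 2)) ^ 2)⁻¹ := by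
    intro i hi hab
    have hp : 0 < 1 + (s * (b / 2)) ^ 2 := by positivity
    rw [← exp_log (inv_pos.mpr hp), log_inv]
    unfold rho
    apply exp_le_exp.mpr
    have hlog0 : 0 ≤ log (1 + (s * (b / 2)) ^ 2) := log_nonneg (by nlinarith [sq_nonneg (s * (b / 2))])
    have hl : log (1 + (s * (b / 2)) ^ 2) ≤ log (1 + (s * (f i - u)) ^ 2) := by
      apply log_le_log hp
      have : (b / 2) ^ 2 ≤ (f i - u) ^ 2 := by
        rw [← sq_abs (f i - u)]; exact pow_le_pow_left₀ (by positivity) hab 2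
      nlinarith [sq_nonneg s, mul_le_mul_of_nonneg_left this (sq_nonneg s)]
    have hs : α i * log (1 + (s * (f i - u)) ^ 2) ≤ ∑ j, α j * log (1 + (s * (f j - u)) ^ 2) := by
      apply Finset.single_le_sum (f := fun j => α j * log (1 + (s * (f j - u)) ^ 2)) _ (Finset.mem_univ i)
      intro j _
      exact mul_nonneg (hα j).le (log_nonneg (by nlinarith [sq_nonneg (s * (f j - u))]))
    nlinarith
  rcases le_total u (b / 2) with h | h
  · apply key i1 h1
    rw [f1]; exact le_trans (by linarith) (le_abs_self _)
  · apply key i0 h0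
    rw [f0, zero_sub, abs_neg]; exact le_trans h (le_abs_self _)

lemma rho_bound_int (hb : 0 < b) : Integrable (fun s : ℝ => (1 + (s * (b / 2)) ^ 2)⁻¹) :=
  integrable_inv_one_add_sq.comp_mul_right' (by positivity)

lemma rho_int (hα : ∀ j, 0 < α j) (hb : 0 < b) (f0 : f i0 = 0) (f1 : f i1 = b)
    (h0 : 2 ≤ α i0) (h1 : 2 ≤ α i1) {u : ℝ} : Integrable (rho α (fun j => f j - u)) := by
  refine (rho_bound_int hb).mono' (rho_continuous _ _).aestronglyMeasurable
    (Filter.Eventually.of_forall fun s => ?_)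
  rw [Real.norm_of_nonneg (rho_pos _ _ _).le]
  exact rho_bound hα hb f0 f1 h0 h1 s

lemma kern_nonneg {η : ℝ} (hη : 0 < η) (x : ℝ) : 0 ≤ kern η x := by unfold kern; positivity

lemma kern_le {η : ℝ} (hη : 0 < η) (x : ℝ) : kern η x ≤ (√(2 * π) * η)⁻¹ := by
  unfold kern
  have : exp (-(x / η) ^ 2 / 2) ≤ 1 := exp_le_one_iff.mpr (by nlinarith [sq_nonneg (x / η)])
  exact mul_le_of_le_one_right (by positivity) this

lemma kern_cont (η : ℝ) : Continuous (kern η) := by unfold kern; fun_prop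

lemma density_identity (hα : ∀ j, 0 < α j) (hb : 0 < b) (hf : ∀ j, f j ∈ Icc 0 b)
    (f0 : f i0 = 0) (f1 : f i1 = b)
    (h0 : 2 ≤ α i0) (h1 : 2 ≤ α i1) (hn : 1 < ∑ j, α j) {μ : ℝ} (hμ : 0 < μ) (hμb : μ < b)
    {h : ℝ → ℝ} (hlim : ∀ u ∈ Ioo μ b, Filter.Tendsto
      (fun η => ∫ x, kern η (∑ j, (f j - u) * x j) ∂(gamP α)) (nhdsWithin 0 (Ioi 0)) (nhds (h u))) :
    IntervalIntegrable h volume μ b ∧ Qf α f μ = (∑ j, α j - 1) * ∫ u in μ..b, h u := by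
  have hprob := gamP_prob hα
  have hfin : IsFiniteMeasure (volume.restrict (uIoc μ b)) := by
    rw [uIoc_of_le hμb.le]; infer_instance
  obtain ⟨hinv, -⟩ := inv_sum_integrable hα hn
  have hsum : ∀ (u : ℝ) (x : Fin (m + 1) → ℝ), ∑ j, (f j - u) * x j = ∑ j, f j * x j - u * ∑ j, x j := by
    intro u x
    rw [Finset.mul_sum, ← Finset.sum_sub_distrib]
    apply Finset.sum_congr rfl; intros; ring
  simp_rw [hsum] at hlim
  set C := 1 / (2 * π) * ∫ s : ℝ, (1 + (s * (b / 2)) ^ 2)⁻¹ with hC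
  have hbd : ∀ η : ℝ, 0 < η → ∀ u : ℝ, ‖∫ x, kern η (∑ j, f j * x j - u * ∑ j, x j) ∂(gamP α)‖ ≤ C := by
    intro η hη u
    rw [Real.norm_of_nonneg (integral_nonneg fun x => kern_nonneg hη _)]
    have h1' := kern_bound hα (fun j => f j - u) (rho_int hα hb f0 f1 h0 h1) hη
    simp_rw [hsum] at h1'
    refine h1'.trans ?_
    rw [hC]
    apply mul_le_mul_of_nonneg_left _ (by positivity)
    exact integral_mono (rho_int hα hb f0 f1 h0 h1) (rho_bound_int hb)
      (fun s => rho_bound hα hb f0 f1 h0 h1 s)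
  have hcont2 : ∀ η : ℝ, Continuous (fun z : ℝ × (Fin (m + 1) → ℝ) =>
      kern η (∑ j, f j * z.2 j - z.1 * ∑ j, z.2 j)) := by
    intro η
    exact (kern_cont η).comp (by fun_prop)
  have hmeas : ∀ η : ℝ, StronglyMeasurable
      (fun u : ℝ => ∫ x, kern η (∑ j, f j * x j - u * ∑ j, x j) ∂(gamP α)) := by
    intro η
    exact (hcont2 η).stronglyMeasurable.integral_prod_right
  have hlim' : ∀ᵐ u : ℝ, u ∈ uIoc μ b → Filter.Tendsto
      (fun η => ∫ x, kern η (∑ j, f j * x j - u * ∑ j, x j) ∂(gamP α)) (nhdsWithin 0 (Ioi 0)) (nhds (h u)) := by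
    have : ∀ᵐ x : ℝ, x ≠ b := by simp [ae_iff]
    filter_upwards [this] with u hu hu2
    rw [uIoc_of_le hμb.le] at hu2
    exact hlim u ⟨hu2.1, lt_of_le_of_ne hu2.2 hu⟩
  have hlimR := (ae_restrict_iff' measurableSet_uIoc).mpr hlim'
  have h_itg : IntervalIntegrable h volume μ b := by
    rw [intervalIntegrable_iff]
    have hae : AEStronglyMeasurable h (volume.restrict (uIoc μ b)) :=
      aestronglyMeasurable_of_tendsto_ae (nhdsWithin 0 (Ioi 0))
        (fun η => (hmeas η).aestronglyMeasurable) hlimR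
    refine Integrable.mono' (g := fun _ => C) (integrable_const C) hae ?_
    filter_upwards [hlimR] with u hu
    apply le_of_tendsto hu.norm
    filter_upwards [self_mem_nhdsWithin] with η hη
    exact hbd η hη u
  refine ⟨h_itg, ?_⟩
  have T1 : Filter.Tendsto (fun η => ∫ u in μ..b, ∫ x, kern η (∑ j, f j * x j - u * ∑ j, x j) ∂(gamP α))
      (nhdsWithin 0 (Ioi 0)) (nhds (∫ u in μ..b, h u)) := by
    apply intervalIntegral.tendsto_integral_filter_of_dominated_convergence (fun _ => C)
    · exact Filter.Eventually.of_forall fun η => (hmeas η).aestronglyMeasurable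
    · filter_upwards [self_mem_nhdsWithin] with η hη
      exact Filter.Eventually.of_forall fun u _ => hbd η hη u
    · exact intervalIntegrable_const
    · exact hlim'
  have hpos : ∀ᵐ x ∂gamP α, 0 < ∑ j, x j := by
    filter_upwards [gamP_pos hα] with x hx
    exact Finset.sum_pos (fun j _ => hx j) ⟨0, Finset.mem_univ _⟩
  have E1 : ∀ η : ℝ, 0 < η → ∫ u in μ..b, ∫ x, kern η (∑ j, f j * x j - u * ∑ j, x j) ∂(gamP α) =
      ∫ x, (∑ j, x j)⁻¹ * (Gt ((∑ j, f j * x j - b * ∑ j, x j) / η) - Gt ((∑ j, f j * x j - μ * ∑ j, x j) / η)) ∂gamP α := by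
    intro η hη
    rw [intervalIntegral_integral_swap]
    · apply integral_congr_ae
      filter_upwards [hpos] with x hx
      exact kern_int hη hx μ b
    · refine Integrable.mono' (g := fun _ => (√(2 * π) * η)⁻¹) (integrable_const _) (hcont2 η).aestronglyMeasurable ?_
      refine Filter.Eventually.of_forall fun z => ?_
      simp only [Function.uncurry]
      rw [Real.norm_of_nonneg (kern_nonneg hη _)]
      exact kern_le hη _
  have T2 : Filter.Tendsto (fun η => ∫ x, (∑ j, x j)⁻¹ * (Gt ((∑ j, f j * x j - b * ∑ j, x j) / η) - Gt ((∑ j, f j * x j - μ * ∑ j, x j) / η)) ∂gamP α)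
      (nhdsWithin 0 (Ioi 0)) (nhds (∫ x, (if μ * ∑ j, x j ≤ ∑ j, f j * x j then (∑ j, x j)⁻¹ else 0) ∂gamP α)) := by
    have hpt : ∀ c : ℝ, 0 < c → Filter.Tendsto (fun η : ℝ => Gt (c / η)) (nhdsWithin 0 (Ioi 0)) (nhds 0) := by
      intro c hc
      exact Gt_top.comp (tendsto_inv_nhdsGT_zero.const_mul_atTop hc)
    have hng : ∀ c : ℝ, c < 0 → Filter.Tendsto (fun η : ℝ => Gt (c / η)) (nhdsWithin 0 (Ioi 0)) (nhds 1) := by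
      intro c hc
      exact Gt_bot.comp (tendsto_inv_nhdsGT_zero.const_mul_atTop_of_neg hc)
    apply tendsto_integral_filter_of_dominated_convergence (fun x => (∑ j, x j)⁻¹) _ _ hinv
    · have hy := gamP_hyper hα (c := fun j => f j - μ) (i := i0) (by simp [f0]; exact hμ.ne')
      filter_upwards [hpos, gamP_pos hα, hy] with x hx hxj hxy
      rw [hsum] at hxy
      have hYb : ∑ j, f j * x j - b * ∑ j, x j < 0 := by
        rw [← hsum]
        apply Finset.sum_neg'
        · intro j _
          exact mul_nonpos_of_nonpos_of_nonneg (by linarith [(hf j).2]) (hxj j).le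
        · exact ⟨i0, Finset.mem_univ _, by rw [f0]; nlinarith [hxj i0]⟩
      have t1 := hng _ hYb
      rcases lt_or_gt_of_ne hxy with hlt | hgt
      · rw [if_neg (by linarith)]
        have := (t1.sub (hng _ hlt)).const_mul ((∑ j, x j)⁻¹)
        simpa using this
      · rw [if_pos (by linarith)]
        have := (t1.sub (hpt _ hgt)).const_mul ((∑ j, x j)⁻¹)
        simpa using this
    · refine Filter.Eventually.of_forall fun η => Measurable.aestronglyMeasurable ?_
      have := Gt_continuous.measurable
      apply Measurable.mul (by fun_prop)
      exact (this.comp (by fun_prop)).sub (this.comp (by fun_prop))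
    · refine Filter.Eventually.of_forall fun η => ?_
      filter_upwards [hpos] with x hx
      rw [norm_mul, Real.norm_of_nonneg (inv_nonneg.mpr hx.le)]
      apply mul_le_of_le_one_right (inv_nonneg.mpr hx.le)
      rw [Real.norm_eq_abs, abs_le]
      constructor <;> linarith [Gt_nonneg ((∑ j, f j * x j - b * ∑ j, x j) / η), Gt_le_one ((∑ j, f j * x j - b * ∑ j, x j) / η), Gt_nonneg ((∑ j, f j * x j - μ * ∑ j, x j) / η), Gt_le_one ((∑ j, f j * x j - μ * ∑ j, x j) / η)]
  rw [Qf]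
  congr 1
  refine tendsto_nhds_unique (T2.congr' ?_) T1
  filter_upwards [self_mem_nhdsWithin] with η hη
  exact (E1 η hη).symm

end density


/-- abstract comparison of a tail function with an integral -/
lemma tail_lower {T D h : ℝ → ℝ} {μ b c : ℝ} (hμ : μ < b) (hT : ContinuousOn T (Ico μ b))
    (hD : ∀ u ∈ Ioo μ b, HasDerivWithinAt T (-D u) (Ioi u) u)
    (hlim : Filter.Tendsto T (nhdsWithin b (Iio b)) (nhds 0))
    (hh : IntervalIntegrable h volume μ b) (hc : ∀ u ∈ Ioo μ b, c * D u ≤ h u) :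
    c * T μ ≤ ∫ u in μ..b, h u := by
  have hs : ∀ v ∈ Ioo μ b, c * T μ - c * T v ≤ ∫ u in μ..v, h u := by
    intro v hv
    have := intervalIntegral.sub_le_integral_of_hasDeriv_right_of_le (g := fun u => -c * T u)
      (g' := fun u => c * D u) (φ := h) hv.1.le
      (continuousOn_const.mul (hT.mono fun x hx => ⟨hx.1, hx.2.trans_lt hv.2⟩))
      (fun x hx => by
        have := (hD x ⟨hx.1, hx.2.trans hv.2⟩).const_mul (-c)
        convert! this using 1; ring)
      (by
        rw [intervalIntegrable_iff_integrableOn_Icc_of_le hμ.le] at hh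
        exact hh.mono_set (Icc_subset_Icc_right hv.2.le))
      (fun x hx => hc x ⟨hx.1, hx.2.trans hv.2⟩)
    linarith
  have hcon : ContinuousOn (fun x => ∫ t in μ..x, h t) (Icc μ b) := by
    have := intervalIntegral.continuousOn_primitive_interval' hh left_mem_uIcc
    rwa [uIcc_of_le hμ.le] at this
  have t1 : Filter.Tendsto (fun v => ∫ t in μ..v, h t) (nhdsWithin b (Iio b)) (nhds (∫ t in μ..b, h t)) := by
    have := hcon b ⟨hμ.le, le_rfl⟩
    have h2 : nhdsWithin b (Iio b) ≤ nhdsWithin b (Icc μ b) := by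
      rw [← nhdsWithin_Ico_eq_nhdsLT hμ]
      exact nhdsWithin_mono _ Ico_subset_Icc_self
    exact this.mono_left h2
  have t2 : Filter.Tendsto (fun v => c * T μ - c * T v) (nhdsWithin b (Iio b)) (nhds (c * T μ - c * 0)) :=
    tendsto_const_nhds.sub (hlim.const_mul c)
  have := le_of_tendsto_of_tendsto t2 t1 (by
    filter_upwards [Ioo_mem_nhdsLT hμ] with v hv
    exact hs v hv)
  linarith

lemma tail_upper {T D h : ℝ → ℝ} {μ b c : ℝ} (hμ : μ < b) (hT : ContinuousOn T (Ico μ b))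
    (hD : ∀ u ∈ Ioo μ b, HasDerivWithinAt T (-D u) (Ioi u) u)
    (hlim : Filter.Tendsto T (nhdsWithin b (Iio b)) (nhds 0))
    (hh : IntervalIntegrable h volume μ b) (hc : ∀ u ∈ Ioo μ b, h u ≤ c * D u) :
    ∫ u in μ..b, h u ≤ c * T μ := by
  have := tail_lower (c := -c) (h := fun u => -h u) hμ hT hD hlim hh.neg
    (fun u hu => by have := hc u hu; linarith)
  rw [intervalIntegral.integral_neg] at this
  linarith

section core
variable {m : ℕ} {α p f : Fin (m + 1) → ℝ} {b n N ε : ℝ} {i0 i1 : Fin (m + 1)}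

lemma pointwise (S : Setup p f b i0 i1) (hα : ∀ j, 0 < α j) (k : Fin (m + 1)) (hn : 0 < n)
    (hαp : ∀ j, α j = n * p j + if j = k then 1 else 0)
    (hε : 0 < ε) (hε1 : ε < 1) (hN : 200 ≤ ε * N) (hN0 : N ≤ n * p i0) (hN1 : N ≤ n * p i1)
    {u : ℝ} (hu0 : 0 < u) (hu : ∑ j, f j * p j < u) (hub : u < b) :
    ∃ l h X : ℝ, IsDual p f u l ∧ 0 < l ∧ 0 < ∑ j, p j * ((f j - u) / (1 - l * (f j - u))) ^ 2 ∧
      X = 1 / (2 * π) * ((1 - l * (f k - u))⁻¹ * exp (-(n * Lf p f l u)) *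
        √(2 * π / (n * ∑ j, p j * ((f j - u) / (1 - l * (f j - u))) ^ 2))) ∧
      Filter.Tendsto (fun η => ∫ x, kern η (∑ j, (f j - u) * x j) ∂(gamP α))
        (nhdsWithin 0 (Ioi 0)) (nhds h) ∧ (1 - ε) * X ≤ h ∧ h ≤ (1 + ε) * X := by
  obtain ⟨l, hl⟩ := S.exists_dual hu.le hub
  have hl0 := S.dual_pos hu hl
  have hr0 : ∀ j, 0 < 1 - l * (f j - u) := fun j => by have := hl.2.1 j; linarith
  set a : Fin (m + 1) → ℝ := fun j => (f j - u) / (1 - l * (f j - u)) with ha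
  have hNpos : 0 < N := by
    by_contra h
    push Not at h
    nlinarith
  have hterm : ∀ i, N ≤ n * p i → N * a i ^ 2 ≤ n * ∑ j, p j * a j ^ 2 := by
    intro i hi
    have h1 : p i * a i ^ 2 ≤ ∑ j, p j * a j ^ 2 :=
      Finset.single_le_sum (f := fun j => p j * a j ^ 2)
        (fun j _ => mul_nonneg (S.p_nonneg j) (sq_nonneg _)) (Finset.mem_univ i)
    calc N * a i ^ 2 ≤ n * p i * a i ^ 2 := mul_le_mul_of_nonneg_right hi (sq_nonneg _)
      _ = n * (p i * a i ^ 2) := by ring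
      _ ≤ _ := mul_le_mul_of_nonneg_left h1 hn.le
  have ha0 : a i0 < 0 := by
    simp only [ha]
    apply div_neg_of_neg_of_pos _ (hr0 i0)
    rw [S.f0]; linarith
  have hsq : ∀ j, a j ^ 2 ≤ a i0 ^ 2 ∨ a j ^ 2 ≤ a i1 ^ 2 := by
    intro j
    have hj := S.f_mem j
    rcases le_total (f j) u with h | h
    · left
      have h1 : a j ≤ 0 := div_nonpos_of_nonpos_of_nonneg (by linarith) (hr0 j).le
      have h2 : a i0 ≤ a j := by
        simp only [ha]
        rw [div_le_div_iff₀ (hr0 i0) (hr0 j), S.f0]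
        nlinarith [hj.1]
      nlinarith
    · right
      have h1 : 0 ≤ a j := div_nonneg (by linarith) (hr0 j).le
      have h2 : a j ≤ a i1 := by
        simp only [ha]
        rw [div_le_div_iff₀ (hr0 j) (hr0 i1), S.f1]
        nlinarith [hj.2]
      nlinarith
  have hσ : 0 < ∑ j, p j * a j ^ 2 := by
    have := hterm i0 hN0
    have h2 : 0 < N * a i0 ^ 2 := by have := ha0.ne; positivity
    by_contra h
    push Not at h
    nlinarith
  have hB : 0 < n * ∑ j, p j * a j ^ 2 := mul_pos hn hσ
  have hlap := laplace (α := α) (β := fun j => n * p j) (a := a) (N := N) (ε := ε)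
    (B := n * ∑ j, p j * a j ^ 2) hε hε1 hN (fun j => mul_nonneg hn.le (S.p_nonneg j)) k hαp
    (by simp_rw [mul_assoc]; rw [← Finset.mul_sum, hl.2.2, mul_zero]) hB
    (by simp_rw [mul_assoc]; rw [← Finset.mul_sum])
    (fun j => by
      rcases hsq j with h | h
      · exact (mul_le_mul_of_nonneg_left h hNpos.le).trans (hterm i0 hN0)
      · exact (mul_le_mul_of_nonneg_left h hNpos.le).trans (hterm i1 hN1))
  have hk := kern_limit hα (fun j => f j - u) hl.2.1 hlap.1
  have hprod : ∏ j, (1 - l * (f j - u)) ^ (-α j) = (1 - l * (f k - u))⁻¹ * exp (-(n * Lf p f l u)) := by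
    have e : ∀ j, (1 - l * (f j - u)) ^ (-α j) = exp (-(α j * log (1 - l * (f j - u)))) := by
      intro j; rw [rpow_def_of_pos (hr0 j)]; congr 1; ring
    simp_rw [e]
    rw [← exp_sum]
    have e2 : (1 - l * (f k - u))⁻¹ = exp (-log (1 - l * (f k - u))) := by
      rw [exp_neg, exp_log (hr0 k)]
    rw [e2, ← exp_add]
    congr 1
    simp_rw [hαp, add_mul, neg_add, Finset.sum_add_distrib]
    rw [add_comm]
    congr 1
    · simp
    · rw [Finset.sum_neg_distrib, Lf, Finset.mul_sum]; simp_rw [mul_assoc]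
  refine ⟨l, _, _, hl, hl0, hσ, rfl, hk, ?_, ?_⟩
  · rw [hprod]
    have hpos : 0 ≤ 1 / (2 * π) * ((1 - l * (f k - u))⁻¹ * exp (-(n * Lf p f l u))) := by
      have := inv_pos.mpr (hr0 k); positivity
    have := mul_le_mul_of_nonneg_left hlap.2.1 hpos
    calc _ = _ := by ring
      _ ≤ _ := this
      _ = _ := by ring
  · rw [hprod]
    have hpos : 0 ≤ 1 / (2 * π) * ((1 - l * (f k - u))⁻¹ * exp (-(n * Lf p f l u))) := by
      have := inv_pos.mpr (hr0 k); positivity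
    have := mul_le_mul_of_nonneg_left hlap.2.2 hpos
    calc _ = _ := by ring
      _ ≤ _ := this
      _ = _ := by ring

/-- comparison of slopes -/
lemma slope_eq {σ r K n : ℝ} (hn : 0 < n) (hσ : 0 < σ) :
    n * (1 / (2 * π) * (r⁻¹ * exp (-(n * K)) * √(2 * π / (n * σ)))) =
      (√(2 * π))⁻¹ * exp (-(n * K)) * √n * (r * √σ)⁻¹ := by
  have hs : √(2 * π / (n * σ)) = √(2 * π) / (√n * √σ) := by
    rw [sqrt_div (by positivity), sqrt_mul hn.le]
  rw [hs]
  have h1 : 0 < √n := sqrt_pos.mpr hn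
  have h2 : 0 < √σ := sqrt_pos.mpr hσ
  have h3 : 0 < √(2 * π) := sqrt_pos.mpr (by positivity)
  have e1 : n = √n ^ 2 := (sq_sqrt hn.le).symm
  have e2 : 2 * π = √(2 * π) ^ 2 := (sq_sqrt (by positivity)).symm
  rw [e2]
  rw [sqrt_sq h3.le]
  conv_lhs => rw [mul_comm n]
  generalize exp (-(n * K)) = E
  rw [e1, sqrt_sq h1.le]
  generalize √n = x at *
  generalize √σ = y at *
  generalize √(2 * π) = z at *
  field_simp

lemma core (S : Setup p f b i0 i1) (hα : ∀ j, 0 < α j) (k : Fin (m + 1)) (hn : 0 < n)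
    (hαp : ∀ j, α j = n * p j + if j = k then 1 else 0)
    (hε : 0 < ε) (hε1 : ε < 1) (hN : 200 ≤ ε * N) (hN0 : N ≤ n * p i0) (hN1 : N ≤ n * p i1)
    {μ : ℝ} (hμ : ∑ j, f j * p j ≤ μ) (hμb : μ < b) :
    (k = i1 → (1 - ε) * Gt (√n * √(2 * Kinfstar p μ f)) ≤ Qf α f μ) ∧
    (k = i0 → Qf α f μ ≤ (1 + ε) * Gt (√n * √(2 * Kinfstar p μ f))) := by
  have hpf0 : 0 < ∑ j, f j * p j := by
    refine Finset.sum_pos' (fun j _ => mul_nonneg (S.f_mem j).1 (S.p_nonneg j)) ⟨i1, Finset.mem_univ _, ?_⟩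
    rw [S.f1]; exact mul_pos S.hb S.p1
  have hμ0 : 0 < μ := hpf0.trans_le hμ
  have hasum : ∑ j, α j - 1 = n := by
    simp_rw [hαp, Finset.sum_add_distrib]
    rw [← Finset.mul_sum, S.p_sum]; simp
  have hN200 : 200 ≤ N := by nlinarith
  have hα2 : ∀ i, N ≤ n * p i → 2 ≤ α i := by
    intro i hi; rw [hαp]; split_ifs <;> linarith
  have hn1 : 1 < ∑ j, α j := by linarith
  have hpw : ∀ u ∈ Ioo μ b, _ := fun u hu => pointwise S hα k hn hαp hε hε1 hN hN0 hN1
    (hμ0.trans hu.1) (hμ.trans_lt hu.1) hu.2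
  choose! l h X hl hl0 hσ hX hlim hlo hhi using hpw
  obtain ⟨h_itg, hQ⟩ := density_identity hα S.hb S.f_mem S.f0 S.f1 (hα2 i0 hN0) (hα2 i1 hN1) hn1 hμ0 hμb hlim
  rw [hasum] at hQ
  rw [hQ, ← intervalIntegral.integral_const_mul]
  have h_itg' : IntervalIntegrable (fun u => n * h u) volume μ b := h_itg.const_mul n
  have hTc : ContinuousOn (fun u => Gt (√n * √(2 * Kinfstar p u f))) (Ico μ b) := by
    refine Gt_continuous.comp_continuousOn (continuousOn_const.mul (continuous_sqrt.comp_continuousOn (continuousOn_const.mul ?_)))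
    intro u hu
    obtain ⟨l', hl'⟩ := S.exists_dual (hμ.trans hu.1) hu.2
    exact (kinf_hasDeriv S (hμ.trans hu.1) hu.2 hl').continuousWithinAt.mono
      (fun x hx => hμ.trans hx.1)
  have hK : ∀ u ∈ Ioo μ b, Kinfstar p u f = Lf p f (l u) u := fun u hu =>
    kinf_eq S (hμ.trans hu.1.le) hu.2 (hl u hu)
  have hr : ∀ u ∈ Ioo μ b, ∀ j, 0 < 1 - l u * (f j - u) := fun u hu j => by
    have := (hl u hu).2.1 j; linarith
  have hkey := fun u (hu : u ∈ Ioo μ b) => S.key (hμ0.trans hu.1).le hu.2.le (hl u hu)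
  have hKpos : ∀ u ∈ Ioo μ b, 0 < 2 * Lf p f (l u) u := by
    intro u hu
    refine lt_of_lt_of_le ?_ (hkey u hu).1
    have h1 := hσ u hu
    have h2 := hl0 u hu
    have h3 := hr u hu i1
    rw [S.f1] at h3
    positivity
  have hTd : ∀ u ∈ Ioo μ b, HasDerivWithinAt (fun u => Gt (√n * √(2 * Kinfstar p u f)))
      (-((√(2 * π))⁻¹ * exp (-(n * Lf p f (l u) u)) * √n * (l u / √(2 * Lf p f (l u) u)))) (Ioi u) u := by
    intro u hu
    have d0 := (kinf_hasDeriv S (hμ.trans hu.1.le) hu.2 (hl u hu)).mono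
      (show Ioi u ⊆ Ici (∑ j, f j * p j) from fun x hx => (hμ.trans hu.1.le).trans (le_of_lt hx))
    have hne : 2 * Kinfstar p u f ≠ 0 := by rw [hK u hu]; exact (hKpos u hu).ne'
    have d1 := ((d0.const_mul 2).sqrt hne).const_mul (√n)
    have d2 := (Gt_hasDeriv (√n * √(2 * Kinfstar p u f))).comp_hasDerivWithinAt u d1
    have hs : 0 < √(2 * Lf p f (l u) u) := sqrt_pos.mpr (hKpos u hu)
    have esq : -(√n * √(2 * Kinfstar p u f)) ^ 2 / 2 = -(n * Lf p f (l u) u) := by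
      rw [hK u hu, mul_pow, sq_sqrt hn.le, sq_sqrt (hKpos u hu).le]; ring
    convert! d2 using 1
    rw [esq, hK u hu]
    field_simp
  have hTl : Filter.Tendsto (fun u => Gt (√n * √(2 * Kinfstar p u f))) (nhdsWithin b (Iio b)) (nhds 0) := by
    refine Gt_top.comp ?_
    apply Filter.Tendsto.const_mul_atTop (sqrt_pos.mpr hn)
    refine tendsto_sqrt_atTop.comp ?_
    exact (kinf_tendsto S).const_mul_atTop two_pos
  have hnX : ∀ u ∈ Ioo μ b, n * X u = (√(2 * π))⁻¹ * exp (-(n * Lf p f (l u) u)) * √n *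
      ((1 - l u * (f k - u)) * √(∑ j, p j * ((f j - u) / (1 - l u * (f j - u))) ^ 2))⁻¹ := by
    intro u hu
    rw [hX u hu, slope_eq hn (hσ u hu)]
  constructor
  · intro hk
    apply tail_lower hμb hTc hTd hTl h_itg'
    intro u hu
    have hσu := hσ u hu
    set σ := ∑ j, p j * ((f j - u) / (1 - l u * (f j - u))) ^ 2 with hσdef
    have h1 : (1 - ε) * (n * X u) ≤ n * h u := by
      have := mul_le_mul_of_nonneg_left (hlo u hu) hn.le
      linarith
    refine le_trans ?_ h1
    rw [hnX u hu]
    apply mul_le_mul_of_nonneg_left _ (by linarith)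
    apply mul_le_mul_of_nonneg_left _ (by positivity)
    have hrk := hr u hu k
    have hs : 0 < √(2 * Lf p f (l u) u) := sqrt_pos.mpr (hKpos u hu)
    have hsσ : 0 < √σ := sqrt_pos.mpr hσu
    rw [← one_div, div_le_div_iff₀ hs (mul_pos hrk hsσ), one_mul]
    apply le_sqrt_of_sq_le
    rw [mul_pow, mul_pow, sq_sqrt hσu.le]
    have := (hkey u hu).1
    rw [hk, S.f1]
    linarith
  · intro hk
    apply tail_upper hμb hTc hTd hTl h_itg'
    intro u hu
    have hσu := hσ u hu
    set σ := ∑ j, p j * ((f j - u) / (1 - l u * (f j - u))) ^ 2 with hσdef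
    have h1 : n * h u ≤ (1 + ε) * (n * X u) := by
      have := mul_le_mul_of_nonneg_left (hhi u hu) hn.le
      linarith
    refine le_trans h1 ?_
    rw [hnX u hu]
    apply mul_le_mul_of_nonneg_left _ (by linarith)
    apply mul_le_mul_of_nonneg_left _ (by positivity)
    have hrk := hr u hu k
    have hs : 0 < √(2 * Lf p f (l u) u) := sqrt_pos.mpr (hKpos u hu)
    have hsσ : 0 < √σ := sqrt_pos.mpr hσu
    have hlu := hl0 u hu
    rw [← one_div, div_le_div_iff₀ (mul_pos hrk hsσ) hs, one_mul]
    apply sqrt_le_iff.mpr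
    constructor
    · positivity
    rw [mul_pow, mul_pow, sq_sqrt hσu.le]
    have := (hkey u hu).2
    rw [hk, S.f0]
    have e : 1 - l u * (0 - u) = 1 + l u * u := by ring
    rw [e]
    linarith

end core


section final
variable {m : ℕ} {α p f : Fin (m + 1) → ℝ} {b n N ε : ℝ} {i0 i1 : Fin (m + 1)}

lemma Setup.reflect (S : Setup p f b i0 i1) : Setup p (fun j => b - f j) b i1 i0 where
  p_nonneg := S.p_nonneg
  p_sum := S.p_sum
  hb := S.hb
  f_mem := fun j => ⟨by linarith [(S.f_mem j).2], by linarith [(S.f_mem j).1]⟩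
  f0 := by rw [S.f1, sub_self]
  f1 := by rw [S.f0, sub_zero]
  p0 := S.p1
  p1 := S.p0

lemma sum_reflect {q : Fin (m + 1) → ℝ} (hq : ∑ j, q j = 1) :
    ∑ j, (b - f j) * q j = b - ∑ j, f j * q j := by
  simp_rw [sub_mul]
  rw [Finset.sum_sub_distrib, ← Finset.mul_sum, hq, mul_one]

lemma kinf_reflect (μ : ℝ) : Kinfstar p (b - μ) (fun j => b - f j) = Kinfstar p μ f := by
  unfold Kinfstar
  congr 1
  ext x
  constructor
  · rintro ⟨q, h1, h2, h3, h4⟩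
    refine ⟨q, h1, h2, ?_, h4⟩
    rw [sum_reflect h1.2] at h3
    linarith
  · rintro ⟨q, h1, h2, h3, h4⟩
    refine ⟨q, h1, h2, ?_, h4⟩
    rw [sum_reflect h1.2]
    linarith

lemma Qf_reflect (hα : ∀ j, 0 < α j) (hn : 1 < ∑ j, α j) (f0 : f i0 = 0) {μ : ℝ} (hμ : 0 < μ) :
    Qf α (fun j => b - f j) (b - μ) = 1 - Qf α f μ := by
  obtain ⟨hi, h1⟩ := inv_sum_integrable hα hn
  have hB : MeasurableSet {x : Fin (m + 1) → ℝ | μ * ∑ j, x j ≤ ∑ j, f j * x j} :=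
    measurableSet_le (by fun_prop) (by fun_prop)
  have hi2 : Integrable (fun x : Fin (m + 1) → ℝ => if μ * ∑ j, x j ≤ ∑ j, f j * x j then (∑ j, x j)⁻¹ else 0) (gamP α) := by
    refine (hi.indicator hB).congr (Filter.Eventually.of_forall fun x => ?_)
    simp [indicator]
  rw [Qf, Qf]
  refine Eq.trans ?_ (congrArg (fun z => z - (∑ j, α j - 1) *
    ∫ x, (if μ * ∑ j, x j ≤ ∑ j, f j * x j then (∑ j, x j)⁻¹ else 0) ∂gamP α) h1)
  rw [← mul_sub, ← integral_sub hi hi2]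
  congr 1
  apply integral_congr_ae
  have hy := gamP_hyper hα (c := fun j => f j - μ) (i := i0) (by simp [f0]; exact hμ.ne')
  filter_upwards [hy] with x hxy
  have e1 : ∑ j, (f j - μ) * x j = ∑ j, f j * x j - μ * ∑ j, x j := by
    simp_rw [sub_mul]; rw [Finset.sum_sub_distrib, ← Finset.mul_sum]
  have e2 : ∑ j, (b - f j) * x j = b * ∑ j, x j - ∑ j, f j * x j := by
    simp_rw [sub_mul]; rw [Finset.sum_sub_distrib, ← Finset.mul_sum]
  rw [e1] at hxy
  rw [e2]
  rcases lt_or_gt_of_ne hxy with h | h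
  · rw [if_pos (by linarith), if_neg (by linarith), sub_zero]
  · rw [if_neg (by linarith), if_pos (by linarith), sub_self]

lemma main_real (S : Setup p f b i0 i1) (hα : ∀ j, 0 < α j) (k : Fin (m + 1)) (hn : 0 < n)
    (hαp : ∀ j, α j = n * p j + if j = k then 1 else 0)
    (hε : 0 < ε) (hε1 : ε < 1) (hN : 200 ≤ ε * N) (hN0 : N ≤ n * p i0) (hN1 : N ≤ n * p i1)
    {μ : ℝ} (hμ : 0 < μ) (hμb : μ < b) :
    (k = i1 → (1 - ε) * Gt (√n * Afun p μ f) ≤ Qf α f μ) ∧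
    (k = i0 → Qf α f μ ≤ (1 + ε) * Gt (√n * Afun p μ f)) := by
  rcases lt_trichotomy (∑ j, f j * p j) μ with h | h | h
  · have hA : Afun p μ f = √(2 * Kinfstar p μ f) := by
      rw [Afun, Real.sign_of_pos (by linarith), one_mul]
    rw [hA]
    exact core S hα k hn hαp hε hε1 hN hN0 hN1 h.le hμb
  · have hA : Afun p μ f = √(2 * Kinfstar p μ f) := by
      rw [Afun, ← h, sub_self, Real.sign_zero, zero_mul, kinf_mean S (pf_lt S), mul_zero, sqrt_zero]
    rw [hA]
    exact core S hα k hn hαp hε hε1 hN hN0 hN1 h.le hμb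
  · have hA : √n * Afun p μ f = -(√n * √(2 * Kinfstar p μ f)) := by
      rw [Afun, Real.sign_of_neg (by linarith)]; ring
    have hasum : ∑ j, α j - 1 = n := by
      simp_rw [hαp, Finset.sum_add_distrib]
      rw [← Finset.mul_sum, S.p_sum]; simp
    have hc := core S.reflect hα k hn hαp hε hε1 hN hN1 hN0 (μ := b - μ)
      (by rw [sum_reflect S.p_sum]; linarith) (by linarith)
    rw [kinf_reflect, Qf_reflect hα (by linarith) S.f0 hμ] at hc
    rw [hA, Gt_neg]
    have hG : Gt (√n * √(2 * Kinfstar p μ f)) ≤ 1 / 2 := by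
      rw [← Gt_zero]; exact Gt_anti (by positivity)
    constructor
    · intro hk
      have := hc.2 hk
      nlinarith
    · intro hk
      have := hc.1 hk
      nlinarith

lemma c0_ge : 200 ≤ c0 := by
  unfold c0
  have h6 : (2.4 : ℝ) ≤ √6 := le_sqrt_of_sq_le (by norm_num)
  have h1 : (21 : ℝ) ≤ 8 + 49 * √6 / 9 := by linarith
  have h2 : (441 : ℝ) ≤ (8 + 49 * √6 / 9) ^ 2 := by nlinarith
  have hp := pi_lt_four
  have hp0 := pi_pos
  rw [div_mul_eq_mul_div, le_div_iff₀ hp0]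
  linarith

lemma gauss_Ici (c : ℝ) : gaussianReal 0 1 {x | c ≤ x} = ENNReal.ofReal (Gt c) := by
  have : {x : ℝ | c ≤ x} = Ici c := rfl
  rw [this, Gt, ofReal_measureReal]

end final

/-- **Two-sided Gaussian-type bound for a Dirichlet weighted sum** (Corollary 2). -/
theorem dirichlet_crossing_two_sided
    (m : ℕ) (hm : 1 ≤ m) (b : ℝ) (hb : 0 < b)
    (f : Fin (m + 1) → ℝ) (hf : ∀ i, f i ∈ Set.Icc (0 : ℝ) b)
    (hf0 : f 0 = 0) (hfm : f (Fin.last m) = b)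
    (α : Fin (m + 1) → ℝ) (hα : ∀ i, 0 < α i)
    (ε : ℝ) (hε : ε ∈ Set.Ioo (0 : ℝ) 1)
    (hmin : c0 / ε ^ 2 + 1 ≤ min (α 0) (α (Fin.last m)))
    (μ : ℝ) (hμ : μ ∈ Set.Ioo (0 : ℝ) b) :
    ENNReal.ofReal (1 - ε) *
        gaussianReal 0 1
          {x | Real.sqrt ((∑ j, α j) - 1) *
              Afun (fun ℓ => (if ℓ = Fin.last m then α ℓ - 1 else α ℓ) / ((∑ j, α j) - 1)) μ f
            ≤ x}
      ≤ dirichlet m α {w | μ ≤ ∑ ℓ, f ℓ * w ℓ} ∧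
    dirichlet m α {w | μ ≤ ∑ ℓ, f ℓ * w ℓ}
      ≤ ENNReal.ofReal (1 + ε) *
        gaussianReal 0 1
          {x | Real.sqrt ((∑ j, α j) - 1) *
              Afun (fun ℓ => (if ℓ = 0 then α ℓ - 1 else α ℓ) / ((∑ j, α j) - 1)) μ f
            ≤ x} := by
  obtain ⟨hε0, hε1⟩ := hε
  have hc0 := c0_ge
  set N := c0 / ε ^ 2 with hNdef
  have hε2 : 0 < ε ^ 2 := by positivity
  have hN : 200 ≤ ε * N := by
    have e : ε * N = c0 / ε := by rw [hNdef]; field_simp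
    rw [e, le_div_iff₀ hε0]; nlinarith
  have hN200 : 200 ≤ N := by nlinarith
  have ha0 : N + 1 ≤ α 0 := hmin.trans (min_le_left _ _)
  have ha1 : N + 1 ≤ α (Fin.last m) := hmin.trans (min_le_right _ _)
  have hle0 : α 0 ≤ ∑ j, α j := Finset.single_le_sum (fun j _ => (hα j).le) (Finset.mem_univ 0)
  set n := ∑ j, α j - 1 with hndef
  have hn : 0 < n := by linarith
  have hn1 : 1 < ∑ j, α j := by linarith
  have hgen : ∀ k : Fin (m + 1), N + 1 ≤ α k →
      (∀ j, α j = n * ((if j = k then α j - 1 else α j) / n) + if j = k then 1 else 0) ∧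
      (∀ i, N + 1 ≤ α i → N ≤ n * ((if i = k then α i - 1 else α i) / n)) ∧
      Setup (fun ℓ => (if ℓ = k then α ℓ - 1 else α ℓ) / n) f b 0 (Fin.last m) := by
    intro k hk
    have hnn : ∀ i, N + 1 ≤ α i → N ≤ (if i = k then α i - 1 else α i) := by
      intro i hi; split_ifs <;> linarith
    refine ⟨?_, ?_, ?_⟩
    · intro j
      rw [mul_div_cancel₀ _ hn.ne']
      split_ifs <;> ring
    · intro i hi
      rw [mul_div_cancel₀ _ hn.ne']
      exact hnn i hi
    · refine ⟨?_, ?_, hb, hf, hf0, hfm, ?_, ?_⟩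
      · intro j
        apply div_nonneg _ hn.le
        split_ifs with h
        · rw [h]; linarith
        · exact (hα j).le
      · rw [← Finset.sum_div, div_eq_one_iff_eq hn.ne', hndef]
        have : ∀ j, (if j = k then α j - 1 else α j) = α j - if j = k then 1 else 0 := by
          intro j; split_ifs <;> ring
        simp_rw [this]
        rw [Finset.sum_sub_distrib]; simp
      · exact div_pos (by linarith [hnn 0 ha0]) hn
      · exact div_pos (by linarith [hnn _ ha1]) hn
  rw [gauss_Ici, gauss_Ici, dirichlet_eq hα hn1, ← ENNReal.ofReal_mul (by linarith),
    ← ENNReal.ofReal_mul (by linarith)]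
  constructor
  · apply ENNReal.ofReal_le_ofReal
    obtain ⟨g1, g2, g3⟩ := hgen (Fin.last m) ha1
    exact (main_real g3 hα _ hn g1 hε0 hε1 hN (g2 _ ha0) (g2 _ ha1) hμ.1 hμ.2).1 rfl
  · apply ENNReal.ofReal_le_ofReal
    obtain ⟨g1, g2, g3⟩ := hgen 0 ha0
    exact (main_real g3 hα _ hn g1 hε0 hε1 hN (g2 _ ha0) (g2 _ ha1) hμ.1 hμ.2).2 rfl

end
end

section
/- Hoeffding-type inequality for the Dirichlet process posterior mean (conditional form via Bayesian bootstrap weights): Let n ≥ 1, fix ε ∈ (0,1) and γ ≥ c₀·ε^{−2} + 1, and let g_0, g_1, …, g_{n+1} ∈ [0,1] with g_0 = 0 and g_{n+1} = 1. Let w ∼ Dir(γ, 1, …, 1, γ) be a Dirichlet random vector on Δ_{n+1} (parameter γ in positions 0 and n+1, and 1 in the n middle positions), and set W = Σ_{i=0}^{n+1} w_i g_i and ĝ = (1/n) Σ_{i=1}^n g_i. Then for every δ ∈ (0,1), P( W − ĝ ≥ √( log((1+ε)/δ) / (2(n + 2γ − 1)) ) + γ/(n + 2γ − 1) ) ≤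 δ. -/
open MeasureTheory ProbabilityTheory Real Set
open scoped ENNReal

noncomputable section

/-! ### Proof of the main theorem -/

lemma lintegral_gamma_Ioi {α a : ℝ} (hα : 0 < α) (ha : 0 < a) :
    ∫⁻ t in Ioi (0:ℝ), ENNReal.ofReal (t ^ (α - 1) * Real.exp (-(a * t)))
      = ENNReal.ofReal ((1 / a) ^ α * Real.Gamma α) := by
  have h := Real.integral_rpow_mul_exp_neg_mul_Ioi hα ha
  have hpos : 0 < (1 / a) ^ α * Real.Gamma α :=
    mul_pos (Real.rpow_pos_of_pos (by positivity) _) (Real.Gamma_pos_of_pos hα)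
  rw [← h, ofReal_integral_eq_lintegral_ofReal]
  · by_contra hc
    have := integral_undef hc
    rw [h] at this
    exact hpos.ne' this
  · filter_upwards [ae_restrict_mem measurableSet_Ioi] with t ht
    have ht' : (0:ℝ) < t := ht
    positivity

/-- Unnormalized gamma density with values in `ℝ≥0∞`. -/
def hGam (α a : ℝ) : ℝ → ℝ≥0∞ :=
  (Ici (0:ℝ)).indicator fun t => ENNReal.ofReal (t ^ (α - 1) * Real.exp (-(a * t)))

lemma measurable_hGam (α a : ℝ) : Measurable (hGam α a) := by
  unfold hGam
  refine Measurable.indicator ?_ measurableSet_Ici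
  fun_prop

lemma lintegral_hGam {α a : ℝ} (hα : 0 < α) (ha : 0 < a) :
    ∫⁻ t, hGam α a t = ENNReal.ofReal ((1 / a) ^ α * Real.Gamma α) := by
  unfold hGam
  rw [lintegral_indicator measurableSet_Ici, ← lintegral_gamma_Ioi hα ha]
  exact setLIntegral_congr Ioi_ae_eq_Ici.symm

lemma lintegral_pi_prod {m : ℕ} (f : Fin m → ℝ → ℝ≥0∞) (hf : ∀ i, Measurable (f i)) :
    ∫⁻ x : Fin m → ℝ, ∏ i, f i (x i) = ∏ i, ∫⁻ t, f i t := by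
  induction m with
  | zero => simp [volume_pi]
  | succ n ih =>
    have hm : ∀ i : Fin n, Measurable fun a : Fin n → ℝ => f i.succ (a i) :=
      fun i => (hf _).comp (measurable_pi_apply i)
    calc ∫⁻ x : Fin (n+1) → ℝ, ∏ i, f i (x i)
        = ∫⁻ p : ℝ × (Fin n → ℝ), f 0 p.1 * ∏ i, f i.succ (p.2 i) := by
          rw [← ((volume_preserving_piFinSuccAbove (fun _ : Fin (n+1) => ℝ) 0).symm).lintegral_comp_emb
            (MeasurableEquiv.measurableEmbedding _)]
          simp [Fin.prod_univ_succ, MeasurableEquiv.piFinSuccAbove]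
      _ = (∫⁻ t, f 0 t) * ∫⁻ y : Fin n → ℝ, ∏ i, f i.succ (y i) := by
          rw [Measure.volume_eq_prod, lintegral_prod_mul (f := f 0)
            (g := fun y : Fin n → ℝ => ∏ i, f i.succ (y i)) (hf 0).aemeasurable]
          exact (Finset.measurable_prod _ fun i _ => hm i).aemeasurable
      _ = _ := by rw [ih _ fun i => hf _, Fin.prod_univ_succ]

lemma lintegral_smul_pi {m : ℕ} {r : ℝ} (hr : 0 < r) (F : (Fin m → ℝ) → ℝ≥0∞)
    (hF : Measurable F) :
    ENNReal.ofReal (r ^ m) * ∫⁻ x : Fin m → ℝ, F (r • x) = ∫⁻ y, F y := by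
  have h := Measure.map_addHaar_smul (volume : Measure (Fin m → ℝ)) hr.ne'
  rw [← lintegral_map (g := fun x : Fin m → ℝ => r • x) hF (measurable_const_smul r), h]
  rw [lintegral_smul_measure, smul_eq_mul, ← mul_assoc, ← ENNReal.ofReal_mul (by positivity)]
  have : r ^ m * |(r ^ Module.finrank ℝ (Fin m → ℝ))⁻¹| = 1 := by
    rw [Module.finrank_fin_fun, abs_of_pos (by positivity)]
    field_simp
  rw [this]; simp

/-- The linear form in the simplex coordinates. -/
def cform {m : ℕ} (a : Fin (m + 1) → ℝ) (x : Fin m → ℝ) : ℝ :=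
  (∑ i, a i.castSucc * x i) + a (Fin.last m) * (1 - ∑ i, x i)

lemma measurable_dirichletDensity (m : ℕ) (α : Fin (m + 1) → ℝ) :
    Measurable (dirichletDensity m α) := by
  unfold dirichletDensity
  refine Measurable.indicator (by fun_prop) ?_
  have h1 : MeasurableSet {x : Fin m → ℝ | ∀ i, 0 ≤ x i} := by
    rw [setOf_forall]
    exact MeasurableSet.iInter fun i => measurableSet_le measurable_const (measurable_pi_apply i)
  have h2 : MeasurableSet {x : Fin m → ℝ | ∑ i, x i ≤ 1} :=
    measurableSet_le (by fun_prop) measurable_const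
  exact h1.inter h2

lemma cform_pos {m : ℕ} {a : Fin (m + 1) → ℝ} (ha : ∀ i, 0 < a i) {x : Fin m → ℝ}
    (hx : ∀ i, 0 ≤ x i) (hs : ∑ i, x i ≤ 1) : 0 < cform a x := by
  unfold cform
  by_contra hc
  have h1 : 0 ≤ ∑ i, a i.castSucc * x i :=
    Finset.sum_nonneg fun i _ => mul_nonneg (ha _).le (hx i)
  have h2 : 0 ≤ a (Fin.last m) * (1 - ∑ i, x i) := mul_nonneg (ha _).le (by linarith)
  have h3 : ∑ i, a i.castSucc * x i = 0 := by linarith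
  have h4 : a (Fin.last m) * (1 - ∑ i, x i) = 0 := by linarith
  rw [Finset.sum_eq_zero_iff_of_nonneg fun i _ => mul_nonneg (ha _).le (hx i)] at h3
  have h5 : ∑ i, x i = 0 := Finset.sum_eq_zero fun i hi => by
    have := h3 i hi
    rcases mul_eq_zero.1 this with h | h
    · exact absurd h (ha _).ne'
    · exact h
  rw [h5] at h4
  have := ha (Fin.last m)
  linarith

lemma pointwise_key {m : ℕ} (α a : Fin (m + 1) → ℝ) {r : ℝ} (hr : 0 < r) (x : Fin m → ℝ) :
    ENNReal.ofReal (dirichletDensity m α x) *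
        ENNReal.ofReal (r ^ ((∑ i, α i) - 1) * Real.exp (-(cform a x * r)))
      = ENNReal.ofReal (r ^ m) * ((∏ i : Fin m, hGam (α i.castSucc) (a i.castSucc) ((r • x) i)) *
          hGam (α (Fin.last m)) (a (Fin.last m)) (r - ∑ i, (r • x) i)) := by
  have hsum : r - ∑ i, (r • x) i = r * (1 - ∑ i, x i) := by
    simp only [Pi.smul_apply, smul_eq_mul, ← Finset.mul_sum]; ring
  rw [hsum]
  by_cases hx : (∀ i, 0 ≤ x i) ∧ ∑ i, x i ≤ 1
  · obtain ⟨hx, hs⟩ := hx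
    have hs' : 0 ≤ 1 - ∑ i, x i := by linarith
    have e1 : dirichletDensity m α x = (∏ i : Fin m, x i ^ (α i.castSucc - 1)) *
        (1 - ∑ i, x i) ^ (α (Fin.last m) - 1) := by
      unfold dirichletDensity
      rw [indicator_of_mem]
      exact ⟨hx, hs⟩
    have e2 : ∀ i : Fin m, hGam (α i.castSucc) (a i.castSucc) ((r • x) i) =
        ENNReal.ofReal ((r * x i) ^ (α i.castSucc - 1) * Real.exp (-(a i.castSucc * (r * x i)))) := by
      intro i
      unfold hGam
      rw [indicator_of_mem]
      · simp
      · exact mul_nonneg hr.le (hx i)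
    have e3 : hGam (α (Fin.last m)) (a (Fin.last m)) (r * (1 - ∑ i, x i)) =
        ENNReal.ofReal ((r * (1 - ∑ i, x i)) ^ (α (Fin.last m) - 1) *
          Real.exp (-(a (Fin.last m) * (r * (1 - ∑ i, x i))))) := by
      unfold hGam
      rw [indicator_of_mem]
      exact mul_nonneg hr.le hs'
    have n1 : ∀ i : Fin m, 0 ≤ x i ^ (α i.castSucc - 1) := fun i => Real.rpow_nonneg (hx i) _
    have n2 : 0 ≤ (1 - ∑ i, x i) ^ (α (Fin.last m) - 1) := Real.rpow_nonneg hs' _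
    rw [e1, e3, Finset.prod_congr rfl fun i _ => e2 i, ← ENNReal.ofReal_prod_of_nonneg,
      ← ENNReal.ofReal_mul, ← ENNReal.ofReal_mul, ← ENNReal.ofReal_mul]
    · congr 1
      have p1 : ∀ i : Fin m, (r * x i) ^ (α i.castSucc - 1) * Real.exp (-(a i.castSucc * (r * x i)))
          = r ^ (α i.castSucc - 1) * (x i ^ (α i.castSucc - 1)) *
            Real.exp (-(a i.castSucc * (r * x i))) := by
        intro i; rw [Real.mul_rpow hr.le (hx i)]
      rw [Finset.prod_congr rfl fun i _ => p1 i, Finset.prod_mul_distrib, Finset.prod_mul_distrib,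
        ← Real.exp_sum, Real.mul_rpow hr.le hs', ← Real.rpow_sum_of_pos hr]
      have p2 : r ^ ((∑ i, α i) - 1) = r ^ m * r ^ (∑ i : Fin m, (α i.castSucc - 1)) *
          r ^ (α (Fin.last m) - 1) := by
        rw [← Real.rpow_natCast, ← Real.rpow_add hr, ← Real.rpow_add hr, Fin.sum_univ_castSucc]
        congr 1
        rw [Finset.sum_sub_distrib]
        simp
        ring
      have p3 : Real.exp (-(cform a x * r)) =
          Real.exp (∑ i : Fin m, -(a i.castSucc * (r * x i))) *
          Real.exp (-(a (Fin.last m) * (r * (1 - ∑ i, x i)))) := by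
        rw [← Real.exp_add]
        congr 1
        unfold cform
        rw [add_mul, neg_add, Finset.sum_mul, ← Finset.sum_neg_distrib]
        congr 1
        · exact Finset.sum_congr rfl fun i _ => by ring
        · ring
      rw [p2, p3]
      ring
    all_goals first
      | exact Finset.prod_nonneg fun i _ => mul_nonneg (Real.rpow_nonneg (mul_nonneg hr.le (hx i)) _)
          (Real.exp_pos _).le
      | exact mul_nonneg (Finset.prod_nonneg fun i _ => n1 i) n2
      | exact fun i _ => mul_nonneg (Real.rpow_nonneg (mul_nonneg hr.le (hx i)) _)
          (Real.exp_pos _).le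
      | positivity
  · have e1 : dirichletDensity m α x = 0 := by
      unfold dirichletDensity
      rw [indicator_of_notMem]
      exact hx
    rw [e1, ENNReal.ofReal_zero, zero_mul]
    symm
    rw [mul_eq_zero]; right
    rw [mul_eq_zero]
    rw [not_and_or] at hx
    rcases hx with hx | hx
    · left
      push Not at hx
      obtain ⟨i, hi⟩ := hx
      refine Finset.prod_eq_zero (Finset.mem_univ i) ?_
      unfold hGam
      rw [indicator_of_notMem]
      simp only [Pi.smul_apply, smul_eq_mul, mem_Ici, not_le]
      exact mul_neg_of_pos_of_neg hr hi
    · right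
      unfold hGam
      rw [indicator_of_notMem]
      simp only [mem_Ici, not_le]
      exact mul_neg_of_pos_of_neg hr (by linarith)

/-- Markov–Krein type identity for the Dirichlet distribution. -/
lemma dirichlet_markov_krein {m : ℕ} (α a : Fin (m + 1) → ℝ) (hα : ∀ i, 0 < α i)
    (ha : ∀ i, 0 < a i) :
    ∫⁻ x, ENNReal.ofReal (dirichletDensity m α x) *
        ENNReal.ofReal ((1 / cform a x) ^ (∑ i, α i) * Real.Gamma (∑ i, α i))
      = ∏ i, ENNReal.ofReal ((1 / a i) ^ α i * Real.Gamma (α i)) := by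
  have hN : 0 < ∑ i, α i := Finset.sum_pos (fun i _ => hα i) ⟨0, Finset.mem_univ _⟩
  have hd := measurable_dirichletDensity m α
  have hcm : Measurable (cform a) := by unfold cform; fun_prop
  set G : (Fin m → ℝ) → ℝ → ℝ≥0∞ := fun y r =>
    (∏ i : Fin m, hGam (α i.castSucc) (a i.castSucc) (y i)) *
      hGam (α (Fin.last m)) (a (Fin.last m)) (r - ∑ i, y i) with hG
  have hGm : Measurable (Function.uncurry G) := by
    refine Measurable.mul ?_ ?_
    · exact Finset.measurable_prod _ fun i _ => (measurable_hGam _ _).comp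
        ((measurable_pi_apply i).comp measurable_fst)
    · refine (measurable_hGam _ _).comp ?_
      fun_prop
  have hG0 : ∀ y r, r < 0 → G y r = 0 := by
    intro y r hr
    simp only [hG, mul_eq_zero]
    by_cases h : ∀ i, 0 ≤ y i
    · right
      unfold hGam
      rw [indicator_of_notMem]
      have : 0 ≤ ∑ i, y i := Finset.sum_nonneg fun i _ => h i
      simp only [mem_Ici, not_le]; linarith
    · left
      push Not at h
      obtain ⟨i, hi⟩ := h
      refine Finset.prod_eq_zero (Finset.mem_univ i) ?_
      unfold hGam
      rw [indicator_of_notMem]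
      simpa using hi
  calc ∫⁻ x, ENNReal.ofReal (dirichletDensity m α x) *
        ENNReal.ofReal ((1 / cform a x) ^ (∑ i, α i) * Real.Gamma (∑ i, α i))
      = ∫⁻ x, ∫⁻ r in Ioi (0:ℝ), ENNReal.ofReal (dirichletDensity m α x) *
        ENNReal.ofReal (r ^ ((∑ i, α i) - 1) * Real.exp (-(cform a x * r))) := by
        refine lintegral_congr fun x => ?_
        rw [lintegral_const_mul _ (by fun_prop)]
        by_cases hx : (∀ i, 0 ≤ x i) ∧ ∑ i, x i ≤ 1
        · rw [lintegral_gamma_Ioi hN (cform_pos ha hx.1 hx.2)]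
        · have e1 : dirichletDensity m α x = 0 := by
            unfold dirichletDensity
            rw [indicator_of_notMem]
            exact hx
          simp [e1]
    _ = ∫⁻ r in Ioi (0:ℝ), ∫⁻ x, ENNReal.ofReal (dirichletDensity m α x) *
        ENNReal.ofReal (r ^ ((∑ i, α i) - 1) * Real.exp (-(cform a x * r))) := by
        rw [lintegral_lintegral_swap]
        refine Measurable.aemeasurable ?_
        unfold Function.uncurry
        fun_prop
    _ = ∫⁻ r in Ioi (0:ℝ), ∫⁻ y, G y r := by
        refine setLIntegral_congr_fun measurableSet_Ioi fun r hr => ?_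
        have hr' : (0:ℝ) < r := hr
        have hGr : Measurable fun y => G y r := hGm.comp (measurable_id.prodMk measurable_const)
        rw [← lintegral_smul_pi hr' (fun y => G y r) hGr]
        have hGr2 : Measurable fun x : Fin m → ℝ => G (r • x) r :=
          hGr.comp (measurable_const_smul r)
        rw [← lintegral_const_mul _ hGr2]
        exact lintegral_congr fun x => pointwise_key α a hr' x
    _ = ∫⁻ r, ∫⁻ y, G y r := by
        rw [setLIntegral_congr (Ioi_ae_eq_Ici (a := (0:ℝ))), ← lintegral_indicator measurableSet_Ici]
        refine lintegral_congr fun r => ?_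
        by_cases hr : 0 ≤ r
        · rw [indicator_of_mem]; exact hr
        · rw [indicator_of_notMem (by simpa using hr)]
          push Not at hr
          simp [hG0 _ r hr]
    _ = ∫⁻ y, ∫⁻ r, G y r := by
        rw [lintegral_lintegral_swap]
        exact (hGm.comp measurable_swap).aemeasurable
    _ = ∫⁻ y : Fin m → ℝ, (∏ i : Fin m, hGam (α i.castSucc) (a i.castSucc) (y i)) *
          ∫⁻ r, hGam (α (Fin.last m)) (a (Fin.last m)) r := by
        refine lintegral_congr fun y => ?_
        have hm1 : Measurable fun r : ℝ =>
            hGam (α (Fin.last m)) (a (Fin.last m)) (r - ∑ i, y i) :=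
          (measurable_hGam _ _).comp (by fun_prop)
        simp only [hG]
        rw [lintegral_const_mul _ hm1]
        rw [lintegral_sub_right_eq_self (μ := volume)
          (fun r => hGam (α (Fin.last m)) (a (Fin.last m)) r)]
    _ = _ := by
        have hm2 : Measurable fun y : Fin m → ℝ =>
            ∏ i : Fin m, hGam (α i.castSucc) (a i.castSucc) (y i) :=
          Finset.measurable_prod _ fun i _ => (measurable_hGam _ _).comp (measurable_pi_apply i)
        rw [lintegral_mul_const _ hm2, lintegral_pi_prod (fun i : Fin m => hGam (α i.castSucc) (a i.castSucc))
            fun i => measurable_hGam _ _,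
          lintegral_hGam (hα _) (ha _), Fin.prod_univ_castSucc]
        congr 1
        exact Finset.prod_congr rfl fun i _ => lintegral_hGam (hα _) (ha _)

lemma dirichlet_tail_le {m : ℕ} (α a : Fin (m + 1) → ℝ) (hα : ∀ i, 0 < α i)
    (ha : ∀ i, 0 < a i) (E : Set (Fin (m + 1) → ℝ)) (hE : MeasurableSet E)
    (h : ∀ x : Fin m → ℝ,
      (Fin.snoc x (1 - ∑ i, x i) : Fin (m + 1) → ℝ) ∈ E → cform a x ≤ 1) :
    dirichlet m α E ≤ ENNReal.ofReal (∏ i, (1 / a i) ^ α i) := by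
  have hN : 0 < ∑ i, α i := Finset.sum_pos (fun i _ => hα i) ⟨0, Finset.mem_univ _⟩
  have hGN : 0 < Real.Gamma (∑ i, α i) := Real.Gamma_pos_of_pos hN
  have hd := measurable_dirichletDensity m α
  have hsm : Measurable (fun x : Fin m → ℝ => (Fin.snoc x (1 - ∑ i, x i) : Fin (m + 1) → ℝ)) := by
    rw [measurable_pi_iff]
    intro i
    refine Fin.lastCases ?_ (fun j => ?_) i
    · simp only [Fin.snoc_last]; fun_prop
    · simp only [Fin.snoc_castSucc]; fun_prop
  set E' := (fun x : Fin m → ℝ => (Fin.snoc x (1 - ∑ i, x i) : Fin (m + 1) → ℝ)) ⁻¹' E with hE'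
  have hE'm : MeasurableSet E' := hsm hE
  have key1 : dirichletBase m α Set.univ * ENNReal.ofReal (Real.Gamma (∑ i, α i)) =
      ∏ i, ENNReal.ofReal (Real.Gamma (α i)) := by
    have := dirichlet_markov_krein α (fun _ => 1) hα (fun _ => one_pos)
    have hc : ∀ x : Fin m → ℝ, cform (fun _ => 1) x = 1 := by
      intro x; unfold cform; simp
    simp only [hc, div_one, Real.one_rpow, one_mul] at this
    rw [← this, lintegral_mul_const _ (by fun_prop)]
    unfold dirichletBase
    rw [withDensity_apply _ MeasurableSet.univ, Measure.restrict_univ]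
  have key2 : dirichletBase m α E' * ENNReal.ofReal (Real.Gamma (∑ i, α i)) ≤
      ENNReal.ofReal (∏ i, (1 / a i) ^ α i) * ∏ i, ENNReal.ofReal (Real.Gamma (α i)) := by
    have hk := dirichlet_markov_krein α a hα ha
    have hp : ∏ i, ENNReal.ofReal ((1 / a i) ^ α i * Real.Gamma (α i)) =
        ENNReal.ofReal (∏ i, (1 / a i) ^ α i) * ∏ i, ENNReal.ofReal (Real.Gamma (α i)) := by
      have hn : ∀ i, 0 ≤ (1 / a i) ^ α i := fun i =>
        Real.rpow_nonneg (one_div_nonneg.2 (ha i).le) _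
      rw [ENNReal.ofReal_prod_of_nonneg fun i _ => hn i, ← Finset.prod_mul_distrib]
      exact Finset.prod_congr rfl fun i _ => ENNReal.ofReal_mul (hn i)
    rw [← hp, ← hk]
    unfold dirichletBase
    rw [withDensity_apply _ hE'm, ← lintegral_mul_const _ (by fun_prop)]
    refine le_trans (setLIntegral_mono' (g := fun x => ENNReal.ofReal (dirichletDensity m α x) *
        ENNReal.ofReal ((1 / cform a x) ^ (∑ i, α i) * Real.Gamma (∑ i, α i))) hE'm ?_)
      (setLIntegral_le_lintegral _ _)
    intro x hx
    by_cases hxs : (∀ i, 0 ≤ x i) ∧ ∑ i, x i ≤ 1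
    · have hc0 := cform_pos ha hxs.1 hxs.2
      have hc1 := h x hx
      have : 1 ≤ (1 / cform a x) ^ (∑ i, α i) :=
        Real.one_le_rpow (by rw [le_div_iff₀ hc0]; linarith) hN.le
      gcongr
      nlinarith
    · have e1 : dirichletDensity m α x = 0 := by
        unfold dirichletDensity
        rw [indicator_of_notMem]
        exact hxs
      simp [e1]
  have key3 : dirichletBase m α E' ≤
      ENNReal.ofReal (∏ i, (1 / a i) ^ α i) * dirichletBase m α Set.univ := by
    rw [← key1, ← mul_assoc] at key2
    exact (ENNReal.mul_le_mul_iff_left (by simpa using hGN) ENNReal.ofReal_ne_top).1 key2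
  unfold dirichlet
  rw [Measure.map_apply hsm hE, Measure.smul_apply, smul_eq_mul]
  calc _ ≤ (dirichletBase m α Set.univ)⁻¹ *
      (ENNReal.ofReal (∏ i, (1 / a i) ^ α i) * dirichletBase m α Set.univ) := by gcongr
    _ = ENNReal.ofReal (∏ i, (1 / a i) ^ α i) *
      ((dirichletBase m α Set.univ)⁻¹ * dirichletBase m α Set.univ) := by ring
    _ ≤ ENNReal.ofReal (∏ i, (1 / a i) ^ α i) * 1 := by
      gcongr; exact ENNReal.inv_mul_le_one _
    _ = _ := mul_one _

lemma cform_affine {m : ℕ} (g : Fin (m + 1) → ℝ) (s μ : ℝ) (x : Fin m → ℝ) :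
    cform (fun i => 1 - s * (g i - μ)) x =
      1 - s * ((∑ i, (Fin.snoc x (1 - ∑ i, x i) : Fin (m + 1) → ℝ) i * g i) - μ) := by
  rw [Fin.sum_univ_castSucc]
  simp only [Fin.snoc_castSucc, Fin.snoc_last]
  unfold cform
  have : ∑ i : Fin m, (1 - s * (g i.castSucc - μ)) * x i =
      (1 + s * μ) * ∑ i, x i - s * ∑ i, x i * g i.castSucc := by
    rw [Finset.mul_sum, Finset.mul_sum, ← Finset.sum_sub_distrib]
    exact Finset.sum_congr rfl fun i _ => by ring
  rw [this]
  ring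

/-- Bernoulli case of Pinsker's inequality. -/
lemma bernoulli_pinsker {p q : ℝ} (hp : 0 < p) (hpq : p ≤ q) (hq : q < 1) :
    2 * (q - p) ^ 2 ≤ p * Real.log (p / q) + (1 - p) * Real.log ((1 - p) / (1 - q)) := by
  have hp1 : p < 1 := lt_of_le_of_lt hpq hq
  set φ : ℝ → ℝ := fun u => -(p * Real.log u) - (1 - p) * Real.log (1 - u) - 2 * (u - p) ^ 2
    with hφ
  have hder : ∀ u ∈ Icc p q, HasDerivAt φ ((u - p) / (u * (1 - u)) - 4 * (u - p)) u := by
    intro u hu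
    have hu0 : 0 < u := lt_of_lt_of_le hp hu.1
    have hu1 : 0 < 1 - u := by linarith [hu.2]
    have h1 := ((Real.hasDerivAt_log hu0.ne').const_mul p).neg
    have h2 := (((hasDerivAt_id u).const_sub 1).log hu1.ne').const_mul (1 - p)
    have h3 := (((hasDerivAt_id u).sub_const p).pow 2).const_mul 2
    convert! (h1.sub h2).sub h3 using 1
    simp only [id]
    field_simp
    ring
  have hmono : MonotoneOn φ (Icc p q) := by
    refine monotoneOn_of_deriv_nonneg (convex_Icc p q)
      (fun u hu => (hder u hu).continuousAt.continuousWithinAt)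
      (fun u hu => (hder u (interior_subset hu)).differentiableAt.differentiableWithinAt) ?_
    intro u hu
    have hu := interior_subset hu
    rw [(hder u hu).deriv]
    have hu0 : 0 < u := lt_of_lt_of_le hp hu.1
    have hu1 : 0 < 1 - u := by linarith [hu.2]
    have hup : 0 ≤ u - p := by linarith [hu.1]
    have : 4 * (u - p) ≤ (u - p) / (u * (1 - u)) := by
      rw [le_div_iff₀ (by positivity)]
      nlinarith [mul_nonneg hup (sq_nonneg (2 * u - 1))]
    linarith
  have hle := hmono (left_mem_Icc.2 hpq) (right_mem_Icc.2 hpq) hpq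
  rw [Real.log_div hp.ne' (by linarith), Real.log_div (by linarith) (by linarith)]
  simp only [hφ] at hle
  nlinarith

lemma prod_rpow_eq_exp {k : ℕ} (α a : Fin k → ℝ) (ha : ∀ i, 0 < a i) :
    ∏ i, (1 / a i) ^ α i = Real.exp (-∑ i, α i * Real.log (a i)) := by
  rw [← Finset.sum_neg_distrib, Real.exp_sum]
  refine Finset.prod_congr rfl fun i _ => ?_
  rw [Real.rpow_def_of_pos (one_div_pos.2 (ha i)), one_div, Real.log_inv]
  congr 1; ring

/-- Hoeffding bound for a linear functional of a Dirichlet vector. -/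
lemma dirichlet_hoeffding {k : ℕ} (α g : Fin (k + 1) → ℝ) (hα : ∀ i, 0 < α i)
    (hg : ∀ i, g i ∈ Icc (0:ℝ) 1) {N M μ : ℝ} (hN : ∑ i, α i = N)
    (hM : ∑ i, α i * g i = N * M) (hM0 : 0 < M) (hMμ : M < μ) (hμ : μ < 1) :
    dirichlet k α {w | μ ≤ ∑ i, w i * g i} ≤ ENNReal.ofReal (Real.exp (-(2 * N * (μ - M) ^ 2))) := by
  have hμ0 : 0 < μ := hM0.trans hMμ
  have hμ1 : 0 < 1 - μ := by linarith
  have hNpos : 0 < N := by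
    rw [← hN]; exact Finset.sum_pos (fun i _ => hα i) ⟨0, Finset.mem_univ _⟩
  set s := (μ - M) / (μ * (1 - μ)) with hs
  have hs0 : 0 < s := div_pos (by linarith) (by positivity)
  have hA : 1 + s * μ = (1 - M) / (1 - μ) := by rw [hs]; field_simp; ring
  have hB : 1 - s * (1 - μ) = M / μ := by rw [hs]; field_simp; ring
  have hApos : 0 < (1 - M) / (1 - μ) := div_pos (by linarith) hμ1
  have hBpos : 0 < M / μ := div_pos hM0 hμ0
  have hai : ∀ i, 1 - s * (g i - μ) = (1 - g i) * ((1 - M) / (1 - μ)) + g i * (M / μ) := by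
    intro i; rw [← hA, ← hB]; ring
  have hapos : ∀ i, 0 < 1 - s * (g i - μ) := by
    intro i
    rw [hai i]
    have h0 := (hg i).1
    have h1 := (hg i).2
    rcases h0.eq_or_lt with h | h
    · rw [← h]; simpa using hApos
    · have := mul_nonneg (sub_nonneg.2 h1) hApos.le
      have := mul_pos h hBpos
      linarith
  refine (dirichlet_tail_le α (fun i => 1 - s * (g i - μ)) hα hapos _
    (measurableSet_le measurable_const (by fun_prop)) ?_).trans ?_
  · intro x hx
    rw [cform_affine]
    have hx : μ ≤ _ := hx
    nlinarith
  · apply ENNReal.ofReal_le_ofReal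
    rw [prod_rpow_eq_exp _ _ hapos]
    apply Real.exp_le_exp.2
    apply neg_le_neg
    have hlog : ∀ i, (1 - g i) * Real.log ((1 - M) / (1 - μ)) + g i * Real.log (M / μ) ≤
        Real.log (1 - s * (g i - μ)) := by
      intro i
      rw [hai i]
      have := strictConcaveOn_log_Ioi.concaveOn.2 (mem_Ioi.2 hApos) (mem_Ioi.2 hBpos)
        (sub_nonneg.2 (hg i).2) (hg i).1 (by ring)
      simpa only [smul_eq_mul] using this
    have hsum : ∑ i, α i * ((1 - g i) * Real.log ((1 - M) / (1 - μ)) + g i * Real.log (M / μ)) =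
        N * (M * Real.log (M / μ) + (1 - M) * Real.log ((1 - M) / (1 - μ))) := by
      have : ∀ i, α i * ((1 - g i) * Real.log ((1 - M) / (1 - μ)) + g i * Real.log (M / μ)) =
          α i * Real.log ((1 - M) / (1 - μ)) +
            (α i * g i) * (Real.log (M / μ) - Real.log ((1 - M) / (1 - μ))) := fun i => by ring
      rw [Finset.sum_congr rfl fun i _ => this i, Finset.sum_add_distrib, ← Finset.sum_mul,
        ← Finset.sum_mul, hN, hM]
      ring
    calc 2 * N * (μ - M) ^ 2 = N * (2 * (μ - M) ^ 2) := by ring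
      _ ≤ N * (M * Real.log (M / μ) + (1 - M) * Real.log ((1 - M) / (1 - μ))) :=
        mul_le_mul_of_nonneg_left (bernoulli_pinsker hM0 hMμ.le hμ) hNpos.le
      _ ≤ _ := by
        rw [← hsum]
        exact Finset.sum_le_sum fun i _ => mul_le_mul_of_nonneg_left (hlog i) (hα i).le

/-- Tail bound at a level `μ ≥ 1`. -/
lemma dirichlet_ge_one {k : ℕ} (α g : Fin (k + 1) → ℝ) (hα : ∀ i, 0 < α i)
    (hg : ∀ i, g i ∈ Icc (0:ℝ) 1) (hg0 : g 0 = 0) {μ δ : ℝ} (hμ : 1 ≤ μ)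
    (hδ : 0 < δ) (hδ1 : δ < 1) :
    dirichlet k α {w | μ ≤ ∑ i, w i * g i} ≤ ENNReal.ofReal δ := by
  set s := Real.exp (-Real.log δ / α 0) with hs
  have hs0 : 0 < s := Real.exp_pos _
  have hapos : ∀ i, 1 ≤ 1 - s * (g i - μ) := by
    intro i
    have : 0 ≤ s * (μ - g i) := mul_nonneg hs0.le (by linarith [(hg i).2])
    linarith
  refine (dirichlet_tail_le α (fun i => 1 - s * (g i - μ)) hα
    (fun i => by linarith [hapos i]) _
    (measurableSet_le measurable_const (by fun_prop)) ?_).trans ?_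
  · intro x hx
    rw [cform_affine]
    have hx : μ ≤ _ := hx
    nlinarith
  · apply ENNReal.ofReal_le_ofReal
    rw [prod_rpow_eq_exp _ _ (fun i => by linarith [hapos i])]
    rw [← Real.le_log_iff_exp_le hδ]
    have h1 : α 0 * Real.log (1 - s * (g 0 - μ)) ≤ ∑ i, α i * Real.log (1 - s * (g i - μ)) :=
      Finset.single_le_sum (f := fun i => α i * Real.log (1 - s * (g i - μ)))
        (fun i _ => mul_nonneg (hα i).le (Real.log_nonneg (hapos i))) (Finset.mem_univ 0)
    have h2 : -Real.log δ / α 0 ≤ Real.log (1 - s * (g 0 - μ)) := by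
      rw [Real.le_log_iff_exp_le (by linarith [hapos 0]), ← hs, hg0]
      nlinarith
    rw [div_le_iff₀ (hα 0)] at h2
    linarith

/-- **Hoeffding-type inequality for the Dirichlet process posterior mean**
(conditional form, via Bayesian bootstrap weights `w ∼ Dir(γ, 1, …, 1, γ)`). -/
theorem dirichlet_process_hoeffding
    (n : ℕ) (hn : 1 ≤ n) (ε γ : ℝ) (hε : ε ∈ Set.Ioo (0 : ℝ) 1)
    (hγ : c0 / ε ^ 2 + 1 ≤ γ)
    (g : Fin (n + 2) → ℝ) (hg : ∀ i, g i ∈ Set.Icc (0 : ℝ) 1)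
    (hg0 : g 0 = 0) (hgl : g (Fin.last (n + 1)) = 1)
    (δ : ℝ) (hδ : δ ∈ Set.Ioo (0 : ℝ) 1) :
    dirichlet (n + 1) (fun i => if i = 0 then γ else if i = Fin.last (n + 1) then γ else 1)
        {w | Real.sqrt (Real.log ((1 + ε) / δ) / (2 * (n + 2 * γ - 1))) + γ / (n + 2 * γ - 1)
              ≤ (∑ i, w i * g i) - (1 / n) * ∑ i : Fin n, g i.castSucc.succ}
      ≤ ENNReal.ofReal δ := by
  obtain ⟨hε0, hε1⟩ := hε
  obtain ⟨hδ0, hδ1⟩ := hδ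
  have hγ1 : 1 ≤ γ := by
    have : 0 ≤ c0 / ε ^ 2 := by unfold c0; positivity
    linarith
  have hn1 : (1:ℝ) ≤ n := by exact_mod_cast hn
  set α : Fin (n + 1 + 1) → ℝ :=
    fun i => if i = 0 then γ else if i = Fin.last (n + 1) then γ else 1 with hαdef
  have hα : ∀ i, 0 < α i := by
    intro i
    simp only [hαdef]
    split_ifs <;> linarith
  have hα0 : α 0 = γ := by simp [hαdef]
  have hαl : α (Fin.last n).succ = γ := by simp [hαdef]
  have hαm : ∀ i : Fin n, α i.castSucc.succ = 1 := by
    intro i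
    have h2 : i.castSucc.succ ≠ Fin.last (n + 1) := by
      rw [← Fin.succ_last]
      intro h
      exact (Fin.castSucc_lt_last i).ne (Fin.succ_injective _ h)
    simp only [hαdef]
    rw [if_neg (Fin.succ_ne_zero _), if_neg h2]
  have hgl' : g (Fin.last n).succ = 1 := by rw [Fin.succ_last]; exact hgl
  set S := ∑ i : Fin n, g i.castSucc.succ with hS
  have hS0 : 0 ≤ S := Finset.sum_nonneg fun i _ => (hg _).1
  set N : ℝ := n + 2 * γ with hNdef
  have hNpos : 0 < N := by linarith
  have hN1 : 0 < N - 1 := by linarith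
  have hNsum : ∑ i, α i = N := by
    rw [Fin.sum_univ_succ, Fin.sum_univ_castSucc]
    simp only [hα0, hαl, hαm]
    simp [hNdef]
    ring
  set M := (S + γ) / N with hMdef
  have hMsum : ∑ i, α i * g i = N * M := by
    rw [Fin.sum_univ_succ, Fin.sum_univ_castSucc]
    simp only [hα0, hαl, hαm, hg0, hgl', hMdef]
    rw [mul_div_cancel₀ _ hNpos.ne']
    simp [hS]
  have hM0 : 0 < M := div_pos (by linarith) hNpos
  set L := Real.log ((1 + ε) / δ) with hL
  have hLδ : -Real.log δ ≤ L := by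
    rw [hL, Real.log_div (by linarith) hδ0.ne']
    linarith [Real.log_nonneg (by linarith : (1:ℝ) ≤ 1 + ε)]
  have hLpos : 0 < L := lt_of_lt_of_le (by linarith [Real.log_neg hδ0 hδ1]) hLδ
  set t := Real.sqrt (L / (2 * (N - 1))) with ht
  have ht0 : 0 < t := Real.sqrt_pos.2 (by positivity)
  have ht2 : t ^ 2 = L / (2 * (N - 1)) := Real.sq_sqrt (by positivity)
  set μ := t + γ / (N - 1) + (1 / n) * S with hμdef
  have hMle : M + t ≤ μ := by
    have h1 : M = γ / N + S / N := by rw [hMdef]; ring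
    have h2 : γ / N ≤ γ / (N - 1) := by
      apply div_le_div_of_nonneg_left (by linarith) hN1 (by linarith)
    have h3 : S / N ≤ (1 / n) * S := by
      rw [one_div, inv_mul_eq_div]
      apply div_le_div_of_nonneg_left hS0 (by linarith) (by linarith)
    linarith
  have hset : {w : Fin (n + 1 + 1) → ℝ | t + γ / (N - 1) ≤ (∑ i, w i * g i) - (1 / n) * S} =
      {w | μ ≤ ∑ i, w i * g i} := by
    ext w
    simp only [mem_setOf_eq, hμdef]
    constructor <;> intro h <;> linarith
  rw [hset]
  by_cases hμ1 : μ < 1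
  · refine (dirichlet_hoeffding α g hα hg hNsum hMsum hM0 (by linarith) hμ1).trans ?_
    apply ENNReal.ofReal_le_ofReal
    rw [← Real.le_log_iff_exp_le hδ0]
    have h1 : t ^ 2 ≤ (μ - M) ^ 2 := by
      apply pow_le_pow_left₀ ht0.le; linarith
    have h2 : L = 2 * (N - 1) * t ^ 2 := by rw [ht2]; field_simp
    nlinarith [sq_nonneg t]
  · exact dirichlet_ge_one α g hα hg hg0 (not_lt.1 hμ1) hδ0 hδ1

end
end
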